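/- arXiv:1409.8424 — 2 statements merged into one kernel-verified Lean document; each statement's English description precedes it below -/
import Mathlib

section
/- Let P_Bip(n,m) = (2^m · m!/n^{2m}) · Σ κ(E), the sum over all bipartite multigraphs E on Fin n with m edges; this is the probability that a random multigraph with n vertices and m edges (drawn with probability proportional to its compensation factor) is bipartite. Then for every sequence m : ℕ → ℕ for which there exist 0 < a ≤ b < 1/2 with a ≤ m(n)/n ≤ b for all large n, the ratio P_Bip(n, m(n)) / ((1 − 2m/n)/(1 + 2m/n))^{1/4} tends to 1 as n → ∞ (where m = m(n)). -/
namespace Inhomog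

noncomputable section
/-- Compensation factor of a multigraph given as a multiset of unordered pairs. -/
def kappa {n : ℕ} (E : Multiset (Sym2 (Fin n))) : ℚ :=
  (∏ v : Fin n, ((2 : ℚ) ^ (E.count s(v, v)))⁻¹) *
    ∏ e ∈ E.toFinset, ((E.count e).factorial : ℚ)⁻¹

/-- A multigraph is bipartite if it admits a proper 2-coloring. -/
def IsBipartite {n : ℕ} (E : Multiset (Sym2 (Fin n))) : Prop :=
  ∃ c : Fin n → Fin 2, ∀ u v : Fin n, s(u, v) ∈ E → c u ≠ c v

open scoped Classical in
/-- Probability that a random multigraph with `n` vertices and `m` edges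
(drawn proportionally to its compensation factor) is bipartite. -/
def PBip (n m : ℕ) : ℝ :=
  2 ^ m * ((m.factorial : ℝ) / (n : ℝ) ^ (2 * m)) *
    ∑ E : Sym (Sym2 (Fin n)) m, if IsBipartite E.1 then ((kappa E.1 : ℝ)) else 0

end

end Inhomog

namespace Inhomog

set_option linter.unusedSectionVars false

noncomputable section

/-- Walks with parity (false = even length) in a relation. -/
inductive Wk {V : Type*} (R : V → V → Prop) : Bool → V → V → Prop
  | nil (u : V) : Wk R false u u
  | cons {p : Bool} {u w v : V} : R u w → Wk R p w v → Wk R (!p) u v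

/-- Connectivity. -/
def Cn {V : Type*} (R : V → V → Prop) (u v : V) : Prop := ∃ p, Wk R p u v

/-- Bipartiteness of a relation. -/
def Bp {V : Type*} (R : V → V → Prop) : Prop := ∃ c : V → Bool, ∀ a b, R a b → c b = !(c a)

/-- Adding an edge. -/
def Ad {V : Type*} (R : V → V → Prop) (u w : V) : V → V → Prop :=
  fun a b => R a b ∨ (a = u ∧ b = w) ∨ (a = w ∧ b = u)

section det
variable {V : Type*} {R R' : V → V → Prop}

theorem Wk.mono (h : ∀ a b, R a b → R' a b) {p : Bool} {u v : V} (hw : Wk R p u v) :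
    Wk R' p u v := by
  induction hw with
  | nil u => exact Wk.nil u
  | cons e _ ih => exact Wk.cons (h _ _ e) ih

theorem Wk.trans {p q : Bool} {u v w : V} (h1 : Wk R p u v) (h2 : Wk R q v w) :
    Wk R (p ^^ q) u w := by
  induction h1 with
  | nil u => simpa using h2
  | cons e _ ih =>
    have := Wk.cons e (ih h2)
    simpa using this

theorem Wk.single {u v : V} (h : R u v) : Wk R true u v := by
  have := Wk.cons h (Wk.nil v)
  simpa using this

theorem Wk.symm (hs : ∀ a b, R a b → R b a) {p : Bool} {u v : V} (h : Wk R p u v) :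
    Wk R p v u := by
  induction h with
  | nil u => exact Wk.nil u
  | cons e _ ih =>
    have := ih.trans (Wk.single (hs _ _ e))
    simpa using this

theorem Wk.color {c : V → Bool} (hc : ∀ a b, R a b → c b = !(c a)) {p : Bool} {u v : V}
    (h : Wk R p u v) : c v = (c u ^^ p) := by
  induction h with
  | nil u => simp
  | cons e _ ih => rw [ih, hc _ _ e]; simp

theorem Bp.mono (h : ∀ a b, R a b → R' a b) (hb : Bp R') : Bp R := by
  obtain ⟨c, hc⟩ := hb
  exact ⟨c, fun a b hab => hc a b (h a b hab)⟩

theorem Bp.parity (hb : Bp R) {p q : Bool} {u v : V} (h1 : Wk R p u v) (h2 : Wk R q u v) :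
    p = q := by
  obtain ⟨c, hc⟩ := hb
  have := (h1.color hc).symm.trans (h2.color hc)
  simpa using this

theorem Cn.mono (h : ∀ a b, R a b → R' a b) {u v : V} (hw : Cn R u v) : Cn R' u v := by
  obtain ⟨p, hp⟩ := hw
  exact ⟨p, hp.mono h⟩

theorem Cn.trans {u v w : V} (h1 : Cn R u v) (h2 : Cn R v w) : Cn R u w := by
  obtain ⟨p, hp⟩ := h1
  obtain ⟨q, hq⟩ := h2
  exact ⟨_, hp.trans hq⟩

theorem Cn.symm (hs : ∀ a b, R a b → R b a) {u v : V} (h : Cn R u v) : Cn R v u := by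
  obtain ⟨p, hp⟩ := h
  exact ⟨p, hp.symm hs⟩

theorem Cn.refl (u : V) : Cn R u u := ⟨_, Wk.nil u⟩

theorem Cn.single {u v : V} (h : R u v) : Cn R u v := ⟨_, Wk.single h⟩

/-- Last exit decomposition. -/
theorem Wk.last_exit {p : Bool} {x v : V} (u : V) (huv : u ≠ v) (h : Wk R p x v) :
    (x ≠ u ∧ Wk (fun a b => R a b ∧ a ≠ u ∧ b ≠ u) p x v) ∨
    ∃ w q, w ≠ u ∧ R u w ∧ Wk (fun a b => R a b ∧ a ≠ u ∧ b ≠ u) q w v := by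
  induction h with
  | nil y => exact Or.inl ⟨huv.symm, Wk.nil y⟩
  | @cons p a b v e _ ih =>
    rcases ih huv with ⟨h1, h2⟩ | h
    · by_cases ha : a = u
      · subst ha
        exact Or.inr ⟨b, p, h1, e, h2⟩
      · exact Or.inl ⟨ha, Wk.cons ⟨e, ha, h1⟩ h2⟩
    · exact Or.inr h

theorem Wk.first_step {p : Bool} {u v : V} (huv : u ≠ v) (h : Wk R p u v) :
    ∃ w q, w ≠ u ∧ R u w ∧ Wk (fun a b => R a b ∧ a ≠ u ∧ b ≠ u) q w v := by
  rcases h.last_exit u huv with h | h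
  · exact absurd rfl h.1
  · exact h

theorem Ad.symm (hs : ∀ a b, R a b → R b a) (u w : V) : ∀ a b, Ad R u w a b → Ad R u w b a := by
  intro a b h
  rcases h with h | h | h
  · exact Or.inl (hs _ _ h)
  · exact Or.inr (Or.inr ⟨h.2, h.1⟩)
  · exact Or.inr (Or.inl ⟨h.2, h.1⟩)

theorem Cn.of_add (u w : V) {x y : V} (h : Cn (Ad R u w) x y) :
    Cn R x y ∨ (Cn R x u ∧ Cn R w y) ∨ (Cn R x w ∧ Cn R u y) := by
  obtain ⟨p, h⟩ := h
  induction h with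
  | nil u => exact Or.inl (Cn.refl u)
  | cons e _ ih =>
    rcases e with e | ⟨rfl, rfl⟩ | ⟨rfl, rfl⟩
    · have e' := Cn.single e
      rcases ih with h | h | h
      · exact Or.inl (e'.trans h)
      · exact Or.inr (Or.inl ⟨e'.trans h.1, h.2⟩)
      · exact Or.inr (Or.inr ⟨e'.trans h.1, h.2⟩)
    · rcases ih with h | h | h
      · exact Or.inr (Or.inl ⟨Cn.refl _, h⟩)
      · exact Or.inr (Or.inl ⟨Cn.refl _, h.2⟩)
      · exact Or.inl h.2
    · rcases ih with h | h | h
      · exact Or.inr (Or.inr ⟨Cn.refl _, h⟩)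
      · exact Or.inl h.2
      · exact Or.inr (Or.inr ⟨Cn.refl _, h.2⟩)

theorem bp_add_iff (hs : ∀ a b, R a b → R b a) (u w : V) :
    Bp (Ad R u w) ↔ Bp R ∧ ¬ Wk R false u w := by
  classical
  constructor
  · intro h
    refine ⟨h.mono (fun a b hab => Or.inl hab), fun hw => ?_⟩
    obtain ⟨c, hc⟩ := h
    have h1 := (hw.mono (R' := Ad R u w) (fun a b hab => Or.inl hab)).color hc
    have h2 := hc u w (Or.inr (Or.inl ⟨rfl, rfl⟩))
    rw [h1] at h2
    simp at h2
  · rintro ⟨⟨c, hc⟩, hw⟩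
    by_cases hcw : c w = !(c u)
    · refine ⟨c, ?_⟩
      rintro a b (h | ⟨rfl, rfl⟩ | ⟨rfl, rfl⟩)
      · exact hc _ _ h
      · exact hcw
      · rw [hcw]; simp
    · have hcw' : c w = c u := by
        revert hcw; cases c w <;> cases c u <;> simp
      have hn : ¬ Cn R u w := by
        rintro ⟨p, hp⟩
        have := hp.color hc
        rw [hcw'] at this
        have hpf : p = false := by revert this; cases p <;> cases c u <;> simp
        subst hpf
        exact hw hp
      refine ⟨fun x => if Cn R u x then !(c x) else c x, ?_⟩
      have huu : Cn R u u := Cn.refl u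
      rintro a b (h | ⟨rfl, rfl⟩ | ⟨rfl, rfl⟩)
      · have hiff : Cn R u a ↔ Cn R u b :=
          ⟨fun k => k.trans (Cn.single h), fun k => k.trans (Cn.single (hs _ _ h))⟩
        have := hc _ _ h
        by_cases k : Cn R u a
        · have k' := hiff.1 k
          simp only [k, k', if_true, this]
        · have k' : ¬ Cn R u b := fun hh => k (hiff.2 hh)
          simp only [k, k', if_false, this]
      · simp only [huu, hn, if_true, if_false, hcw']; simp
      · simp only [huu, hn, if_true, if_false, hcw']

end det

/-! Random sequences of edges -/

/-- The adjacency relation of a sequence of (oriented) edges. -/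
def Rl {V ι : Type*} (f : ι → V × V) : V → V → Prop :=
  fun a b => ∃ i, f i = (a, b) ∨ f i = (b, a)

theorem Rl.symm {V ι : Type*} (f : ι → V × V) : ∀ a b, Rl f a b → Rl f b a := by
  rintro a b ⟨i, h⟩
  exact ⟨i, h.symm⟩

theorem Rl_insertNth {V : Type*} {m : ℕ} (i : Fin (m+1)) (e : V × V) (g : Fin m → V × V) (u w : V)
    (he : e = (u, w) ∨ e = (w, u)) :
    Rl (i.insertNth e g : Fin (m+1) → V × V) = Ad (Rl g) u w := by
  funext a b
  apply propext
  unfold Rl Ad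
  rw [Fin.exists_iff_succAbove i]
  simp only [Fin.insertNth_apply_same, Fin.insertNth_apply_succAbove]
  constructor
  · rintro (h | h)
    · right
      rcases he with rfl | rfl <;> simp only [Prod.mk.injEq] at h <;> grind
    · exact Or.inl h
  · rintro (h | h | h)
    · exact Or.inr h
    · rcases he with rfl | rfl <;> simp only [Prod.mk.injEq] <;> grind
    · rcases he with rfl | rfl <;> simp only [Prod.mk.injEq] <;> grind

theorem Rl_removeNth {V : Type*} {m : ℕ} (i : Fin (m+1)) (f : Fin (m+1) → V × V) (u w : V)
    (he : f i = (u, w) ∨ f i = (w, u)) :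
    Rl f = Ad (Rl (i.removeNth f)) u w := by
  have := Rl_insertNth i (f i) (i.removeNth f) u w he
  rwa [Fin.insertNth_self_removeNth] at this

/-- Separated sets. -/
def Sep {V : Type*} (R : V → V → Prop) (W : Finset V) : Prop :=
  ∀ x ∈ W, ∀ y ∈ W, Cn R x y → x = y

/-- Main event. -/
def Ev {V ι : Type*} (p : Bool) (u v : V) (W : Finset V) (f : ι → V × V) : Prop :=
  Bp (Rl f) ∧ Wk (Rl f) p u v ∧ Sep (Rl f) W

section steps
variable {V : Type*} [DecidableEq V] {m : ℕ}

theorem cn_step {u v : V} (huv : u ≠ v) (f : Fin (m+1) → V × V) (h : Cn (Rl f) u v) :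
    ∃ i : Fin (m+1), ∃ w, w ≠ u ∧ (f i = (u, w) ∨ f i = (w, u)) ∧ Cn (Rl (i.removeNth f)) w v := by
  obtain ⟨p, hp⟩ := h
  obtain ⟨w, q, hwu, ⟨i, hi⟩, hw⟩ := hp.first_step huv
  refine ⟨i, w, hwu, hi, q, hw.mono ?_⟩
  rintro a b ⟨h, ha, hb⟩
  rw [Rl_removeNth i f u w hi] at h
  rcases h with h | h | h
  · exact h
  · exact absurd h.1 ha
  · exact absurd h.2 hb

theorem ev_step {p : Bool} {u v : V} (huv : u ≠ v) (f : Fin (m+1) → V × V) (h : Ev p u v ∅ f) :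
    ∃ i : Fin (m+1), ∃ w, w ≠ u ∧ (f i = (u, w) ∨ f i = (w, u)) ∧
      Ev (!p) w v ∅ (i.removeNth f) := by
  obtain ⟨hb, hp, -⟩ := h
  obtain ⟨w, q, hwu, hR, hw⟩ := hp.first_step huv
  have hq : p = !q := hb.parity hp (Wk.cons hR (hw.mono fun a b h => h.1))
  obtain ⟨i, hi⟩ := hR
  have hmono : ∀ a b, Rl f a b ∧ a ≠ u ∧ b ≠ u → Rl (i.removeNth f) a b := by
    rintro a b ⟨h, ha, hb⟩
    rw [Rl_removeNth i f u w hi] at h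
    rcases h with h | h | h
    · exact h
    · exact absurd h.1 ha
    · exact absurd h.2 hb
  refine ⟨i, w, hwu, hi, ?_, ?_, ?_⟩
  · rw [Rl_removeNth i f u w hi] at hb
    exact hb.mono fun a b h => Or.inl h
  · subst hq
    simpa using hw.mono hmono
  · intro x hx
    simp at hx

theorem ev_back {p : Bool} {u v w : V} {W : Finset V} (hw : w ∉ insert u W)
    (f : Fin (m+1) → V × V) (i : Fin (m+1)) (hi : f i = (u, w) ∨ f i = (w, u))
    (h : Ev (!p) w v (insert w (insert u W)) (i.removeNth f)) : Ev p u v (insert u W) f := by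
  obtain ⟨hb, hp, hS⟩ := h
  have hsym := Rl.symm (i.removeNth f)
  unfold Ev
  rw [Rl_removeNth i f u w hi]
  have hnc : ¬ Cn (Rl (i.removeNth f)) u w := by
    intro h
    have := hS u (by simp) w (by simp) h
    exact hw (by simp [this])
  refine ⟨?_, ?_, ?_⟩
  · rw [bp_add_iff hsym]
    exact ⟨hb, fun h => hnc ⟨_, h⟩⟩
  · have := Wk.cons (R := Ad (Rl (i.removeNth f)) u w) (u := u) (Or.inr (Or.inl ⟨rfl, rfl⟩))
      (hp.mono fun a b h => Or.inl h)
    simpa using this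
  · intro x hx y hy hxy
    rcases hxy.of_add with h | ⟨-, h⟩ | ⟨h, -⟩
    · exact hS x (Finset.mem_insert_of_mem hx) y (Finset.mem_insert_of_mem hy) h
    · have := hS w (by simp) y (Finset.mem_insert_of_mem hy) h
      exact absurd (this ▸ hy) hw
    · have := hS x (Finset.mem_insert_of_mem hx) w (by simp) h
      exact absurd (this ▸ hx) hw

/-- Edges outside of two indices. -/
theorem Rl_two {i i' : Fin (m+1)} (hne : i ≠ i') (f : Fin (m+1) → V × V) (u w' : V)
    (hi' : f i' = (u, w') ∨ f i' = (w', u)) :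
    Rl (i.removeNth f) =
      Ad (fun a b => ∃ j, j ≠ i ∧ j ≠ i' ∧ (f j = (a, b) ∨ f j = (b, a))) u w' := by
  funext a b
  apply propext
  unfold Rl Ad Fin.removeNth
  constructor
  · rintro ⟨j, hj⟩
    by_cases h : i.succAbove j = i'
    · rw [h] at hj
      right
      grind
    · exact Or.inl ⟨_, Fin.succAbove_ne i j, h, hj⟩
  · rintro (⟨j, h1, h2, h3⟩ | h)
    · obtain ⟨k, rfl⟩ := Fin.exists_succAbove_eq h1
      exact ⟨k, h3⟩
    · obtain ⟨k, rfl⟩ := Fin.exists_succAbove_eq hne.symm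
      refine ⟨k, ?_⟩
      grind

theorem unique_aux {R0 : V → V → Prop} (hs : ∀ a b, R0 a b → R0 b a) {u v w w' : V}
    (c1 : Cn (Ad R0 u w') w v) (n1 : ¬ Cn (Ad R0 u w') u w)
    (c1' : Cn (Ad R0 u w) w' v) (n1' : ¬ Cn (Ad R0 u w) u w') : False := by
  have sing : ∀ w', Cn (Ad R0 u w') u w' := fun w' => Cn.single (Or.inr (Or.inl ⟨rfl, rfl⟩))
  have key : ∀ w w', Cn (Ad R0 u w') w v → ¬ Cn (Ad R0 u w') u w → Cn R0 w v := by
    intro w w' hc hn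
    have lift : ∀ {x y}, Cn R0 x y → Cn (Ad R0 u w') x y :=
      fun h => h.mono fun a b h => Or.inl h
    rcases hc.of_add with h | ⟨h, -⟩ | ⟨h, -⟩
    · exact h
    · exact absurd (lift (h.symm hs)) hn
    · exact absurd ((sing w').trans (lift (h.symm hs))) hn
  have k1 := key w w' c1 n1
  have k2 := key w' w c1' n1'
  have k3 : Cn R0 w' w := k2.trans (k1.symm hs)
  exact n1 ((sing w').trans (k3.mono fun a b h => Or.inl h))

theorem ev_unique {p p' : Bool} {u v w w' : V} {W W' : Finset V} (hw : w ≠ u) (hw' : w' ≠ u)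
    (f : Fin (m+1) → V × V) (i i' : Fin (m+1)) (hi : f i = (u, w) ∨ f i = (w, u))
    (hi' : f i' = (u, w') ∨ f i' = (w', u))
    (h : Ev p w v (insert w (insert u W)) (i.removeNth f))
    (h' : Ev p' w' v (insert w' (insert u W')) (i'.removeNth f)) : i = i' ∧ w = w' := by
  by_cases hne : i = i'
  · subst hne
    refine ⟨rfl, ?_⟩
    grind
  exfalso
  obtain ⟨-, h1, h2⟩ := h
  obtain ⟨-, h1', h2'⟩ := h'
  have n1 : ¬ Cn (Rl (i.removeNth f)) u w := fun h => hw (h2 u (by simp) w (by simp) h).symm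
  have n1' : ¬ Cn (Rl (i'.removeNth f)) u w' := fun h => hw' (h2' u (by simp) w' (by simp) h).symm
  have c1 : Cn (Rl (i.removeNth f)) w v := ⟨_, h1⟩
  have c1' : Cn (Rl (i'.removeNth f)) w' v := ⟨_, h1'⟩
  have e2 := Rl_two (Ne.symm hne) f u w hi
  rw [Rl_two hne f u w' hi'] at n1 c1
  have hR : (fun a b => ∃ j, j ≠ i' ∧ j ≠ i ∧ (f j = (a, b) ∨ f j = (b, a))) =
      (fun a b => ∃ j, j ≠ i ∧ j ≠ i' ∧ (f j = (a, b) ∨ f j = (b, a))) := by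
    funext a b
    apply propext
    constructor <;> rintro ⟨j, h1, h2, h3⟩ <;> exact ⟨j, h2, h1, h3⟩
  rw [hR] at e2
  rw [e2] at n1' c1'
  refine unique_aux ?_ c1 n1 c1' n1'
  rintro a b ⟨j, h1, h2, h3⟩
  exact ⟨j, h1, h2, h3.symm⟩

end steps
end

end Inhomog

namespace Inhomog

noncomputable section

open scoped Classical in
/-- Counting function. -/
def ct (n m : ℕ) (Q : (Fin m → Fin n × Fin n) → Prop) : ℝ := ∑ f, if Q f then (1:ℝ) else 0

/-- Probability. -/
def pr (n m : ℕ) (Q : (Fin m → Fin n × Fin n) → Prop) : ℝ := ct n m Q / ((n:ℝ)^2)^m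

theorem ct_mono {n m : ℕ} {Q Q' : (Fin m → Fin n × Fin n) → Prop} (h : ∀ f, Q f → Q' f) :
    ct n m Q ≤ ct n m Q' := by
  classical
  unfold ct
  apply Finset.sum_le_sum
  intro f _
  by_cases hq : Q f
  · simp [hq, h f hq]
  · simp only [hq, if_false]
    split_ifs <;> norm_num

theorem pr_mono {n m : ℕ} {Q Q' : (Fin m → Fin n × Fin n) → Prop} (h : ∀ f, Q f → Q' f) :
    pr n m Q ≤ pr n m Q' := by
  unfold pr
  have := ct_mono h
  gcongr

theorem ct_nonneg {n m : ℕ} (Q : (Fin m → Fin n × Fin n) → Prop) : 0 ≤ ct n m Q := by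
  classical
  unfold ct
  apply Finset.sum_nonneg
  intro f _
  split_ifs <;> norm_num

theorem pr_nonneg {n m : ℕ} (Q : (Fin m → Fin n × Fin n) → Prop) : 0 ≤ pr n m Q := by
  unfold pr
  have := ct_nonneg Q
  positivity

theorem pr_le_one {n m : ℕ} (hn : 0 < n) (Q : (Fin m → Fin n × Fin n) → Prop) :
    pr n m Q ≤ 1 := by
  classical
  have hn' : (0:ℝ) < n := by exact_mod_cast hn
  unfold pr
  rw [div_le_one (by positivity)]
  calc ct n m Q ≤ ct n m (fun _ => True) := ct_mono (fun _ _ => trivial)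
    _ = ((n:ℝ)^2)^m := by
      simp [ct, sq]

open scoped Classical in
theorem sum_insert {n m : ℕ} (i : Fin (m+1)) (F : (Fin (m+1) → Fin n × Fin n) → ℝ) :
    ∑ f, F f = ∑ e : Fin n × Fin n, ∑ g : Fin m → Fin n × Fin n, F (i.insertNth e g) := by
  rw [← (Fin.insertNthEquiv (fun _ => Fin n × Fin n) i).sum_comp, Fintype.sum_prod_type]
  rfl

open scoped Classical in
theorem count_key {n m : ℕ} (u : Fin n) (S : Finset (Fin n)) (hu : u ∉ S)
    (Q : Fin n → (Fin m → Fin n × Fin n) → Prop) :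
    ∑ f : Fin (m+1) → Fin n × Fin n, ∑ i : Fin (m+1), ∑ w ∈ S,
      (if (f i = (u, w) ∨ f i = (w, u)) ∧ Q w (i.removeNth f) then (1:ℝ) else 0) =
    (m+1) * 2 * ∑ w ∈ S, ct n m (Q w) := by
  rw [Finset.sum_comm]
  have : ∀ i : Fin (m+1), ∑ f : Fin (m+1) → Fin n × Fin n, ∑ w ∈ S,
      (if (f i = (u, w) ∨ f i = (w, u)) ∧ Q w (i.removeNth f) then (1:ℝ) else 0) =
      2 * ∑ w ∈ S, ct n m (Q w) := by
    intro i
    rw [Finset.sum_comm, Finset.mul_sum]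
    apply Finset.sum_congr rfl
    intro w hw
    have huw : u ≠ w := fun h => hu (h ▸ hw)
    rw [sum_insert i]
    simp only [Fin.insertNth_apply_same, Fin.removeNth_insertNth]
    have h1 : ∀ e : Fin n × Fin n, ∑ g : Fin m → Fin n × Fin n,
        (if (e = (u, w) ∨ e = (w, u)) ∧ Q w g then (1:ℝ) else 0) =
        (if e = (u, w) then ct n m (Q w) else 0) + (if e = (w, u) then ct n m (Q w) else 0) := by
      intro e
      unfold ct
      by_cases h1 : e = (u, w)
      · subst h1
        simp [huw]
      · by_cases h2 : e = (w, u)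
        · subst h2
          simp [huw.symm]
        · simp [h1, h2]
    rw [Finset.sum_congr rfl (fun e _ => h1 e), Finset.sum_add_distrib]
    simp
    ring
  rw [Finset.sum_congr rfl (fun i _ => this i)]
  simp
  ring

theorem ct_upper {n m : ℕ} (u : Fin n) (P : (Fin (m+1) → Fin n × Fin n) → Prop)
    (Q : Fin n → (Fin m → Fin n × Fin n) → Prop)
    (h : ∀ f, P f → ∃ i : Fin (m+1), ∃ w, w ≠ u ∧ (f i = (u, w) ∨ f i = (w, u)) ∧
      Q w (i.removeNth f)) :
    ct n (m+1) P ≤ (m+1) * 2 * ∑ w ∈ Finset.univ.erase u, ct n m (Q w) := by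
  classical
  rw [← count_key u _ (by simp)]
  unfold ct
  apply Finset.sum_le_sum
  intro f _
  have hnn : ∀ (i : Fin (m+1)) (w : Fin n), (0:ℝ) ≤
      (if (f i = (u, w) ∨ f i = (w, u)) ∧ Q w (i.removeNth f) then (1:ℝ) else 0) := by
    intro i w
    split_ifs <;> norm_num
  by_cases hP : P f
  · obtain ⟨i, w, hw, h1, h2⟩ := h f hP
    simp only [hP, if_true]
    calc (1:ℝ) = (if (f i = (u, w) ∨ f i = (w, u)) ∧ Q w (i.removeNth f) then (1:ℝ) else 0) := by
          simp [h1, h2]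
      _ ≤ ∑ w ∈ Finset.univ.erase u,
          (if (f i = (u, w) ∨ f i = (w, u)) ∧ Q w (i.removeNth f) then (1:ℝ) else 0) :=
          Finset.single_le_sum (f := fun w =>
            (if (f i = (u, w) ∨ f i = (w, u)) ∧ Q w (i.removeNth f) then (1:ℝ) else 0))
            (fun w _ => hnn i w) (by simp [hw])
      _ ≤ _ := Finset.single_le_sum (f := fun i => ∑ w ∈ Finset.univ.erase u,
          (if (f i = (u, w) ∨ f i = (w, u)) ∧ Q w (i.removeNth f) then (1:ℝ) else 0))
            (fun i _ => Finset.sum_nonneg fun w _ => hnn i w) (Finset.mem_univ i)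
  · simp only [hP, if_false]
    exact Finset.sum_nonneg fun i _ => Finset.sum_nonneg fun w _ => hnn i w

theorem ct_lower {n m : ℕ} (u : Fin n) (S : Finset (Fin n)) (hu : u ∉ S)
    (P : (Fin (m+1) → Fin n × Fin n) → Prop)
    (Q : Fin n → (Fin m → Fin n × Fin n) → Prop)
    (h : ∀ f, ∀ i : Fin (m+1), ∀ w ∈ S, (f i = (u, w) ∨ f i = (w, u)) →
      Q w (i.removeNth f) → P f)
    (huniq : ∀ f, ∀ i i' : Fin (m+1), ∀ w ∈ S, ∀ w' ∈ S, (f i = (u, w) ∨ f i = (w, u)) →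
      (f i' = (u, w') ∨ f i' = (w', u)) →
      Q w (i.removeNth f) → Q w' (i'.removeNth f) → i = i' ∧ w = w') :
    (m+1) * 2 * ∑ w ∈ S, ct n m (Q w) ≤ ct n (m+1) P := by
  classical
  rw [← count_key u S hu]
  unfold ct
  apply Finset.sum_le_sum
  intro f _
  rw [← Finset.sum_product' (s := Finset.univ) (t := S)
    (f := fun i w => if (f i = (u, w) ∨ f i = (w, u)) ∧ Q w (i.removeNth f) then (1:ℝ) else 0)]
  rw [Finset.sum_boole]
  by_cases hP : P f
  · simp only [hP, if_true]
    have : (Finset.filter (fun x : Fin (m+1) × Fin n => (f x.1 = (u, x.2) ∨ f x.1 = (x.2, u)) ∧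
        Q x.2 (x.1.removeNth f)) (Finset.univ ×ˢ S)).card ≤ 1 := by
      rw [Finset.card_le_one]
      rintro ⟨i, w⟩ h1 ⟨i', w'⟩ h2
      simp only [Finset.mem_filter, Finset.mem_product, Finset.mem_univ, true_and] at h1 h2
      have := huniq f i i' w h1.1 w' h2.1 h1.2.1 h2.2.1 h1.2.2 h2.2.2
      rw [this.1, this.2]
    exact_mod_cast this
  · simp only [hP, if_false]
    rw [Finset.filter_false_of_mem]
    · simp
    · rintro ⟨i, w⟩ h1 h2
      simp only [Finset.mem_product, Finset.mem_univ, true_and] at h1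
      exact hP (h f i w h1 h2.1 h2.2)

theorem pr_upper {n m : ℕ} (hn : 0 < n) (u : Fin n) (P : (Fin (m+1) → Fin n × Fin n) → Prop)
    (Q : Fin n → (Fin m → Fin n × Fin n) → Prop)
    (h : ∀ f, P f → ∃ i : Fin (m+1), ∃ w, w ≠ u ∧ (f i = (u, w) ∨ f i = (w, u)) ∧
      Q w (i.removeNth f)) :
    pr n (m+1) P ≤ (2 * (m+1) / n) / n * ∑ w ∈ Finset.univ.erase u, pr n m (Q w) := by
  have hn' : (0:ℝ) < n := by exact_mod_cast hn
  have := ct_upper u P Q h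
  unfold pr
  rw [← Finset.sum_div, div_le_iff₀ (by positivity)]
  refine this.trans (le_of_eq ?_)
  field_simp
  ring

theorem pr_lower {n m : ℕ} (hn : 0 < n) (u : Fin n) (S : Finset (Fin n)) (hu : u ∉ S)
    (P : (Fin (m+1) → Fin n × Fin n) → Prop)
    (Q : Fin n → (Fin m → Fin n × Fin n) → Prop)
    (h : ∀ f, ∀ i : Fin (m+1), ∀ w ∈ S, (f i = (u, w) ∨ f i = (w, u)) →
      Q w (i.removeNth f) → P f)
    (huniq : ∀ f, ∀ i i' : Fin (m+1), ∀ w ∈ S, ∀ w' ∈ S, (f i = (u, w) ∨ f i = (w, u)) →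
      (f i' = (u, w') ∨ f i' = (w', u)) →
      Q w (i.removeNth f) → Q w' (i'.removeNth f) → i = i' ∧ w = w') :
    (2 * (m+1) / n) / n * ∑ w ∈ S, pr n m (Q w) ≤ pr n (m+1) P := by
  have hn' : (0:ℝ) < n := by exact_mod_cast hn
  have := ct_lower u S hu P Q h huniq
  unfold pr
  rw [← Finset.sum_div, le_div_iff₀ (by positivity)]
  refine le_trans (le_of_eq ?_) this
  field_simp
  ring

/-- Probability to be bipartite. -/
def pb (n m : ℕ) : ℝ := pr n m (fun f => Bp (Rl f))
/-- Two-point function. -/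
def cn (n m : ℕ) (u v : Fin n) : ℝ := pr n m (fun f => Cn (Rl f) u v)
/-- Parity two-point function with separation. -/
def av (n m : ℕ) (p : Bool) (u v : Fin n) (W : Finset (Fin n)) : ℝ := pr n m (Ev p u v W)

theorem cn_rec {n m : ℕ} (hn : 0 < n) {u v : Fin n} (huv : u ≠ v) :
    cn n (m+1) u v ≤ (2 * (m+1) / n) / n * ∑ w ∈ Finset.univ.erase u, cn n m w v :=
  pr_upper hn u _ (fun w g => Cn (Rl g) w v) (fun f hf => cn_step huv f hf)

theorem av_upper {n m : ℕ} (hn : 0 < n) (p : Bool) {u v : Fin n} (huv : u ≠ v) :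
    av n (m+1) p u v ∅ ≤ (2 * (m+1) / n) / n * ∑ w ∈ Finset.univ.erase u, av n m (!p) w v ∅ :=
  pr_upper hn u _ (fun w g => Ev (!p) w v ∅ g) (fun f hf => ev_step huv f hf)

theorem av_lower {n m : ℕ} (hn : 0 < n) (p : Bool) (u v : Fin n) (W : Finset (Fin n)) :
    (2 * (m+1) / n) / n * ∑ w ∈ (insert u W)ᶜ, av n m (!p) w v (insert w (insert u W)) ≤
      av n (m+1) p u v (insert u W) := by
  apply pr_lower hn u _ (by simp) _ (fun w g => Ev (!p) w v (insert w (insert u W)) g)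
  · intro f i w hw hi hQ
    exact ev_back (by simpa using hw) f i hi hQ
  · intro f i i' w hw w' hw' hi hi' hQ hQ'
    refine ev_unique ?_ ?_ f i i' hi hi' hQ hQ'
    · rintro rfl; simp at hw
    · rintro rfl; simp at hw'

theorem pb_rec {n m : ℕ} (hn : 0 < n) :
    pb n (m+1) = pb n m - (∑ u : Fin n, ∑ v : Fin n, av n m false u v ∅) / (n:ℝ)^2 := by
  classical
  have hn' : (0:ℝ) < n := by exact_mod_cast hn
  have key : ct n (m+1) (fun f => Bp (Rl f)) = (n:ℝ)^2 * ct n m (fun f => Bp (Rl f)) -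
      ∑ u : Fin n, ∑ v : Fin n, ct n m (Ev false u v ∅) := by
    unfold ct
    rw [sum_insert 0, Fintype.sum_prod_type]
    have : ∀ u v : Fin n, (∑ g : Fin m → Fin n × Fin n,
        if Bp (Rl ((0 : Fin (m+1)).insertNth (u, v) g : Fin (m+1) → Fin n × Fin n))
          then (1:ℝ) else 0) =
        (∑ g : Fin m → Fin n × Fin n, if Bp (Rl g) then (1:ℝ) else 0) -
        ∑ g : Fin m → Fin n × Fin n, if Ev false u v ∅ g then (1:ℝ) else 0 := by
      intro u v
      rw [← Finset.sum_sub_distrib]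
      apply Finset.sum_congr rfl
      intro g _
      rw [Rl_insertNth 0 (u, v) g u v (Or.inl rfl), bp_add_iff (Rl.symm g)]
      unfold Ev
      have : Sep (Rl g) ∅ := by intro x hx; simp at hx
      by_cases h1 : Bp (Rl g) <;> by_cases h2 : Wk (Rl g) false u v <;> simp [h1, h2, this]
    rw [Finset.sum_congr rfl fun u _ => Finset.sum_congr rfl fun v _ => this u v]
    simp only [Finset.sum_sub_distrib]
    simp
    ring
  unfold pb av pr
  rw [key]
  simp only [← Finset.sum_div]
  field_simp
  ring

theorem pb_zero {n : ℕ} : pb n 0 = 1 := by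
  classical
  have : ∀ f : Fin 0 → Fin n × Fin n, Bp (Rl f) := by
    intro f
    refine ⟨fun _ => true, ?_⟩
    rintro a b ⟨i, -⟩
    exact i.elim0
  simp [pb, pr, ct, this]

theorem cn_zero {n : ℕ} {u v : Fin n} (huv : u ≠ v) : cn n 0 u v = 0 := by
  classical
  have : ∀ f : Fin 0 → Fin n × Fin n, ¬ Cn (Rl f) u v := by
    rintro f ⟨p, hp⟩
    obtain ⟨w, q, -, ⟨i, -⟩, -⟩ := hp.first_step huv
    exact i.elim0
  simp [cn, pr, ct, this]

theorem av_le_cn {n m : ℕ} (p : Bool) (u v : Fin n) (W : Finset (Fin n)) :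
    av n m p u v W ≤ cn n m u v :=
  pr_mono fun _ h => ⟨p, h.2.1⟩

theorem av_self_le {n m : ℕ} (v : Fin n) : av n m false v v ∅ = pb n m := by
  apply le_antisymm
  · exact pr_mono fun _ h => h.1
  · exact pr_mono fun f h => ⟨h, Wk.nil v, by intro x hx; simp at hx⟩

theorem av_self_true {n m : ℕ} (v : Fin n) (W : Finset (Fin n)) : av n m true v v W = 0 := by
  classical
  have : ∀ f : Fin m → Fin n × Fin n, ¬ Ev true v v W f := by
    rintro f ⟨hb, hp, -⟩
    have := hb.parity hp (Wk.nil v)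
    simp at this
  simp [av, pr, ct, this]

theorem av_mono {n m : ℕ} (p : Bool) (u v : Fin n) (W : Finset (Fin n)) :
    av n m p u v W ≤ av n m p u v ∅ :=
  pr_mono fun f h => ⟨h.1, h.2.1, by intro x hx; simp at hx⟩

theorem pr_union {n m : ℕ} {ι : Type*} (S : Finset ι) (A B : (Fin m → Fin n × Fin n) → Prop)
    (Q : ι → (Fin m → Fin n × Fin n) → Prop) (h : ∀ f, A f → B f ∨ ∃ i ∈ S, Q i f) :
    pr n m A ≤ pr n m B + ∑ i ∈ S, pr n m (Q i) := by
  classical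
  unfold pr
  rw [← Finset.sum_div, ← add_div]
  have : ct n m A ≤ ct n m B + ∑ i ∈ S, ct n m (Q i) := by
    unfold ct
    rw [Finset.sum_comm, ← Finset.sum_add_distrib]
    apply Finset.sum_le_sum
    intro f _
    have hnn : ∀ i ∈ S, (0:ℝ) ≤ if Q i f then (1:ℝ) else 0 := by
      intro i _
      split_ifs <;> norm_num
    by_cases hA : A f
    · rcases h f hA with h | ⟨i, hi, h⟩
      · simp only [hA, h, if_true]
        linarith [Finset.sum_nonneg hnn]
      · have := Finset.single_le_sum hnn hi
        simp only [h, if_true] at this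
        simp only [hA, if_true]
        have : (0:ℝ) ≤ if B f then (1:ℝ) else 0 := by split_ifs <;> norm_num
        linarith
    · simp only [hA, if_false]
      have : (0:ℝ) ≤ if B f then (1:ℝ) else 0 := by split_ifs <;> norm_num
      linarith [Finset.sum_nonneg hnn]
  gcongr

theorem sep_lower {n m : ℕ} (v : Fin n) (W : Finset (Fin n)) (c : ℝ) (hc : 0 ≤ c)
    (h : ∀ x y : Fin n, x ≠ y → cn n m x y ≤ c) :
    pb n m - (W.card:ℝ)^2 * c ≤ av n m false v v W := by
  classical
  have h1 := pr_union (n := n) (m := m) (W ×ˢ W) (fun f => Bp (Rl f)) (Ev false v v W)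
    (fun x f => x.1 ≠ x.2 ∧ Cn (Rl f) x.1 x.2) (by
      intro f hf
      by_cases hS : Sep (Rl f) W
      · exact Or.inl ⟨hf, Wk.nil v, hS⟩
      · right
        unfold Sep at hS
        push Not at hS
        obtain ⟨x, hx, y, hy, h1, h2⟩ := hS
        exact ⟨(x, y), by simp [hx, hy], h2, h1⟩)
  have h2 : ∑ i ∈ W ×ˢ W, pr n m (fun f => i.1 ≠ i.2 ∧ Cn (Rl f) i.1 i.2) ≤
      (W.card:ℝ)^2 * c := by
    calc _ ≤ ∑ i ∈ W ×ˢ W, c := by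
          apply Finset.sum_le_sum
          rintro ⟨x, y⟩ -
          by_cases hxy : x = y
          · subst hxy
            simpa [pr, ct] using hc
          · exact (pr_mono fun f h => h.2).trans (h x y hxy)
      _ = _ := by simp [sq]
  unfold pb av
  linarith

end
end Inhomog

namespace Inhomog

noncomputable section

/-- The multiset of edges of a sequence. -/
def ms {n m : ℕ} (f : Fin m → Fin n × Fin n) : Multiset (Sym2 (Fin n)) :=
  Finset.univ.val.map (fun i => s((f i).1, (f i).2))

theorem ms_card {n m : ℕ} (f : Fin m → Fin n × Fin n) : (ms f).card = m := by
  simp [ms]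

theorem ms_insert {n m : ℕ} (e : Fin n × Fin n) (g : Fin m → Fin n × Fin n) :
    ms ((0 : Fin (m+1)).insertNth e g : Fin (m+1) → Fin n × Fin n) = s(e.1, e.2) ::ₘ ms g := by
  unfold ms
  rw [Fin.univ_succ]
  simp [Function.comp_def, Fin.insertNth_zero']

theorem kappa_univ {n : ℕ} (E : Multiset (Sym2 (Fin n))) :
    kappa E = (∏ v : Fin n, ((2 : ℚ) ^ (E.count s(v, v)))⁻¹) *
      ∏ e : Sym2 (Fin n), ((E.count e).factorial : ℚ)⁻¹ := by
  unfold kappa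
  congr 1
  apply Finset.prod_subset (Finset.subset_univ _)
  intro e _ he
  have : E.count e = 0 := by
    rw [Multiset.count_eq_zero]
    simpa using he
  simp [this]

theorem kappa_cons {n : ℕ} (c d : Fin n) (E : Multiset (Sym2 (Fin n))) :
    kappa (s(c, d) ::ₘ E) * ((s(c, d) ::ₘ E).count s(c, d) * (if c = d then 2 else 1)) =
      kappa E := by
  rw [kappa_univ, kappa_univ]
  have h1 : ∏ v : Fin n, ((2 : ℚ) ^ ((s(c, d) ::ₘ E).count s(v, v)))⁻¹ =
      (∏ v : Fin n, ((2 : ℚ) ^ (E.count s(v, v)))⁻¹) * (if c = d then 2⁻¹ else 1) := by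
    have : (if c = d then (2:ℚ)⁻¹ else 1) =
        ∏ v : Fin n, if v = c then (if c = d then (2:ℚ)⁻¹ else 1) else 1 := by
      rw [Finset.prod_ite_eq']; simp
    rw [this, ← Finset.prod_mul_distrib]
    apply Finset.prod_congr rfl
    intro v _
    rw [Multiset.count_cons]
    by_cases hv : v = c
    · subst hv
      by_cases hd : v = d
      · subst hd
        simp [pow_succ]
        ring
      · simp [hd]
    · simp [hv]
  have h2 : ∏ e : Sym2 (Fin n), (((s(c, d) ::ₘ E).count e).factorial : ℚ)⁻¹ =
      (∏ e : Sym2 (Fin n), ((E.count e).factorial : ℚ)⁻¹) * ((E.count s(c, d) : ℚ) + 1)⁻¹ := by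
    have : ((E.count s(c, d) : ℚ) + 1)⁻¹ =
        ∏ e : Sym2 (Fin n), if e = s(c, d) then ((E.count s(c, d) : ℚ) + 1)⁻¹ else 1 := by
      rw [Finset.prod_ite_eq']; simp
    rw [this, ← Finset.prod_mul_distrib]
    apply Finset.prod_congr rfl
    intro e _
    rw [Multiset.count_cons]
    by_cases he : e = s(c, d)
    · subst he
      simp [Nat.factorial_succ]
    · simp [he]
  rw [h1, h2]
  have h3 : ((s(c, d) ::ₘ E).count s(c, d) : ℚ) = (E.count s(c, d) : ℚ) + 1 := by simp
  rw [h3]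
  have h4 : (E.count s(c, d) : ℚ) + 1 ≠ 0 := by positivity
  split_ifs <;> field_simp

theorem sum_count {n : ℕ} (E : Multiset (Sym2 (Fin n))) :
    ∑ e : Fin n × Fin n, (E.count s(e.1, e.2) : ℚ) * (if e.1 = e.2 then 2 else 1) =
      2 * E.card := by
  induction E using Multiset.induction_on with
  | empty => simp
  | cons a E ih =>
    have h1 : ∀ e : Fin n × Fin n,
        ((a ::ₘ E).count s(e.1, e.2) : ℚ) * (if e.1 = e.2 then 2 else 1) =
        (E.count s(e.1, e.2) : ℚ) * (if e.1 = e.2 then 2 else 1) +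
        (if s(e.1, e.2) = a then (if e.1 = e.2 then 2 else 1) else 0) := by
      intro e
      rw [Multiset.count_cons]
      split_ifs <;> push_cast <;> ring
    rw [Finset.sum_congr rfl fun e _ => h1 e, Finset.sum_add_distrib, ih]
    have h2 : ∑ e : Fin n × Fin n,
        (if s(e.1, e.2) = a then (if e.1 = e.2 then (2:ℚ) else 1) else 0) = 2 := by
      induction a using Sym2.ind with
      | _ c d =>
        have : ∀ e : Fin n × Fin n,
          (if s(e.1, e.2) = s(c, d) then (if e.1 = e.2 then (2:ℚ) else 1) else 0) =
          (if e = (c, d) then 1 else 0) + (if e = (d, c) then 1 else 0) := by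
          rintro ⟨x, y⟩
          simp only [Sym2.eq_iff, Prod.mk.injEq]
          by_cases h1 : x = c <;> by_cases h2 : y = d <;> by_cases h3 : x = d <;>
            by_cases h4 : y = c <;> simp only [h1, h2, h3, h4] <;> grind
        rw [Finset.sum_congr rfl fun e _ => this e, Finset.sum_add_distrib]
        simp
        norm_num
    rw [h2]
    simp
    ring

theorem ct_eq {n m : ℕ} (Q : (Fin m → Fin n × Fin n) → Prop) [DecidablePred Q] :
    ct n m Q = ∑ f, if Q f then (1:ℝ) else 0 := by
  unfold ct
  congr!

theorem ct_ms {n : ℕ} : ∀ (m : ℕ) (E : Multiset (Sym2 (Fin n))), E.card = m →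
    ct n m (fun f => ms f = E) = 2 ^ m * (m.factorial : ℝ) * (kappa E : ℝ) := by
  classical
  intro m
  induction m with
  | zero =>
    intro E hE
    rw [Multiset.card_eq_zero] at hE
    subst hE
    simp [ct, ms, kappa]
  | succ m ih =>
    intro E hE
    rw [ct_eq]
    rw [sum_insert 0]
    have h1 : ∀ e : Fin n × Fin n, (∑ g : Fin m → Fin n × Fin n,
        if ms ((0 : Fin (m+1)).insertNth e g : Fin (m+1) → Fin n × Fin n) = E
          then (1:ℝ) else 0) =
        2 ^ m * (m.factorial : ℝ) * (kappa E : ℝ) *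
          (((E.count s(e.1, e.2) : ℚ) * (if e.1 = e.2 then 2 else 1) : ℚ) : ℝ) := by
      intro e
      simp only [ms_insert]
      by_cases he : s(e.1, e.2) ∈ E
      · obtain ⟨E', rfl⟩ := Multiset.exists_cons_of_mem he
        simp only [Multiset.cons_inj_right]
        have := ih E' (by simpa using hE)
        rw [ct_eq] at this
        rw [this, ← kappa_cons e.1 e.2 E']
        push_cast
        ring
      · have h0 : E.count s(e.1, e.2) = 0 := Multiset.count_eq_zero.2 he
        have h2 : ∀ g : Fin m → Fin n × Fin n, ¬ (s(e.1, e.2) ::ₘ ms g = E) := by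
          rintro g rfl
          simp at he
        simp [h0, h2]
    rw [Finset.sum_congr rfl fun e _ => h1 e, ← Finset.mul_sum, ← Rat.cast_sum, sum_count, hE,
      Nat.factorial_succ]
    push_cast
    ring

theorem isBip_iff {n m : ℕ} (f : Fin m → Fin n × Fin n) : IsBipartite (ms f) ↔ Bp (Rl f) := by
  have hmem : ∀ u v, s(u, v) ∈ ms f ↔ Rl f u v := by
    intro u v
    unfold ms Rl
    simp only [Multiset.mem_map, Finset.mem_val, Finset.mem_univ, true_and, Sym2.eq_iff,
      Prod.ext_iff]
  constructor
  · rintro ⟨c, hc⟩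
    refine ⟨fun x => decide (c x = 0), fun a b h => ?_⟩
    have := hc a b ((hmem a b).2 h)
    have h1 : c b = 0 ↔ ¬ c a = 0 := by omega
    by_cases h2 : c a = 0 <;> simp [h1, h2]
  · rintro ⟨c, hc⟩
    refine ⟨fun x => if c x then 1 else 0, fun a b h => ?_⟩
    have := hc a b ((hmem a b).1 h)
    cases h2 : c a <;> simp [this, h2]

theorem PBip_eq (n m : ℕ) : PBip n m = pb n m := by
  classical
  unfold PBip pb pr
  have h1 : ct n m (fun f => Bp (Rl f)) =
      ∑ E : Sym (Sym2 (Fin n)) m, if IsBipartite E.1 then ct n m (fun f => ms f = E.1) else 0 := by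
    unfold ct
    simp only [← Finset.sum_filter (p := fun E : Sym (Sym2 (Fin n)) m => IsBipartite E.1)]
    rw [Finset.sum_comm]
    apply Finset.sum_congr rfl
    intro f _
    by_cases hb : Bp (Rl f)
    · rw [if_pos hb]
      refine Eq.symm ((Finset.sum_eq_single_of_mem
        (Sym.mk (ms f) (ms_card f)) ?_ ?_).trans (if_pos rfl))
      · exact Finset.mem_filter.2 ⟨Finset.mem_univ _, (isBip_iff f).2 hb⟩
      · intro E _ hE
        rw [if_neg]
        intro h
        exact hE (Subtype.ext h.symm)
    · rw [if_neg hb]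
      symm
      apply Finset.sum_eq_zero
      intro E hE
      have hE := Finset.mem_filter.1 hE
      rw [if_neg]
      intro h
      exact hb ((isBip_iff f).1 (h ▸ hE.2))
  rw [h1]
  have h2 : ∀ E : Sym (Sym2 (Fin n)) m, (if IsBipartite E.1 then ct n m (fun f => ms f = E.1) else 0) =
      2 ^ m * (m.factorial : ℝ) * (if IsBipartite E.1 then ((kappa E.1 : ℝ)) else 0) := by
    intro E
    rw [ct_ms m E.1 E.2]
    split_ifs <;> simp
  rw [Finset.sum_congr rfl fun E _ => h2 E, ← Finset.mul_sum, pow_mul]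
  ring

end
end Inhomog

namespace Inhomog

noncomputable section

theorem sum_erase_le {n : ℕ} (u v : Fin n) (F : Fin n → ℝ) (c : ℝ) (hc : 0 ≤ c)
    (hv : 0 ≤ F v) (h : ∀ w, w ≠ v → F w ≤ c) :
    ∑ w ∈ Finset.univ.erase u, F w ≤ F v + n * c := by
  calc ∑ w ∈ Finset.univ.erase u, F w ≤ ∑ w ∈ Finset.univ.erase u,
        ((if w = v then F v else 0) + c) := by
        apply Finset.sum_le_sum
        intro w _
        by_cases hw : w = v
        · subst hw; simp [hc]
        · simpa [hw] using h w hw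
    _ ≤ ∑ w : Fin n, ((if w = v then F v else 0) + c) := by
        apply Finset.sum_le_sum_of_subset_of_nonneg (Finset.subset_univ _)
        intro w _ _
        split_ifs <;> linarith
    _ = F v + n * c := by
        rw [Finset.sum_add_distrib]; simp

theorem cn_bound {n : ℕ} (hn : 0 < n) {β C : ℝ} (hβ : 0 ≤ β) (hC : 0 ≤ C)
    (hC2 : β * (1 + C) ≤ C) :
    ∀ m : ℕ, 2 * (m:ℝ) / n ≤ β → ∀ u v : Fin n, u ≠ v → cn n m u v ≤ C / n := by
  have hn' : (0:ℝ) < n := by exact_mod_cast hn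
  intro m
  induction m with
  | zero =>
    intro _ u v huv
    rw [cn_zero huv]
    positivity
  | succ m ih =>
    intro hm u v huv
    push_cast at hm
    have hm0 : 2 * (m:ℝ) / n ≤ β := le_trans (by gcongr; linarith) hm
    have h1 := sum_erase_le u v (fun w => cn n m w v) (C / n) (by positivity) (pr_nonneg _)
      (fun w hw => ih hm0 w v hw)
    have h2 : cn n m v v ≤ 1 := pr_le_one hn _
    have h3 : (n:ℝ) * (C / n) = C := by field_simp
    have h4 : ∑ w ∈ Finset.univ.erase u, cn n m w v ≤ 1 + C := by linarith
    calc cn n (m+1) u v ≤ (2 * (m+1) / n) / n * ∑ w ∈ Finset.univ.erase u, cn n m w v :=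
          cn_rec hn huv
      _ ≤ (2 * (m+1) / n) / n * (1 + C) := by gcongr
      _ ≤ β / n * (1 + C) := by gcongr
      _ = (β * (1 + C)) / n := by ring
      _ ≤ C / n := by gcongr

theorem pb_nonneg (n m : ℕ) : 0 ≤ pb n m := pr_nonneg _
theorem pb_le_one {n : ℕ} (hn : 0 < n) (m : ℕ) : pb n m ≤ 1 := pr_le_one hn _

theorem pb_anti {n : ℕ} (hn : 0 < n) (m : ℕ) : pb n (m+1) ≤ pb n m := by
  rw [pb_rec hn]
  have : 0 ≤ (∑ u : Fin n, ∑ v : Fin n, av n m false u v ∅) / (n:ℝ)^2 := by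
    have : 0 ≤ ∑ u : Fin n, ∑ v : Fin n, av n m false u v ∅ :=
      Finset.sum_nonneg fun u _ => Finset.sum_nonneg fun v _ => pr_nonneg _
    positivity
  linarith

theorem pb_step {n : ℕ} (hn : 0 < n) {β C : ℝ} (hβ : 0 ≤ β) (hC : 0 ≤ C)
    (hC2 : β * (1 + C) ≤ C) (m : ℕ) (hm : 2 * (m:ℝ) / n ≤ β) :
    pb n m ≤ pb n (m+1) + (1 + C) / n := by
  have hn' : (0:ℝ) < n := by exact_mod_cast hn
  rw [pb_rec hn]
  have h1 : ∑ u : Fin n, ∑ v : Fin n, av n m false u v ∅ ≤ ∑ u : Fin n, (1 + C) := by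
    apply Finset.sum_le_sum
    intro u _
    calc ∑ v : Fin n, av n m false u v ∅ ≤ ∑ v : Fin n, ((if v = u then 1 else 0) + C / n) := by
          apply Finset.sum_le_sum
          intro v _
          by_cases h : v = u
          · subst h
            have : av n m false v v ∅ ≤ 1 := pr_le_one hn _
            have : 0 ≤ C / n := by positivity
            simp; linarith
          · simp only [h, if_false, zero_add]
            exact (av_le_cn _ _ _ _).trans (cn_bound hn hβ hC hC2 m hm u v (Ne.symm h))
      _ = 1 + C := by
          rw [Finset.sum_add_distrib]; simp; field_simp
  have h2 : (∑ u : Fin n, ∑ v : Fin n, av n m false u v ∅) / (n:ℝ)^2 ≤ (1 + C) / n := by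
    rw [div_le_div_iff₀ (by positivity) hn']
    simp at h1
    nlinarith
  linarith

/-- Limit profile. -/
def ph (p : Bool) (x : ℝ) : ℝ := if p then x / (1 - x^2) else x^2 / (1 - x^2)
/-- Indicator. -/
def bo (p : Bool) : ℝ := if p then 1 else 0

theorem one_sub_sq_pos {x β : ℝ} (hx : 0 ≤ x) (hxβ : x ≤ β) (hβ : β < 1) :
    0 < 1 - β^2 ∧ 1 - β^2 ≤ 1 - x^2 := by
  constructor <;> nlinarith

theorem ph_rec {x β : ℝ} (hx : 0 ≤ x) (hxβ : x ≤ β) (hβ : β < 1) (p : Bool) :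
    ph p x = x * (ph (!p) x + bo p) := by
  have h := one_sub_sq_pos hx hxβ hβ
  have : 1 - x^2 ≠ 0 := by linarith
  cases p <;> simp [ph, bo]
  · field_simp
  · field_simp; ring

theorem ph_nonneg {x β : ℝ} (hx : 0 ≤ x) (hxβ : x ≤ β) (hβ : β < 1) (p : Bool) : 0 ≤ ph p x := by
  have h := one_sub_sq_pos hx hxβ hβ
  have : 0 < 1 - x^2 := by linarith
  cases p <;> simp [ph] <;> positivity

theorem ph_bound {x β : ℝ} (hx : 0 ≤ x) (hxβ : x ≤ β) (hβ : β < 1) (p : Bool) :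
    ph (!p) x + bo p ≤ 1 / (1 - β^2) := by
  have h := one_sub_sq_pos hx hxβ hβ
  have h1 : 0 < 1 - x^2 := by linarith
  have h2 : 1 / (1 - x^2) ≤ 1 / (1 - β^2) := one_div_le_one_div_of_le h.1 h.2
  refine le_trans ?_ h2
  cases p <;> simp only [ph, bo, Bool.not_true, Bool.not_false, if_true]
  · rw [le_div_iff₀ h1]; simp; rw [div_mul_cancel₀ _ h1.ne']; linarith
  · rw [le_div_iff₀ h1]; simp; rw [add_mul, div_mul_cancel₀ _ h1.ne']; linarith

theorem ph_bound' {x β : ℝ} (hx : 0 ≤ x) (hxβ : x ≤ β) (hβ : β < 1) (p : Bool) :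
    ph p x ≤ 1 / (1 - β^2) := by
  have := ph_bound hx hxβ hβ (!p)
  simp only [Bool.not_not] at this
  have h : 0 ≤ bo (!p) := by cases p <;> simp [bo]
  linarith

theorem ph_mono {x y β : ℝ} (hx : 0 ≤ x) (hxy : x ≤ y) (hyβ : y ≤ β) (hβ : β < 1) (p : Bool) :
    ph p x ≤ ph p y := by
  have h1 := one_sub_sq_pos hx (hxy.trans hyβ) hβ
  have h2 := one_sub_sq_pos (hx.trans hxy) hyβ hβ
  have h3 : 1 - y^2 ≤ 1 - x^2 := by nlinarith
  have h4 : 0 < 1 - y^2 := by linarith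
  have hy : 0 ≤ y := hx.trans hxy
  cases p <;> simp [ph] <;> gcongr

theorem ph_lip {x y β : ℝ} (hx : 0 ≤ x) (hxy : x ≤ y) (hyβ : y ≤ β) (hβ : β < 1) (p : Bool) :
    ph p y - ph p x ≤ 2 * (1 / (1 - β^2))^2 * (y - x) := by
  have h1 := one_sub_sq_pos hx (hxy.trans hyβ) hβ
  have h2 := one_sub_sq_pos (hx.trans hxy) hyβ hβ
  have h3 : 0 < 1 - x^2 := by linarith
  have h4 : 0 < 1 - y^2 := by linarith
  have hy : 0 ≤ y := hx.trans hxy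
  have a : (1 - β^2) * (1 - β^2) ≤ (1 - x^2) * (1 - y^2) := by gcongr <;> linarith
  have e : 2 * (1 / (1 - β^2))^2 * (y - x) = (2 * (y - x)) / ((1 - β^2) * (1 - β^2)) := by
    field_simp
  have hz : 0 ≤ y - x := by linarith
  rw [e]
  have f : 2 * (y - x) / ((1 - x^2) * (1 - y^2)) ≤ (2 * (y - x)) / ((1 - β^2) * (1 - β^2)) := by
    have : 0 < (1 - β^2) * (1 - β^2) := mul_pos h1.1 h1.1
    gcongr
  refine le_trans ?_ f
  have x1 : x ≤ 1 := by linarith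
  have y1 : y ≤ 1 := by linarith
  have hxy1 : x * y ≤ 1 := by nlinarith
  rw [le_div_iff₀ (by positivity)]
  cases p
  · have : (ph false y - ph false x) * ((1 - x^2) * (1 - y^2)) = (y - x) * (x + y) := by
      simp [ph]; field_simp; ring
    rw [this]; nlinarith
  · have : (ph true y - ph true x) * ((1 - x^2) * (1 - y^2)) = (y - x) * (1 + x * y) := by
      simp [ph]; field_simp; ring
    rw [this]; nlinarith

theorem av_upper_bound {n : ℕ} (hn : 0 < n) {β C A M : ℝ} (hβ : 0 ≤ β) (hβ1 : β < 1) (hC : 0 ≤ C)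
    (hC2 : β * (1 + C) ≤ C) (hM : M = 1 / (1 - β^2)) (hA : 0 ≤ A)
    (hA2 : β * (M * (1 + C) + A) ≤ A) :
    ∀ m : ℕ, 2 * (m:ℝ) / n ≤ β → ∀ (p : Bool) (u v : Fin n), u ≠ v →
      av n m p u v ∅ ≤ (pb n m * ph p (2 * (m:ℝ) / n) + A / n) / n := by
  have hn' : (0:ℝ) < n := by exact_mod_cast hn
  intro m
  induction m with
  | zero =>
    intro _ p u v huv
    have h1 := (av_le_cn (m := 0) p u v ∅).trans (cn_zero huv).le
    have : ph p (2 * ((0:ℕ):ℝ) / n) = 0 := by cases p <;> simp [ph]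
    rw [this]
    refine h1.trans ?_
    rw [mul_zero, zero_add]
    positivity
  | succ m ih =>
    intro hm p u v huv
    push_cast at hm ⊢
    set x : ℝ := 2 * ((m:ℝ) + 1) / n with hx
    set x0 : ℝ := 2 * (m:ℝ) / n with hx0
    have hx0n : 0 ≤ x0 := by positivity
    have hxx : x0 ≤ x := by rw [hx, hx0]; gcongr; linarith
    have hm0 : x0 ≤ β := hxx.trans hm
    have hxn : 0 ≤ x := by positivity
    have hph0 := ph_nonneg hx0n hm0 hβ1 (!p)
    have hph := ph_nonneg hxn hm hβ1 (!p)
    have hb : 0 ≤ bo p := by cases p <;> simp [bo]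
    have hpb := pb_nonneg n m
    have h1 := sum_erase_le u v (fun w => av n m (!p) w v ∅)
      ((pb n m * ph (!p) x0 + A / n) / n) (by positivity) (pr_nonneg _)
      (fun w hw => ih hm0 (!p) w v hw)
    have h2 : av n m (!p) v v ∅ = bo p * pb n m := by
      cases p
      · simpa [bo] using av_self_true v ∅
      · simpa [bo] using av_self_le v
    have h3 : (n:ℝ) * ((pb n m * ph (!p) x0 + A / n) / n) = pb n m * ph (!p) x0 + A / n := by
      field_simp
    simp only [h2, h3] at h1
    have h4 := ph_mono hx0n hxx hm hβ1 (!p)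
    have h5 := pb_step hn hβ hC hC2 m hm0
    have h6 := ph_bound hxn hm hβ1 p
    rw [← hM] at h6
    have h7 : bo p * pb n m + (pb n m * ph (!p) x0 + A / n) ≤
        pb n (m+1) * (ph (!p) x + bo p) + (M * (1 + C) + A) / n := by
      calc bo p * pb n m + (pb n m * ph (!p) x0 + A / n)
          ≤ bo p * pb n m + (pb n m * ph (!p) x + A / n) := by gcongr
        _ = pb n m * (ph (!p) x + bo p) + A / n := by ring
        _ ≤ (pb n (m+1) + (1 + C) / n) * (ph (!p) x + bo p) + A / n := by gcongr
        _ = pb n (m+1) * (ph (!p) x + bo p) + (1 + C) / n * (ph (!p) x + bo p) + A / n := by ring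
        _ ≤ pb n (m+1) * (ph (!p) x + bo p) + (1 + C) / n * M + A / n := by gcongr
        _ = _ := by ring
    calc av n (m+1) p u v ∅ ≤ x / n * ∑ w ∈ Finset.univ.erase u, av n m (!p) w v ∅ :=
          av_upper hn p huv
      _ ≤ x / n * (pb n (m+1) * (ph (!p) x + bo p) + (M * (1 + C) + A) / n) := by
          have := h1.trans h7
          gcongr
      _ = (pb n (m+1) * (x * (ph (!p) x + bo p)) + (x * (M * (1 + C) + A)) / n) / n := by ring
      _ = (pb n (m+1) * ph p x + (x * (M * (1 + C) + A)) / n) / n := by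
          rw [← ph_rec hxn hm hβ1 p]
      _ ≤ (pb n (m+1) * ph p x + A / n) / n := by
          have hM0 : 0 ≤ M := le_trans (by positivity) h6
          have : x * (M * (1 + C) + A) ≤ A := le_trans (by gcongr) hA2
          gcongr

theorem av_lower_bound {n : ℕ} (hn : 0 < n) {β C A M B : ℝ} (hβ : 0 ≤ β) (hβ1 : β < 1)
    (hC : 0 ≤ C)
    (hC2 : β * (1 + C) ≤ C) (hM : M = 1 / (1 - β^2)) (hA : 0 ≤ A) (hB : 0 ≤ B)
    (hA2 : ∀ j : ℕ, β * (4 * M^2 + (2 + j) * M + A * (j + 1 + B)^2 + (j + 2)^2 * C) ≤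
      A * (j + B)^2) :
    ∀ m : ℕ, 2 * (m:ℝ) / n ≤ β → ∀ (p : Bool) (u v : Fin n) (W : Finset (Fin n)), u ≠ v →
      u ∉ W → v ∉ W →
      (pb n m * ph p (2 * (m:ℝ) / n) - A * (W.card + B)^2 / n) / n ≤ av n m p u v (insert u W) := by
  have hn' : (0:ℝ) < n := by exact_mod_cast hn
  intro m
  induction m with
  | zero =>
    intro _ p u v W huv hu hv
    have h1 : 0 ≤ av n 0 p u v (insert u W) := pr_nonneg _
    have : ph p (2 * ((0:ℕ):ℝ) / n) = 0 := by cases p <;> simp [ph]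
    rw [this]
    refine le_trans ?_ h1
    rw [mul_zero, zero_sub]
    have : 0 ≤ A * (W.card + B)^2 / n := by positivity
    apply div_nonpos_of_nonpos_of_nonneg <;> linarith
  | succ m ih =>
    intro hm p u v W huv hu hv
    push_cast at hm ⊢
    set x : ℝ := 2 * ((m:ℝ) + 1) / n with hx
    set x0 : ℝ := 2 * (m:ℝ) / n with hx0
    set j : ℕ := W.card with hj
    have hx0n : 0 ≤ x0 := by positivity
    have hxx : x0 ≤ x := by rw [hx, hx0]; gcongr; linarith
    have hm0 : x0 ≤ β := hxx.trans hm
    have hxn : 0 ≤ x := by positivity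
    have hM0 : 0 ≤ M := by
      rw [hM]; have := (one_sub_sq_pos hxn hm hβ1).1; positivity
    have hph0 := ph_nonneg hx0n hm0 hβ1 (!p)
    have hph := ph_nonneg hxn hm hβ1 (!p)
    have hb : 0 ≤ bo p := by cases p <;> simp [bo]
    have hpb := pb_nonneg n m
    have hpb' := pb_nonneg n (m+1)
    have hpb1 := pb_le_one hn m
    have hpb1' := pb_le_one hn (m+1)
    have hanti := pb_anti hn m
    have hcu : (insert u W).card = j + 1 := Finset.card_insert_of_notMem hu
    have hvmem : v ∈ (insert u W)ᶜ := by
      simp only [Finset.mem_compl, Finset.mem_insert, not_or]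
      exact ⟨huv.symm, hv⟩
    have hvni : v ∉ insert u W := by simpa using hvmem
    -- the term at v
    have hT : bo p * pb n m - (j + 2)^2 * C / n ≤
        av n m (!p) v v (insert v (insert u W)) := by
      cases p
      · have : 0 ≤ av n m (!false) v v (insert v (insert u W)) := pr_nonneg _
        have h2 : 0 ≤ ((j:ℝ) + 2)^2 * C / n := by positivity
        simp only [bo]
        simp only [Bool.false_eq_true, if_false, zero_mul]
        linarith
      · have := sep_lower (m := m) v (insert v (insert u W)) (C / n) (by positivity)
          (fun x y hxy => cn_bound hn hβ hC hC2 m hm0 x y hxy)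
        rw [Finset.card_insert_of_notMem hvni, hcu] at this
        push_cast at this
        simp only [bo, if_true, Bool.not_true]
        refine le_trans (le_of_eq ?_) this
        ring
    -- the other terms
    have hcard : (((insert u W)ᶜ.erase v).card : ℝ) = n - 2 - j := by
      have h1 : ((insert u W)ᶜ.erase v).card + 1 = (insert u W)ᶜ.card :=
        Finset.card_erase_add_one hvmem
      have h2 : (insert u W).card + (insert u W)ᶜ.card = n := by
        rw [Finset.card_add_card_compl]; simp
      have h3 : ((insert u W)ᶜ.erase v).card + 2 + j = n := by omega
      have h4 : (((insert u W)ᶜ.erase v).card : ℝ) + 2 + j = n := by exact_mod_cast h3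
      linarith
    have hcn : 0 ≤ (n:ℝ) - 2 - j := by rw [← hcard]; positivity
    set e : ℝ := A * (j + 1 + B)^2 / n with he
    have he0 : 0 ≤ e := by positivity
    have hO : ((n:ℝ) - 2 - j) * ((pb n m * ph (!p) x0 - e) / n) ≤
        ∑ w ∈ (insert u W)ᶜ.erase v, av n m (!p) w v (insert w (insert u W)) := by
      rw [← hcard, ← nsmul_eq_mul]
      apply Finset.card_nsmul_le_sum
      intro w hw
      have hw1 : w ≠ v := Finset.ne_of_mem_erase hw
      have hw2 : w ∉ insert u W := by simpa using Finset.mem_of_mem_erase hw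
      have := ih hm0 (!p) w v (insert u W) hw1 hw2 hvni
      rw [hcu] at this
      push_cast at this
      exact this
    have hsum := Finset.add_sum_erase _ (fun w => av n m (!p) w v (insert w (insert u W))) hvmem
    have hq : pb n m * ph (!p) x0 ≤ M := by
      have := ph_bound' hx0n hm0 hβ1 (!p)
      rw [← hM] at this
      calc pb n m * ph (!p) x0 ≤ 1 * M := by gcongr
        _ = M := one_mul M
    have hq0 : 0 ≤ pb n m * ph (!p) x0 := by positivity
    have hO2 : pb n m * ph (!p) x0 - e - (2 + j) * M / n ≤
        ((n:ℝ) - 2 - j) * ((pb n m * ph (!p) x0 - e) / n) := by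
      have e1 : ((n:ℝ) - 2 - j) * ((pb n m * ph (!p) x0 - e) / n) =
        pb n m * ph (!p) x0 - e - (2 + j) * (pb n m * ph (!p) x0) / n + (2 + j) * e / n := by
        field_simp; ring
      have e2 : 0 ≤ (2 + (j:ℝ)) * e / n := by positivity
      have e3 : (2 + (j:ℝ)) * (pb n m * ph (!p) x0) / n ≤ (2 + j) * M / n := by gcongr
      rw [e1]; linarith
    have hlip := ph_lip hx0n hxx hm hβ1 (!p)
    rw [← hM] at hlip
    have hxd : x - x0 = 2 / n := by rw [hx, hx0]; ring
    rw [hxd] at hlip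
    have hq2 : pb n (m+1) * ph (!p) x - 4 * M^2 / n ≤ pb n m * ph (!p) x0 := by
      calc pb n (m+1) * ph (!p) x - 4 * M^2 / n
          ≤ pb n (m+1) * (ph (!p) x0 + 2 * M^2 * (2 / n)) - 4 * M^2 / n := by
            gcongr; linarith
        _ = pb n (m+1) * ph (!p) x0 + pb n (m+1) * (4 * M^2 / n) - 4 * M^2 / n := by ring
        _ ≤ pb n m * ph (!p) x0 + 1 * (4 * M^2 / n) - 4 * M^2 / n := by gcongr
        _ = _ := by ring
    have hbo : bo p * pb n (m+1) ≤ bo p * pb n m := by gcongr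
    have hS : pb n (m+1) * (ph (!p) x + bo p) -
        (4 * M^2 + (2 + j) * M + A * (j + 1 + B)^2 + (j + 2)^2 * C) / n ≤
        ∑ w ∈ (insert u W)ᶜ, av n m (!p) w v (insert w (insert u W)) := by
      rw [← hsum]
      have e1 : (4 * M^2 + (2 + j) * M + A * (j + 1 + B)^2 + (j + 2)^2 * C) / n =
        4 * M^2 / n + (2 + j) * M / n + e + (j + 2)^2 * C / n := by rw [he]; ring
      rw [e1]
      linarith
    calc (pb n (m+1) * ph p x - A * (j + B)^2 / n) / n
        ≤ (pb n (m+1) * ph p x -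
          (x * (4 * M^2 + (2 + j) * M + A * (j + 1 + B)^2 + (j + 2)^2 * C)) / n) / n := by
          have : x * (4 * M^2 + (2 + j) * M + A * (j + 1 + B)^2 + (j + 2)^2 * C) ≤
            A * (j + B)^2 := le_trans (by gcongr) (hA2 j)
          gcongr
      _ = (pb n (m+1) * (x * (ph (!p) x + bo p)) -
          (x * (4 * M^2 + (2 + j) * M + A * (j + 1 + B)^2 + (j + 2)^2 * C)) / n) / n := by
          rw [← ph_rec hxn hm hβ1 p]
      _ = x / n * (pb n (m+1) * (ph (!p) x + bo p) -
        (4 * M^2 + (2 + j) * M + A * (j + 1 + B)^2 + (j + 2)^2 * C) / n) := by ring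
      _ ≤ x / n * ∑ w ∈ (insert u W)ᶜ, av n m (!p) w v (insert w (insert u W)) := by gcongr
      _ ≤ av n (m+1) p u v (insert u W) := av_lower hn p u v W

theorem const_exists {β : ℝ} (hβ : 0 ≤ β) (hβ1 : β < 1) {C M : ℝ} (hC : 0 ≤ C) (hM : 0 ≤ M) :
    ∃ A B : ℝ, 0 ≤ A ∧ 0 ≤ B ∧ ∀ j : ℕ,
      β * (4 * M^2 + (2 + j) * M + A * (j + 1 + B)^2 + (j + 2)^2 * C) ≤ A * (j + B)^2 := by
  have h1 : 0 < 1 - β := by linarith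
  set B : ℝ := 6 / (1 - β) with hB
  have hB6 : 6 ≤ B := by rw [hB, le_div_iff₀ h1]; linarith
  have hBm : B * (1 - β) = 6 := by rw [hB]; field_simp
  set D : ℝ := 4 * M^2 + M + C with hD
  have hD0 : 0 ≤ D := by positivity
  refine ⟨2 * D / (1 - β), B, by positivity, by linarith, fun j => ?_⟩
  set A : ℝ := 2 * D / (1 - β) with hA
  have hA0 : 0 ≤ A := by positivity
  have hAm : A * (1 - β) = 2 * D := by rw [hA]; field_simp
  have hj : (0:ℝ) ≤ j := by positivity
  set t : ℝ := j + B with ht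
  have htB : B ≤ t := by linarith
  have e1 : (2 + (j:ℝ)) ≤ t^2 := by nlinarith
  have e2 : ((j:ℝ) + 2)^2 ≤ t^2 := by gcongr; linarith
  have e3 : 1 ≤ t^2 := by nlinarith
  have e4 : 4 * M^2 + (2 + j) * M + (j + 2)^2 * C ≤ D * t^2 := by
    rw [hD]
    have a1 : (2 + (j:ℝ)) * M ≤ t^2 * M := by gcongr
    have a2 : ((j:ℝ) + 2)^2 * C ≤ t^2 * C := by gcongr
    have a3 : 4 * M^2 * 1 ≤ 4 * M^2 * t^2 := by gcongr
    linarith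
  have e5 : β * (t + 1)^2 ≤ (1 + β) / 2 * t^2 := by
    have : 6 ≤ t * (1 - β) := by rw [← hBm]; gcongr
    nlinarith
  have e6 : (j:ℝ) + 1 + B = t + 1 := by rw [ht]; ring
  rw [e6]
  have e7 : A * (β * (t + 1)^2) ≤ A * ((1 + β) / 2 * t^2) := by gcongr
  have e8 : β * (4 * M^2 + (2 + j) * M + (j + 2)^2 * C) ≤ 1 * (D * t^2) := by gcongr
  have e9 : A * ((1 + β) / 2 * t^2) + D * t^2 = A * t^2 := by
    have : D = A * (1 - β) / 2 := by linarith
    rw [this]; ring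
  linarith

end
end Inhomog

namespace Inhomog

noncomputable section

/-- The limiting function. -/
def lf (x : ℝ) : ℝ := ((1 - x) / (1 + x)) ^ ((1:ℝ) / 4)

theorem lf_deriv {x : ℝ} (hx : 0 ≤ x) (hx1 : x < 1) :
    HasDerivAt lf (-(lf x * (1 / (1 - x^2)) / 2)) x := by
  have h1 : (1 + x) ≠ 0 := by linarith
  have h2 : 0 < (1 - x) / (1 + x) := by apply div_pos <;> linarith
  have hd : HasDerivAt (fun x : ℝ => (1 - x) / (1 + x))
      (((-1) * (1 + x) - (1 - x) * 1) / (1 + x)^2) x :=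
    HasDerivAt.fun_div ((hasDerivAt_id' x).const_sub 1) ((hasDerivAt_id' x).const_add 1) h1
  have h3 := hd.rpow_const (p := (1:ℝ) / 4) (Or.inl h2.ne')
  unfold lf
  convert h3 using 1
  rw [Real.rpow_sub_one h2.ne']
  have h4 : (1 - x) ≠ 0 := by linarith
  have h5 : 1 - x^2 = (1 - x) * (1 + x) := by ring
  rw [h5]
  generalize ((1 - x) / (1 + x)) ^ ((1:ℝ) / 4) = F
  field_simp
  ring

theorem lf_pos {x : ℝ} (hx : 0 ≤ x) (hx1 : x < 1) : 0 < lf x := by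
  unfold lf
  apply Real.rpow_pos_of_pos
  apply div_pos <;> linarith

theorem lf_le_one {x : ℝ} (hx : 0 ≤ x) (hx1 : x < 1) : lf x ≤ 1 := by
  unfold lf
  apply Real.rpow_le_one
  · apply div_nonneg <;> linarith
  · rw [div_le_one (by linarith)]; linarith
  · norm_num

theorem lf_anti {x y : ℝ} (hx : 0 ≤ x) (hxy : x ≤ y) (hy1 : y < 1) : lf y ≤ lf x := by
  unfold lf
  apply Real.rpow_le_rpow
  · apply div_nonneg <;> linarith
  · rw [div_le_div_iff₀ (by linarith) (by linarith)]; nlinarith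
  · norm_num

theorem inv_eq {x β : ℝ} (hx : 0 ≤ x) (hxβ : x ≤ β) (hβ : β < 1) :
    1 / (1 - x^2) = ph false x + 1 := by
  have h := one_sub_sq_pos hx hxβ hβ
  have : 1 - x^2 ≠ 0 := by linarith
  simp [ph]; field_simp; ring

theorem lf_taylor {β M : ℝ} (hβ1 : β < 1) (hM : M = 1 / (1 - β^2))
    {x y : ℝ} (hx : 0 ≤ x) (hxy : x ≤ y) (hy : y ≤ β) :
    |lf y - lf x * (1 - (y - x) / 2 * (1 / (1 - x^2)))| ≤ 2 * M^2 * (y - x)^2 := by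
  have hz : ∀ z ∈ Set.Icc x y, 0 ≤ z ∧ z ≤ β ∧ z < 1 :=
    fun z h => ⟨hx.trans h.1, h.2.trans hy, by linarith [h.2]⟩
  have hMz : ∀ z ∈ Set.Icc x y, 0 ≤ 1 / (1 - z^2) ∧ 1 / (1 - z^2) ≤ M := by
    intro z h
    obtain ⟨a, b, c⟩ := hz z h
    have := one_sub_sq_pos a b hβ1
    have h0 : 0 < 1 - z^2 := by linarith
    refine ⟨by positivity, ?_⟩
    rw [hM]
    exact one_div_le_one_div_of_le this.1 this.2
  have hM0 : 0 ≤ M := (hMz x ⟨le_refl _, hxy⟩).1.trans (hMz x ⟨le_refl _, hxy⟩).2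
  have hM1 : 1 ≤ M := by
    obtain ⟨a, b, c⟩ := hz x ⟨le_refl _, hxy⟩
    have := ph_bound a b hβ1 true
    rw [← hM] at this
    have h2 := ph_nonneg a b hβ1 (!true)
    simp only [bo, if_true] at this
    linarith
  -- f is Lipschitz
  have hl : ∀ z ∈ Set.Icc x y, |lf z - lf x| ≤ M / 2 * (y - x) := by
    intro z h
    have := Convex.norm_image_sub_le_of_norm_hasDerivWithin_le (s := Set.Icc x y) (f := lf)
      (f' := fun z => -(lf z * (1 / (1 - z^2)) / 2)) (C := M / 2)
      (fun w hw => (lf_deriv (hz w hw).1 (hz w hw).2.2).hasDerivWithinAt)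
      (fun w hw => by
        have a := hMz w hw
        have b := (lf_pos (hz w hw).1 (hz w hw).2.2).le
        have c := lf_le_one (hz w hw).1 (hz w hw).2.2
        rw [Real.norm_eq_abs, abs_neg, abs_of_nonneg (by have := a.1; positivity)]
        have : lf w * (1 / (1 - w^2)) ≤ 1 * M := by
          have := a.1; have := a.2; gcongr
        linarith)
      (convex_Icc x y) ⟨le_refl _, hxy⟩ h
    rw [Real.norm_eq_abs, Real.norm_eq_abs, abs_of_nonneg (a := z - x) (by linarith [h.1])] at this
    refine this.trans ?_
    have := h.2
    gcongr
  have hG : ∀ z ∈ Set.Icc x y, |-(lf z * (1 / (1 - z^2)) / 2) + lf x * (1 / (1 - x^2)) / 2| ≤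
      2 * M^2 * (y - x) := by
    intro z h
    have a := hMz z h
    have a' := hMz x ⟨le_refl _, hxy⟩
    have b := (lf_pos (hz x ⟨le_refl _, hxy⟩).1 (hz x ⟨le_refl _, hxy⟩).2.2).le
    have c := lf_le_one (hz x ⟨le_refl _, hxy⟩).1 (hz x ⟨le_refl _, hxy⟩).2.2
    have l := hl z h
    have d1 : 1 / (1 - z^2) - 1 / (1 - x^2) ≤ 2 * M^2 * (y - x) := by
      rw [inv_eq (hz z h).1 (hz z h).2.1 hβ1, inv_eq hx (hxy.trans hy) hβ1]
      have := ph_lip hx h.1 (hz z h).2.1 hβ1 false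
      rw [← hM] at this
      have e : 2 * M^2 * (z - x) ≤ 2 * M^2 * (y - x) := by have := h.2; gcongr
      linarith
    have d0 : 0 ≤ 1 / (1 - z^2) - 1 / (1 - x^2) := by
      rw [inv_eq (hz z h).1 (hz z h).2.1 hβ1, inv_eq hx (hxy.trans hy) hβ1]
      have := ph_mono hx h.1 (hz z h).2.1 hβ1 false
      linarith
    have e : -(lf z * (1 / (1 - z^2)) / 2) + lf x * (1 / (1 - x^2)) / 2 =
      -((lf z - lf x) * (1 / (1 - z^2)) / 2 + lf x * (1 / (1 - z^2) - 1 / (1 - x^2)) / 2) := by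
      ring
    rw [e, abs_neg]
    have hyx : 0 ≤ y - x := by linarith
    calc _ ≤ |(lf z - lf x) * (1 / (1 - z^2)) / 2| +
          |lf x * (1 / (1 - z^2) - 1 / (1 - x^2)) / 2| := abs_add_le _ _
      _ = |lf z - lf x| * (1 / (1 - z^2)) / 2 + lf x * (1 / (1 - z^2) - 1 / (1 - x^2)) / 2 := by
          rw [abs_div, abs_mul, abs_of_nonneg a.1, abs_of_nonneg (a := lf x * _ / 2) (by positivity),
            abs_of_pos (by norm_num : (0:ℝ) < 2)]
      _ ≤ (M / 2 * (y - x)) * M / 2 + 1 * (2 * M^2 * (y - x)) / 2 := by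
          have := a.2; have := a.1; gcongr
      _ ≤ 2 * M^2 * (y - x) := by
          have : 0 ≤ M^2 * (y - x) := by positivity
          nlinarith
  have := Convex.norm_image_sub_le_of_norm_hasDerivWithin_le (s := Set.Icc x y)
      (f := fun z => lf z + lf x * (1 / (1 - x^2)) / 2 * z)
      (f' := fun z => -(lf z * (1 / (1 - z^2)) / 2) + lf x * (1 / (1 - x^2)) / 2)
      (C := 2 * M^2 * (y - x))
      (fun w hw => by
        have h1 := lf_deriv (hz w hw).1 (hz w hw).2.2
        have h2 := (hasDerivAt_id' w).const_mul (lf x * (1 / (1 - x^2)) / 2)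
        rw [mul_one] at h2
        exact (h1.add h2).hasDerivWithinAt)
      (fun w hw => hG w hw)
      (convex_Icc x y) ⟨le_refl _, hxy⟩ ⟨hxy, le_refl _⟩
  rw [Real.norm_eq_abs, Real.norm_eq_abs, abs_of_nonneg (a := y - x) (by linarith)] at this
  refine le_trans (le_of_eq ?_) (this.trans (le_of_eq ?_))
  · congr 1; ring
  · ring

theorem pb_main_step {β : ℝ} (hβ : 0 ≤ β) (hβ1 : β < 1) :
    ∃ K : ℝ, 0 ≤ K ∧ ∀ n : ℕ, 0 < n → ∀ m : ℕ, 2 * (m:ℝ) / n ≤ β →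
      |pb n (m+1) - pb n m * (1 - 1 / n * (1 / (1 - (2 * (m:ℝ) / n)^2)))| ≤ K / (n:ℝ)^2 := by
  have hb := one_sub_sq_pos hβ le_rfl hβ1
  have h1β : 0 < 1 - β := by linarith
  set M : ℝ := 1 / (1 - β^2) with hM
  have hM0 : 0 ≤ M := by have := hb.1; positivity
  set C : ℝ := β / (1 - β) with hCd
  have hC : 0 ≤ C := by positivity
  have hC2 : β * (1 + C) ≤ C := by
    apply le_of_eq; rw [hCd]; field_simp; ring
  set A1 : ℝ := β * (M * (1 + C)) / (1 - β) with hA1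
  have hA10 : 0 ≤ A1 := by positivity
  have hA12 : β * (M * (1 + C) + A1) ≤ A1 := by
    apply le_of_eq; rw [hA1]; field_simp; ring
  obtain ⟨A, B, hA, hB, hAB⟩ := const_exists hβ hβ1 hC hM0
  refine ⟨A1 + A * B^2 + M, by positivity, fun n hn m hm => ?_⟩
  have hn' : (0:ℝ) < n := by exact_mod_cast hn
  have hxn : 0 ≤ 2 * (m:ℝ) / n := by positivity
  set x := 2 * (m:ℝ) / n with hx
  set q : ℝ := pb n m * ph false x with hq
  have hpb := pb_nonneg n m
  have hq0 : 0 ≤ q := by have := ph_nonneg hxn hm hβ1 false; positivity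
  have hqM : q ≤ M := by
    have := ph_bound' hxn hm hβ1 false
    have h2 := ph_nonneg hxn hm hβ1 false
    calc q ≤ 1 * M := by have := pb_le_one hn m; rw [hq]; gcongr
      _ = M := one_mul M
  have hU : ∀ u v : Fin n, av n m false u v ∅ ≤
      (if u = v then pb n m else 0) + (q + A1 / n) / n := by
    intro u v
    by_cases huv : u = v
    · subst huv
      simp only [if_true]
      rw [av_self_le]
      have : 0 ≤ (q + A1 / n) / n := by positivity
      linarith
    · simp only [huv, if_false, zero_add]
      exact av_upper_bound hn hβ hβ1 hC hC2 hM hA10 hA12 m hm false u v huv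
  have hL : ∀ u v : Fin n, (if u = v then pb n m - q / n else 0) + (q - A * B^2 / n) / n ≤
      av n m false u v ∅ := by
    intro u v
    by_cases huv : u = v
    · subst huv
      simp only [if_true]
      rw [av_self_le]
      have : 0 ≤ A * B^2 / n / n := by positivity
      have e : (q - A * B^2 / n) / n = q / n - A * B^2 / n / n := by ring
      rw [e]; linarith
    · simp only [huv, if_false, zero_add]
      have := av_lower_bound hn hβ hβ1 hC hC2 hM hA hB hAB m hm false u v ∅ huv (by simp) (by simp)
      simp only [Finset.card_empty, Nat.cast_zero, zero_add] at this
      exact this.trans (av_mono _ _ _ _)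
  have hU2 : ∑ u : Fin n, ∑ v : Fin n, av n m false u v ∅ ≤ n * pb n m + n * q + A1 := by
    calc _ ≤ ∑ u : Fin n, ∑ v : Fin n, ((if u = v then pb n m else 0) + (q + A1 / n) / n) :=
          Finset.sum_le_sum fun u _ => Finset.sum_le_sum fun v _ => hU u v
      _ = _ := by
          simp only [Finset.sum_add_distrib, Finset.sum_ite_eq, Finset.mem_univ, if_true,
            Finset.sum_const, Finset.card_univ, Fintype.card_fin, nsmul_eq_mul]
          field_simp
          ring
  have hL2 : n * pb n m + n * q - q - A * B^2 ≤ ∑ u : Fin n, ∑ v : Fin n, av n m false u v ∅ := by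
    calc _ = ∑ u : Fin n, ∑ v : Fin n,
            ((if u = v then pb n m - q / n else 0) + (q - A * B^2 / n) / n) := by
          simp only [Finset.sum_add_distrib, Finset.sum_ite_eq, Finset.mem_univ, if_true,
            Finset.sum_const, Finset.card_univ, Fintype.card_fin, nsmul_eq_mul]
          field_simp
          ring
      _ ≤ _ := Finset.sum_le_sum fun u _ => Finset.sum_le_sum fun v _ => hL u v
  rw [pb_rec hn, inv_eq hxn hm hβ1]
  set S := ∑ u : Fin n, ∑ v : Fin n, av n m false u v ∅ with hS
  have e : pb n m - S / (n:ℝ)^2 - pb n m * (1 - 1 / n * (ph false x + 1)) =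
      (n * pb n m + n * q - S) / (n:ℝ)^2 := by
    rw [hq]; field_simp; ring
  rw [e, abs_div, abs_of_pos (a := (n:ℝ)^2) (by positivity)]
  have hAB0 : 0 ≤ A * B^2 := by positivity
  gcongr
  rw [abs_le]
  constructor <;> linarith

theorem pb_close {β : ℝ} (hβ : 0 ≤ β) (hβ1 : β < 1) :
    ∃ K : ℝ, 0 ≤ K ∧ ∃ N : ℕ, 0 < N ∧ ∀ n : ℕ, N ≤ n → ∀ m : ℕ, 2 * (m:ℝ) / n ≤ β →
      |pb n m - lf (2 * (m:ℝ) / n)| ≤ K * m / (n:ℝ)^2 := by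
  obtain ⟨K, hK, hstep⟩ := pb_main_step hβ hβ1
  have hb := one_sub_sq_pos hβ le_rfl hβ1
  set M : ℝ := 1 / (1 - β^2) with hM
  have hM0 : 0 < M := by have := hb.1; positivity
  obtain ⟨N, hN⟩ := exists_nat_ge M
  refine ⟨K + 8 * M^2, by positivity, N + 1, by omega, fun n hn m => ?_⟩
  have hn0 : 0 < n := by omega
  have hn' : (0:ℝ) < n := by exact_mod_cast hn0
  have hnM : M ≤ n := by
    have : (N:ℝ) ≤ n := by exact_mod_cast (by omega : N ≤ n)
    linarith
  induction m with
  | zero =>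
    intro _
    rw [pb_zero]
    simp [lf]
  | succ m ih =>
    intro hm
    push_cast at hm ⊢
    set x : ℝ := 2 * ((m:ℝ) + 1) / n with hx
    set x0 : ℝ := 2 * (m:ℝ) / n with hx0
    have hx0n : 0 ≤ x0 := by positivity
    have hxx : x0 ≤ x := by rw [hx, hx0]; gcongr; linarith
    have hm0 : x0 ≤ β := hxx.trans hm
    have h1 := ih hm0
    have h2 := hstep n hn0 m hm0
    have h3 := lf_taylor hβ1 hM hx0n hxx hm
    have hxd : x - x0 = 2 / n := by rw [hx, hx0]; ring
    rw [hxd] at h3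
    have e0 : (2:ℝ) / n / 2 = 1 / n := by ring
    rw [e0] at h3
    rw [← hx0] at h2
    set r : ℝ := 1 - 1 / n * (1 / (1 - x0^2)) with hr
    have hs := one_sub_sq_pos hx0n hm0 hβ1
    have hs0 : 0 < 1 - x0^2 := by linarith
    have hs1 : 1 / (1 - x0^2) ≤ M := one_div_le_one_div_of_le hs.1 hs.2
    have hr1 : |r| ≤ 1 := by
      have a : 0 ≤ 1 / (n:ℝ) * (1 / (1 - x0^2)) := by positivity
      have b : 1 / (n:ℝ) * (1 / (1 - x0^2)) ≤ 1 := by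
        calc 1 / (n:ℝ) * (1 / (1 - x0^2)) ≤ 1 / n * n := by
              have := hs1.trans hnM
              gcongr
          _ = 1 := by field_simp
      rw [abs_le]; constructor <;> linarith
    have e : pb n (m+1) - lf x = (pb n (m+1) - pb n m * r) - (lf x - lf x0 * r) +
        (pb n m - lf x0) * r := by ring
    rw [e]
    calc _ ≤ |pb n (m+1) - pb n m * r| + |lf x - lf x0 * r| + |(pb n m - lf x0) * r| := by
          refine (abs_add_le _ _).trans ?_
          gcongr
          exact abs_sub _ _
      _ ≤ K / (n:ℝ)^2 + 2 * M^2 * (2 / n)^2 + ((K + 8 * M^2) * m / (n:ℝ)^2) * 1 := by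
          rw [abs_mul]; gcongr
      _ = _ := by ring

end
end Inhomog

namespace Inhomog

noncomputable section

/-- probability of bipartiteness in the subcritical regime. -/
theorem prob_bipartite_subcritical (m : ℕ → ℕ)
    (hm : ∃ a b : ℝ, 0 < a ∧ a ≤ b ∧ b < 1 / 2 ∧
      ∀ᶠ n : ℕ in Filter.atTop, a ≤ (m n : ℝ) / n ∧ (m n : ℝ) / n ≤ b) :
    Filter.Tendsto (fun n : ℕ =>
        PBip n (m n) /
          ((1 - 2 * (m n : ℝ) / n) / (1 + 2 * (m n : ℝ) / n)) ^ ((1 : ℝ) / 4))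
      Filter.atTop (nhds 1) := by
  obtain ⟨a, b, ha, hab, hb, hev⟩ := hm
  have hβ : 0 ≤ 2 * b := by linarith
  have hβ1 : 2 * b < 1 := by linarith
  obtain ⟨K, hK, N, hN0, hclose⟩ := pb_close hβ hβ1
  have hl := lf_pos hβ hβ1
  have hlim : Filter.Tendsto (fun n : ℕ => (K / lf (2 * b)) / (n:ℝ)) Filter.atTop (nhds 0) :=
    tendsto_const_div_atTop_nhds_zero_nat _
  rw [tendsto_iff_norm_sub_tendsto_zero]
  refine squeeze_zero' (Filter.Eventually.of_forall fun n => norm_nonneg _) ?_ hlim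
  filter_upwards [hev, Filter.eventually_ge_atTop N] with n hn hnN
  have hn0 : 0 < n := by omega
  have hn' : (0:ℝ) < n := by exact_mod_cast hn0
  have hxn : 0 ≤ 2 * (m n : ℝ) / n := by positivity
  have hx : 2 * (m n : ℝ) / n ≤ 2 * b := by
    rw [mul_div_assoc]; linarith [hn.2]
  have h1 := hclose n hnN (m n) hx
  have h2 : lf (2 * b) ≤ lf (2 * (m n : ℝ) / n) := lf_anti hxn hx hβ1
  have h3 : 0 < lf (2 * (m n : ℝ) / n) := lf_pos hxn (by linarith)
  rw [PBip_eq]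
  change ‖pb n (m n) / lf (2 * (m n : ℝ) / n) - 1‖ ≤ _
  rw [div_sub_one h3.ne', Real.norm_eq_abs, abs_div, abs_of_pos h3]
  have h4 : K * (m n : ℝ) / (n:ℝ)^2 ≤ K / n := by
    have : (m n : ℝ) / n ≤ 1 := by linarith [hn.2]
    calc K * (m n : ℝ) / (n:ℝ)^2 = K * ((m n : ℝ) / n) / n := by field_simp
      _ ≤ K * 1 / n := by gcongr
      _ = K / n := by ring
  calc |pb n (m n) - lf (2 * (m n : ℝ) / n)| / lf (2 * (m n : ℝ) / n)
      ≤ (K / n) / lf (2 * b) := by gcongr; exact h1.trans h4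
    _ = K / lf (2 * b) / n := by ring

end

end Inhomog
end

section
/- Fix integers β ≥ 1 and α ≥ 1. Let c = 2 if α is even and c = 1 if α is odd, and let χ(X) = ∏_{i=1}^{β+1−c} (1 − X·(1 − 2i/β)^α)^{binom(β,i)}. Then for every sequence m : ℕ → ℕ for which there exist 0 < a ≤ b < 1/2 with a ≤ m(n)/n ≤ b for all large n, the ratio P_SAT(n, m(n)) / [ χ(2m/n)^{−2^{−β−2}} · (1 − 2m/n)^{1/2 − c·2^{−β−2}} ] tends to 1 as n → ∞ (where m = m(n)). -/
namespace Inhomog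

noncomputable section
/-- A quantified 2-Xor formula `φ` (a list of `m` clauses, each a tuple
`(i, j, e, b)`) is satisfiable if for every assignment `x` of the `β` universal
variables there is an assignment `y` of the `n` existential variables satisfying
every clause `y i + y j = Σ_k x (e k) + b`. -/
def Satisfiable {n m α β : ℕ}
    (φ : Fin m → Fin n × Fin n × (Fin α → Fin β) × ZMod 2) : Prop :=
  ∀ x : Fin β → ZMod 2, ∃ y : Fin n → ZMod 2,
    ∀ i : Fin m, y (φ i).1 + y (φ i).2.1 = (∑ k : Fin α, x ((φ i).2.2.1 k)) + (φ i).2.2.2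

/-- Probability that a uniformly random quantified 2-Xor formula with `m` clauses,
`n` existential variables, `β` universal variables, `α` universal occurrences per
clause and a constant term is satisfiable. -/
def PSAT (α β n m : ℕ) : ℝ :=
  (Nat.card {φ : Fin m → Fin n × Fin n × (Fin α → Fin β) × ZMod 2 // Satisfiable φ} : ℝ) /
    ((n : ℝ) ^ 2 * (β : ℝ) ^ α * 2) ^ m

/-- a clause joins two vertices (in either orientation) -/
def Joins {V Λ : Type} (e : V × V × Λ) (u w : V) : Prop :=
  (e.1 = u ∧ e.2.1 = w) ∨ (e.1 = w ∧ e.2.1 = u)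

def Good {V Λ G : Type} [AddCommGroup G] (l : Λ → G) (Y : V → G) (e : V × V × Λ) : Prop :=
  Y e.1 + Y e.2.1 = l e.2.2

def Sat {V Λ G ι : Type} [AddCommGroup G] (l : Λ → G) (φ : ι → V × V × Λ) : Prop :=
  ∃ Y : V → G, ∀ i, Good l Y (φ i)

def SatE {V Λ G ι : Type} [AddCommGroup G] (l : Λ → G) (e : V × V × Λ)
    (φ : ι → V × V × Λ) : Prop :=
  ∃ Y : V → G, (∀ i, Good l Y (φ i)) ∧ Good l Y e

def Adj {V Λ ι : Type} (φ : ι → V × V × Λ) (u w : V) : Prop := ∃ i, Joins (φ i) u w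

def Reach {V Λ ι : Type} (φ : ι → V × V × Λ) (u w : V) : Prop :=
  Relation.ReflTransGen (Adj φ) u w

/-- the clauses ψ form a path along v -/
def IsPth {V Λ : Type} {k : ℕ} (v : Fin (k + 1) → V) (ψ : Fin k → V × V × Λ) : Prop :=
  ∀ a : Fin k, Joins (ψ a) (v a.castSucc) (v a.succ)

section det
variable {V Λ G ι : Type} [AddCommGroup G]

theorem Joins.symm {e : V × V × Λ} {u w : V} (h : Joins e u w) : Joins e w u := by
  unfold Joins at *; tauto

theorem joins_self (e : V × V × Λ) : Joins e e.1 e.2.1 := Or.inl ⟨rfl, rfl⟩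

theorem reach_iff_of_joins {φ : ι → V × V × Λ} {i : ι} {u w : V} (h : Joins (φ i) u w) (x : V) :
    Reach φ x u ↔ Reach φ x w :=
  ⟨fun H => H.tail ⟨i, h⟩, fun H => H.tail ⟨i, h.symm⟩⟩

theorem pos_injective {φ : ι → V × V × Λ} {k : ℕ} {v : Fin (k + 1) → V} {pos : Fin k → ι}
    (hv : Function.Injective v) (hp : IsPth v (fun a => φ (pos a))) : Function.Injective pos := by
  intro a b hab
  have h1 := hp a
  have h2 := hp b
  simp only [hab] at h1
  have hc : (v a.castSucc = v b.castSucc) ∨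
      (v a.castSucc = v b.succ ∧ v a.succ = v b.castSucc) := by
    unfold Joins at h1 h2
    grind
  rcases hc with h | ⟨h, h'⟩
  · exact Fin.castSucc_injective _ (hv h)
  · have := congrArg Fin.val (hv h)
    have h4 := congrArg Fin.val (hv h')
    simp at this h4
    omega

theorem exists_path {φ : ι → V × V × Λ} {u w : V} (h : Reach φ u w) :
    ∃ (k : ℕ) (v : Fin (k + 1) ↪ V) (pos : Fin k ↪ ι),
      v 0 = u ∧ v (Fin.last k) = w ∧ IsPth v (fun a => φ (pos a)) := by
  classical
  let H : SimpleGraph V :=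
    { Adj := fun a b => a ≠ b ∧ Adj φ a b
      symm := ⟨fun a b hab => ⟨hab.1.symm, hab.2.imp fun i hi => hi.symm⟩⟩
      loopless := ⟨fun a ha => ha.1 rfl⟩ }
  have hr : H.Reachable u w := by
    unfold Reach at h
    induction h with
    | refl => exact SimpleGraph.Reachable.refl _
    | @tail b c _ hbc ih =>
      by_cases hb : b = c
      · exact hb ▸ ih
      · exact ih.trans (SimpleGraph.Adj.reachable (show H.Adj b c from ⟨hb, hbc⟩))
  obtain ⟨p, hp⟩ := hr.exists_isPath
  have hinj : Function.Injective (fun a : Fin (p.length + 1) => p.getVert a) := by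
    intro a b hab
    apply Fin.ext
    exact hp.getVert_injOn (by simp; omega) (by simp; omega) hab
  have hadj : ∀ a : Fin p.length, ∃ i, Joins (φ i) (p.getVert a) (p.getVert (a + 1)) := by
    intro a
    exact (p.adj_getVert_succ a.2).2
  choose pos hpos using hadj
  have hP : IsPth (fun a : Fin (p.length + 1) => p.getVert a) (fun a => φ (pos a)) := by
    intro a
    simpa using hpos a
  refine ⟨p.length, ⟨_, hinj⟩, ⟨pos, pos_injective hinj hP⟩, ?_, ?_, hP⟩
  · simp
  · simp

theorem path_label (h2 : ∀ g : G, g + g = 0) (l : Λ → G) (Y : V → G) :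
    ∀ {k : ℕ} {v : Fin (k + 1) → V} {ψ : Fin k → V × V × Λ}, IsPth v ψ →
    (∀ a, Good l Y (ψ a)) → Y (v 0) + Y (v (Fin.last k)) = ∑ a, l (ψ a).2.2 := by
  intro k
  induction k with
  | zero => intro v ψ _ _; simp [h2]
  | succ k ih =>
    intro v ψ hp hg
    rw [Fin.sum_univ_castSucc]
    have := ih (v := fun a => v a.castSucc) (ψ := fun a => ψ a.castSucc)
      (fun a => by simpa using hp a.castSucc) (fun a => hg _)
    rw [← this]
    have h3 : l (ψ (Fin.last k)).2.2 = Y (v (Fin.last k).castSucc) + Y (v (Fin.last k).succ) := by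
      rw [← hg (Fin.last k)]
      rcases hp (Fin.last k) with h | h
      · rw [h.1, h.2]
      · rw [h.1, h.2, add_comm]
    rw [h3]
    have h4 := h2 (Y (v (Fin.last k).castSucc))
    have h5 : ∀ a b c : G, b + b = 0 → a + c = a + b + (b + c) := by
      intro a b c h
      rw [add_assoc, ← add_assoc b, h, zero_add]
    exact h5 _ _ _ h4

theorem eq_of_add_zero (h2 : ∀ g : G, g + g = 0) {a b : G} (h : a + b = 0) : a = b := by
  have : a + b + b = b := by rw [h, zero_add]
  rwa [add_assoc, h2, add_zero] at this

theorem det_upper (h2 : ∀ g : G, g + g = 0) (l : Λ → G) (e : V × V × Λ) (φ : ι → V × V × Λ)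
    (hs : Sat l φ) (hn : ¬ SatE l e φ) :
    ∃ (k : ℕ) (v : Fin (k + 1) ↪ V) (pos : Fin k ↪ ι),
      e.1 = v 0 ∧ e.2.1 = v (Fin.last k) ∧ IsPth v (fun a => φ (pos a)) ∧
      ∑ a, l (φ (pos a)).2.2 + l e.2.2 ≠ 0 := by
  classical
  obtain ⟨Y, hY⟩ := hs
  have hr : Reach φ e.1 e.2.1 := by
    by_contra hr
    apply hn
    refine ⟨fun u => Y u + if Reach φ e.1 u then Y e.1 + Y e.2.1 + l e.2.2 else 0, ?_, ?_⟩
    · intro i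
      have h1 := reach_iff_of_joins (joins_self (φ i)) e.1
      have := hY i
      unfold Good at *
      rw [← this]
      beta_reduce
      by_cases h : Reach φ e.1 (φ i).1
      · rw [if_pos h, if_pos (h1.1 h), add_add_add_comm, h2, add_zero]
      · rw [if_neg h, if_neg (fun h' => h (h1.2 h')), add_zero, add_zero]
    · unfold Good
      beta_reduce
      rw [if_pos (show Reach φ e.1 e.1 from Relation.ReflTransGen.refl), if_neg hr, add_zero]
      have := h2 (Y e.1 + Y e.2.1)
      calc _ = (Y e.1 + Y e.2.1 + (Y e.1 + Y e.2.1)) + l e.2.2 := by abel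
        _ = _ := by rw [this, zero_add]
  obtain ⟨k, v, pos, h0, hk, hp⟩ := exists_path hr
  refine ⟨k, v, pos, h0.symm, hk.symm, hp, fun h => hn ⟨Y, hY, ?_⟩⟩
  have := path_label h2 l Y hp (fun a => hY _)
  rw [h0, hk] at this
  rw [Good, this]
  exact eq_of_add_zero h2 h

/-- restriction of φ to indices outside the path -/
def rest {k : ℕ} (pos : Fin k ↪ ι) (φ : ι → V × V × Λ) : ↥((Set.range pos)ᶜ) → V × V × Λ :=
  fun i => φ i

def NoConn {k : ℕ} {κ : Type} (v : Fin (k + 1) ↪ V) (χ : κ → V × V × Λ) : Prop :=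
  ∀ a b, a ≠ b → ¬ Reach χ (v a) (v b)

theorem Sat.rest {k : ℕ} (pos : Fin k ↪ ι) {φ : ι → V × V × Λ} {l : Λ → G} (h : Sat l φ) :
    Sat l (rest pos φ) := by
  obtain ⟨Y, hY⟩ := h
  exact ⟨Y, fun i => hY _⟩

theorem exists_pot (h2 : ∀ g : G, g + g = 0) {k : ℕ} (d : Fin k → G) :
    ∃ c : Fin (k + 1) → G, ∀ a : Fin k, c a.castSucc + c a.succ = d a := by
  induction k with
  | zero => exact ⟨fun _ => 0, fun a => a.elim0⟩
  | succ k ih =>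
    obtain ⟨c, hc⟩ := ih (fun a => d a.castSucc)
    refine ⟨Fin.snoc c (c (Fin.last k) + d (Fin.last k)), fun a => ?_⟩
    refine Fin.lastCases ?_ (fun a => ?_) a
    · rw [Fin.snoc_castSucc, Fin.succ_last, Fin.snoc_last, ← add_assoc, h2, zero_add]
    · rw [Fin.snoc_castSucc, Fin.succ_castSucc, Fin.snoc_castSucc]
      exact hc a

theorem det_lower (h2 : ∀ g : G, g + g = 0) (l : Λ → G) (e : V × V × Λ) (φ : ι → V × V × Λ)
    {k : ℕ} (v : Fin (k + 1) ↪ V) (pos : Fin k ↪ ι)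
    (h0 : e.1 = v 0) (hk : e.2.1 = v (Fin.last k)) (hp : IsPth v (fun a => φ (pos a)))
    (hl : ∑ a, l (φ (pos a)).2.2 + l e.2.2 ≠ 0)
    (hs : Sat l (rest pos φ)) (hc : NoConn v (rest pos φ)) : Sat l φ ∧ ¬ SatE l e φ := by
  classical
  constructor
  · obtain ⟨Y, hY⟩ := hs
    obtain ⟨c, hcc⟩ := exists_pot h2 (fun a => l (φ (pos a)).2.2)
    let D : V → G := fun u => ∑ a, if Reach (rest pos φ) (v a) u then c a + Y (v a) else 0
    have hD : ∀ b, Y (v b) + D (v b) = c b := by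
      intro b
      have : D (v b) = c b + Y (v b) := by
        simp only [D]
        rw [Finset.sum_eq_single b]
        · rw [if_pos (show Reach (rest pos φ) (v b) (v b) from Relation.ReflTransGen.refl)]
        · intro a _ hab
          rw [if_neg (hc a b hab)]
        · simp
      rw [this, add_comm (c b), ← add_assoc, h2, zero_add]
    refine ⟨fun u => Y u + D u, fun i => ?_⟩
    by_cases hi : i ∈ Set.range pos
    · obtain ⟨a, rfl⟩ := hi
      unfold Good
      beta_reduce
      rcases hp a with ⟨h, h'⟩ | ⟨h, h'⟩
      · beta_reduce at h h'
        rw [h, h', hD, hD, hcc]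
      · beta_reduce at h h'
        rw [h, h', hD, hD, add_comm, hcc]
    · have h1 := hY ⟨i, hi⟩
      have h3 : D (φ i).1 = D (φ i).2.1 := by
        apply Finset.sum_congr rfl
        intro a _
        have := reach_iff_of_joins (joins_self (rest pos φ ⟨i, hi⟩)) (v a)
        simp only [rest] at this ⊢
        simp only [this]
      unfold Good rest at *
      beta_reduce
      rw [← h1, h3, add_add_add_comm, h2, add_zero]
  · rintro ⟨Y, hY, he⟩
    have := path_label h2 l Y hp (fun a => hY _)
    rw [← h0, ← hk, he] at this
    rw [← this] at hl
    exact hl (h2 _)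

theorem bridge (φ : ι → V × V × Λ)
    {k : ℕ} (v : Fin (k + 1) ↪ V) (pos : Fin k ↪ ι)
    (hp : IsPth v (fun a => φ (pos a))) (hc : NoConn v (rest pos φ))
    {k' : ℕ} (v' : Fin (k' + 1) ↪ V) (pos' : Fin k' ↪ ι)
    (hp' : IsPth v' (fun a => φ (pos' a)))
    (h0 : v' 0 = v 0) (hk : v' (Fin.last k') = v (Fin.last k)) (j : Fin k) :
    pos j ∈ Set.range pos' := by
  classical
  by_contra hj
  let side : V → Prop := fun u => ∃ a : Fin (k + 1), j.castSucc < a ∧ Reach (rest pos φ) (v a) u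
  have hside : ∀ b, side (v b) ↔ j.castSucc < b := by
    intro b
    constructor
    · rintro ⟨a, ha, hr⟩
      by_cases hab : a = b
      · exact hab ▸ ha
      · exact absurd hr (hc a b hab)
    · intro hb
      exact ⟨b, hb, Relation.ReflTransGen.refl⟩
  have hstep : ∀ i u w, i ≠ pos j → Joins (φ i) u w → (side u ↔ side w) := by
    intro i u w hij hJ
    by_cases hi : i ∈ Set.range pos
    · obtain ⟨a, rfl⟩ := hi
      have haj : a ≠ j := fun h => hij (by rw [h])
      have hva : side (v a.castSucc) ↔ side (v a.succ) := by
        rw [hside, hside, Fin.lt_def, Fin.lt_def]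
        have : (a : ℕ) ≠ j := fun h => haj (Fin.ext h)
        simp
        omega
      have := hp a
      unfold Joins at this hJ
      grind
    · have : Joins (rest pos φ ⟨i, hi⟩) u w := hJ
      simp only [side, reach_iff_of_joins this]
  have hall : ∀ b : Fin (k' + 1), side (v' b) ↔ side (v' 0) := by
    intro b
    induction b using Fin.induction with
    | zero => rfl
    | succ a ih =>
      rw [← ih]
      exact (hstep (pos' a) _ _ (fun h => hj ⟨a, h⟩) (hp' a)).symm
  have h5 := hall (Fin.last k')
  rw [hk, h0, hside, hside] at h5
  have h6 : j.castSucc < Fin.last k := Fin.castSucc_lt_last j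
  have h7 := h5.1 h6
  exact absurd h7 (Fin.not_lt_zero _)

theorem path_unique (φ : ι → V × V × Λ)
    {k : ℕ} (v : Fin (k + 1) ↪ V) (pos : Fin k ↪ ι)
    (hp : IsPth v (fun a => φ (pos a))) (hc : NoConn v (rest pos φ))
    {k' : ℕ} (v' : Fin (k' + 1) ↪ V) (pos' : Fin k' ↪ ι)
    (hp' : IsPth v' (fun a => φ (pos' a))) (hc' : NoConn v' (rest pos' φ))
    (h0 : v' 0 = v 0) (hk : v' (Fin.last k') = v (Fin.last k)) :
    (⟨k, v, pos⟩ : Σ k : ℕ, (Fin (k + 1) ↪ V) × (Fin k ↪ ι)) = ⟨k', v', pos'⟩ := by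
  classical
  have h1 := bridge φ v pos hp hc v' pos' hp' h0 hk
  have h3 := bridge φ v' pos' hp' hc' v pos hp h0.symm hk.symm
  have hle : ∀ {a b : ℕ} (f : Fin a ↪ ι) (g : Fin b ↪ ι), (∀ j, f j ∈ Set.range g) → a ≤ b := by
    intro a b f g h
    choose s hs using h
    have : Function.Injective s := by
      intro x y hxy
      apply f.injective
      rw [← hs, ← hs, hxy]
    simpa using Fintype.card_le_of_injective s this
  have hkk : k = k' := le_antisymm (hle _ _ h1) (hle _ _ h3)
  subst hkk
  have key : ∀ b : Fin (k + 1), v' b = v b ∧ ∀ a : Fin k, a.castSucc < b → pos' a = pos a := by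
    intro b
    induction b using Fin.induction with
    | zero => exact ⟨h0, fun a ha => absurd ha (Fin.not_lt_zero _)⟩
    | succ a ih =>
      obtain ⟨j, hj⟩ := h3 a
      have hja : j = a := by
        have hJ' := hp' a
        have hJ := hp j
        simp only [hj] at hJ
        rw [ih.1] at hJ'
        have : v a.castSucc = v j.castSucc ∨ v a.castSucc = v j.succ := by
          unfold Joins at hJ hJ'
          grind
        rcases this with h | h
        · exact (Fin.castSucc_injective _ (v.injective h)).symm
        · have h4 := v.injective h
          have h5 : j.castSucc < a.castSucc := by rw [h4]; exact Fin.castSucc_lt_succ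
          have h6 := ih.2 j h5
          rw [hj] at h6
          exact pos'.injective h6.symm ▸ rfl
      subst hja
      refine ⟨?_, ?_⟩
      · have hJ' := hp' j
        have hJ := hp j
        simp only [hj] at hJ
        rw [ih.1] at hJ'
        have hne : v j.castSucc ≠ v j.succ := fun h => by
          have := v.injective h
          exact absurd this (Fin.castSucc_lt_succ).ne
        unfold Joins at hJ hJ'
        grind
      · intro a ha
        rcases lt_trichotomy a j with h | h | h
        · exact ih.2 a (by simpa using h)
        · rw [h, hj]
        · rw [Fin.lt_def] at ha h
          simp at ha
          omega
  have hv : v = v' := by ext b; exact (key b).1.symm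
  have hpp : pos = pos' := by
    ext a
    exact ((key (Fin.last k)).2 a (Fin.castSucc_lt_last a)).symm
  rw [hv, hpp]

end det

set_option linter.unusedSectionVars false

open Classical in
/-- real-valued indicator -/
def ind (p : Prop) : ℝ := if p then 1 else 0

theorem ind_nonneg (p : Prop) : 0 ≤ ind p := by unfold ind; split_ifs <;> norm_num
theorem ind_le_one (p : Prop) : ind p ≤ 1 := by unfold ind; split_ifs <;> norm_num
theorem ind_true {p : Prop} (h : p) : ind p = 1 := by simp [ind, h]
theorem ind_false {p : Prop} (h : ¬ p) : ind p = 0 := by simp [ind, h]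
theorem ind_and (p q : Prop) : ind (p ∧ q) = ind p * ind q := by
  unfold ind; split_ifs <;> simp_all
theorem ind_mono {p q : Prop} (h : p → q) : ind p ≤ ind q := by
  by_cases hp : p
  · rw [ind_true hp, ind_true (h hp)]
  · rw [ind_false hp]; exact ind_nonneg _

theorem ind_le_sum {X : Type} (s : Finset X) (P : X → Prop) (q : Prop)
    (h : q → ∃ x ∈ s, P x) : ind q ≤ ∑ x ∈ s, ind (P x) := by
  by_cases hq : q
  · obtain ⟨x, hx, hp⟩ := h hq
    rw [ind_true hq, ← ind_true hp]
    exact Finset.single_le_sum (f := fun x => ind (P x)) (fun _ _ => ind_nonneg _) hx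
  · rw [ind_false hq]; exact Finset.sum_nonneg fun _ _ => ind_nonneg _

theorem sum_le_ind {X : Type} (s : Finset X) (P : X → Prop) (q : Prop)
    (h : ∀ x ∈ s, P x → q) (hu : ∀ x ∈ s, ∀ y ∈ s, P x → P y → x = y) :
    ∑ x ∈ s, ind (P x) ≤ ind q := by
  by_cases hx : ∃ x ∈ s, P x
  · obtain ⟨x, hx, hp⟩ := hx
    rw [Finset.sum_eq_single_of_mem x hx, ind_true hp, ind_true (h x hx hp)]
    intro y hy hyx
    exact ind_false fun hpy => hyx (hu y hy x hx hpy hp)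
  · push Not at hx
    rw [Finset.sum_eq_zero fun x hxs => ind_false (hx x hxs)]
    exact ind_nonneg _

section cnt
variable {V Λ G : Type} [Fintype V] [DecidableEq V] [Fintype Λ] [AddCommGroup G]
variable {ι : Type} [Fintype ι] [DecidableEq ι]

theorem indep {E : Type} [Fintype E] {k : ℕ} (pos : Fin k ↪ ι) (A : (Fin k → E) → ℝ)
    [Fintype ↥((Set.range pos)ᶜ)] [DecidableEq ↥((Set.range pos)ᶜ)]
    (B : (↥((Set.range pos)ᶜ) → E) → ℝ) :
    ∑ φ : ι → E, A (fun a => φ (pos a)) * B (fun i => φ i) = (∑ ψ, A ψ) * ∑ χ, B χ := by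
  classical
  let q : (Fin k ⊕ ↥((Set.range pos)ᶜ)) ≃ ι :=
    (Equiv.sumCongr (Equiv.ofInjective pos pos.injective) (Equiv.refl _)).trans
      (Equiv.Set.sumCompl (Set.range pos))
  let Q : (ι → E) ≃ (Fin k → E) × (↥((Set.range pos)ᶜ) → E) :=
    (Equiv.arrowCongr q.symm (Equiv.refl E)).trans (Equiv.sumArrowEquivProdArrow _ _ _)
  rw [Fintype.sum_mul_sum, ← Fintype.sum_prod_type', ← Equiv.sum_comp Q]
  apply Finset.sum_congr rfl
  intro φ _
  rfl

theorem sum_path {k : ℕ} (v : Fin (k + 1) ↪ V) (F : (Fin k → Λ) → ℝ) :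
    ∑ ψ : Fin k → V × V × Λ, ind (IsPth v ψ) * F (fun a => (ψ a).2.2) =
      2 ^ k * ∑ lab, F lab := by
  classical
  let Φ : (Fin k → Bool × Λ) → (Fin k → V × V × Λ) := fun x a =>
    if (x a).1 then (v a.castSucc, v a.succ, (x a).2) else (v a.succ, v a.castSucc, (x a).2)
  have hne : ∀ a : Fin k, v a.castSucc ≠ v a.succ := fun a h =>
    absurd (v.injective h) (Fin.castSucc_lt_succ).ne
  have hΦ : Function.Injective Φ := by
    intro x y hxy
    funext a
    have := congrFun hxy a
    have h1 := hne a
    simp only [Φ] at this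
    ext
    · split_ifs at this <;> simp_all
    · split_ifs at this <;> simp_all
  have hlab : ∀ x a, (Φ x a).2.2 = (x a).2 := by
    intro x a; simp only [Φ]; split_ifs <;> rfl
  have hP : ∀ x, IsPth v (Φ x) := by
    intro x a
    simp only [Φ, Joins]
    split_ifs
    · exact Or.inl ⟨rfl, rfl⟩
    · exact Or.inr ⟨rfl, rfl⟩
  rw [← Fintype.sum_of_injective Φ hΦ (fun x => F (fun a => (x a).2))]
  · rw [← Equiv.sum_comp (Equiv.arrowProdEquivProdArrow (Fin k) (fun _ => Bool) (fun _ => Λ)).symm,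
      Fintype.sum_prod_type]
    simp [Equiv.arrowProdEquivProdArrow]
  · intro ψ hψ
    rw [ind_false, zero_mul]
    intro hp
    apply hψ
    refine ⟨fun a => (decide ((ψ a).1 = v a.castSucc), (ψ a).2.2), ?_⟩
    funext a
    have := hp a
    have h1 := hne a
    simp only [Φ]
    rcases this with ⟨h, h'⟩ | ⟨h, h'⟩
    · simp [h]
      ext <;> simp [h, h']
    · simp [h, h1.symm]
      ext <;> simp [h, h']
  · intro x
    rw [ind_true (hP x), one_mul]
    simp only [hlab]

def Base (l : Λ → G) {k : ℕ} (v : Fin (k + 1) ↪ V) (e : V × V × Λ) (ψ : Fin k → V × V × Λ) : Prop :=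
  e.1 = v 0 ∧ e.2.1 = v (Fin.last k) ∧ IsPth v ψ ∧ ∑ a, l (ψ a).2.2 + l e.2.2 ≠ 0

def W (l : Λ → G) (k : ℕ) : ℝ := ∑ lab : Fin k → Λ, ∑ x : Λ, ind (∑ a, l (lab a) + l x ≠ 0)

theorem sum_base (l : Λ → G) {k : ℕ} (v : Fin (k + 1) ↪ V) :
    ∑ ψ : Fin k → V × V × Λ, ∑ e : V × V × Λ, ind (Base l v e ψ) = 2 ^ k * W l k := by
  classical
  unfold W
  rw [← sum_path v (fun lab => ∑ x : Λ, ind (∑ a, l (lab a) + l x ≠ 0))]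
  apply Finset.sum_congr rfl
  intro ψ _
  rw [Fintype.sum_prod_type, Finset.sum_eq_single_of_mem (v 0) (Finset.mem_univ _),
    Fintype.sum_prod_type, Finset.sum_eq_single_of_mem (v (Fin.last k)) (Finset.mem_univ _),
    Finset.mul_sum]
  · apply Finset.sum_congr rfl
    intro x _
    rw [← ind_and]
    simp [Base]
  · intro y _ hy
    apply Finset.sum_eq_zero
    intro x _
    apply ind_false
    intro h
    exact hy h.2.1
  · intro y _ hy
    apply Finset.sum_eq_zero
    intro x _
    apply ind_false
    intro h
    exact hy h.1

/-- number of satisfiable formulas on index type ι -/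
def SC (V ι : Type) [Fintype V] [DecidableEq V] [Fintype ι] [DecidableEq ι] (l : Λ → G) : ℝ :=
  ∑ φ : ι → V × V × Λ, ind (Sat l φ)

theorem SC_congr {κ : Type} [Fintype κ] [DecidableEq κ] (l : Λ → G)
    (h : Fintype.card ι = Fintype.card κ) : SC V ι l = SC V κ l := by
  have q := Fintype.equivOfCardEq h
  unfold SC
  rw [← Equiv.sum_comp (Equiv.arrowCongr q (Equiv.refl _))]
  apply Finset.sum_congr rfl
  intro φ _
  congr 1
  apply propext
  constructor
  · rintro ⟨Y, hY⟩
    exact ⟨Y, fun i => by simpa using hY (q.symm i)⟩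
  · rintro ⟨Y, hY⟩
    exact ⟨Y, fun i => by simpa using hY (q i)⟩

/-- probability of satisfiability -/
def PS (V : Type) [Fintype V] [DecidableEq V] (l : Λ → G) (m : ℕ) : ℝ :=
  SC V (Fin m) l / (Fintype.card (V × V × Λ) : ℝ) ^ m

theorem sum_step (l : Λ → G) (m : ℕ) :
    (Fintype.card (V × V × Λ) : ℝ) * SC V (Fin m) l - SC V (Fin (m + 1)) l =
      ∑ φ : Fin m → V × V × Λ, ∑ e, ind (Sat l φ ∧ ¬ SatE l e φ) := by
  have h1 : SC V (Fin (m + 1)) l = ∑ φ : Fin m → V × V × Λ, ∑ e, ind (SatE l e φ) := by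
    unfold SC
    rw [← Equiv.sum_comp (Fin.consEquiv (fun _ => V × V × Λ)), Fintype.sum_prod_type_right]
    apply Finset.sum_congr rfl
    intro φ _
    apply Finset.sum_congr rfl
    intro e _
    congr 1
    apply propext
    simp [Sat, SatE, Fin.forall_fin_succ, Fin.consEquiv, and_comm]
  have h2 : (Fintype.card (V × V × Λ) : ℝ) * SC V (Fin m) l =
      ∑ φ : Fin m → V × V × Λ, ∑ e : V × V × Λ, ind (Sat l φ) := by
    simp only [SC, Finset.sum_const, Finset.mul_sum, nsmul_eq_mul, Finset.card_univ]
  rw [h1, h2, ← Finset.sum_sub_distrib]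
  apply Finset.sum_congr rfl
  intro φ _
  rw [← Finset.sum_sub_distrib]
  apply Finset.sum_congr rfl
  intro e _
  by_cases h : SatE l e φ
  · have h' : Sat l φ := by
      obtain ⟨Y, hY, _⟩ := h
      exact ⟨Y, hY⟩
    rw [ind_true h, ind_true h', ind_false (fun H => H.2 h)]
    norm_num
  · rw [ind_false h, sub_zero]
    congr 1
    simp [h]

theorem card_rest {k : ℕ} (pos : Fin k ↪ ι) [Fintype ↥((Set.range pos)ᶜ)] :
    Fintype.card ↥((Set.range pos)ᶜ) = Fintype.card ι - k := by
  classical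
  rw [Fintype.card_compl_set, Set.card_range_of_injective pos.injective, Fintype.card_fin]

theorem sum_fixed (l : Λ → G) {k : ℕ} (v : Fin (k + 1) ↪ V) (pos : Fin k ↪ ι)
    [Fintype ↥((Set.range pos)ᶜ)] [DecidableEq ↥((Set.range pos)ᶜ)]
    (B : (↥((Set.range pos)ᶜ) → V × V × Λ) → ℝ) :
    ∑ φ : ι → V × V × Λ, ∑ e, ind (Base l v e (fun a => φ (pos a))) * B (rest pos φ) =
      2 ^ k * W l k * ∑ χ, B χ := by
  rw [← sum_base l v, ← indep]
  apply Finset.sum_congr rfl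
  intro φ _
  rw [Finset.sum_mul]
  rfl

theorem emb_le {k : ℕ} (pos : Fin k ↪ ι) : k ≤ Fintype.card ι := by
  simpa using Fintype.card_le_of_injective pos pos.injective

theorem sum_swap {X Y A B : Type} [Fintype X] [Fintype Y] [Fintype A] [Fintype B]
    (f : A → B → X → Y → ℝ) :
    ∑ a, ∑ b, ∑ x, ∑ y, f a b x y = ∑ x, ∑ y, ∑ a, ∑ b, f a b x y := by
  calc _ = ∑ p : A × B, ∑ q : X × Y, f p.1 p.2 q.1 q.2 := by
        simp only [Fintype.sum_prod_type]
    _ = _ := by rw [Finset.sum_comm]; simp only [Fintype.sum_prod_type]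

theorem count_upper (h2 : ∀ g : G, g + g = 0) (l : Λ → G) (m : ℕ) :
    (Fintype.card (V × V × Λ) : ℝ) * SC V (Fin m) l - SC V (Fin (m + 1)) l ≤
      ∑ k ∈ Finset.range (Fintype.card V),
        ((Fintype.card V).descFactorial (k + 1) : ℝ) * (m.descFactorial k : ℝ) *
          (2 ^ k * W l k * SC V (Fin (m - k)) l) := by
  classical
  rw [sum_step]
  have h : ∀ (φ : Fin m → V × V × Λ) (e : V × V × Λ), ind (Sat l φ ∧ ¬ SatE l e φ) ≤
      ∑ k ∈ Finset.range (Fintype.card V), ∑ v : Fin (k + 1) ↪ V, ∑ pos : Fin k ↪ Fin m,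
        ind (Base l v e (fun a => φ (pos a))) * ind (Sat l (rest pos φ)) := by
    intro φ e
    have := ind_le_sum ((Finset.range (Fintype.card V)).sigma
      (fun k => (Finset.univ : Finset ((Fin (k + 1) ↪ V) × (Fin k ↪ Fin m)))))
      (fun x => Base l x.2.1 e (fun a => φ (x.2.2 a)) ∧ Sat l (rest x.2.2 φ))
      (Sat l φ ∧ ¬ SatE l e φ) (by
        rintro ⟨hs, hn⟩
        obtain ⟨k, v, pos, hb⟩ := det_upper h2 l e φ hs hn
        refine ⟨⟨k, v, pos⟩, ?_, hb, hs.rest pos⟩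
        have := emb_le v
        simp
        omega)
    refine this.trans (le_of_eq ?_)
    rw [Finset.sum_sigma]
    apply Finset.sum_congr rfl
    intro k _
    rw [Fintype.sum_prod_type]
    simp only [ind_and]
  refine (Finset.sum_le_sum fun φ _ => Finset.sum_le_sum fun e _ => h φ e).trans (le_of_eq ?_)
  simp_rw [Finset.sum_comm (t := Finset.range (Fintype.card V))]
  apply Finset.sum_congr rfl
  intro k _
  rw [sum_swap]
  have : ∀ (v : Fin (k + 1) ↪ V) (pos : Fin k ↪ Fin m),
      ∑ φ : Fin m → V × V × Λ, ∑ e, ind (Base l v e (fun a => φ (pos a))) * ind (Sat l (rest pos φ))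
        = 2 ^ k * W l k * SC V (Fin (m - k)) l := by
    intro v pos
    rw [sum_fixed l v pos (fun χ => ind (Sat l χ))]
    congr 1
    exact SC_congr l (by rw [card_rest]; simp)
  simp only [this, Finset.sum_const, Finset.card_univ, Fintype.card_embedding_eq, nsmul_eq_mul,
    Fintype.card_fin]
  ring

theorem count_endpoints {k : ℕ} {u w : V} (huw : u ≠ w) :
    ∑ v : Fin (k + 1) ↪ V, ind (v 0 = u ∧ v (Fin.last k) = w) ≤
      (Fintype.card V : ℝ) ^ k / Fintype.card V := by
  classical
  cases k with
  | zero =>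
    rw [Finset.sum_eq_zero]
    · positivity
    · intro v _
      apply ind_false
      rintro ⟨h, h'⟩
      exact huw (by rw [← h, ← h']; rfl)
  | succ k =>
    have hV : (0 : ℝ) < Fintype.card V := by
      exact_mod_cast Fintype.card_pos_iff.2 ⟨u⟩
    rw [pow_succ, mul_div_assoc, div_self hV.ne', mul_one]
    have : ∑ v : Fin (k + 1 + 1) ↪ V, ind (v 0 = u ∧ v (Fin.last (k + 1)) = w) =
        ((Finset.univ.filter fun v : Fin (k + 1 + 1) ↪ V => v 0 = u ∧ v (Fin.last (k + 1)) = w).card : ℝ) := by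
      rw [Finset.card_filter]
      push_cast
      apply Finset.sum_congr rfl
      intro v _
      by_cases h : v 0 = u ∧ v (Fin.last (k + 1)) = w
      · rw [ind_true h, if_pos h]
      · rw [ind_false h, if_neg h]
    rw [this]
    have h2 : (Fintype.card V : ℝ) ^ k = ((Finset.univ : Finset (Fin k → V)).card : ℝ) := by
      simp
    rw [h2]
    norm_cast
    apply Finset.card_le_card_of_injOn (fun v => fun a : Fin k => v a.castSucc.succ)
    · intro v _; simp
    · intro v hv v' hv' heq
      simp at hv hv'
      ext b
      refine Fin.cases ?_ (fun b => ?_) b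
      · rw [hv.1, hv'.1]
      · refine Fin.lastCases ?_ (fun c => ?_) b
        · rw [Fin.succ_last]; exact hv.2.trans hv'.2.symm
        · exact congrFun heq c

theorem count_reach {u w : V} (huw : u ≠ w) [Nonempty Λ] :
    ∑ χ : ι → V × V × Λ, ind (Reach χ u w) ≤
      (Fintype.card (V × V × Λ) : ℝ) ^ (Fintype.card ι) *
      ((1 / (Fintype.card V : ℝ)) * ∑ k ∈ Finset.range (Fintype.card V),
        (2 * (Fintype.card ι : ℝ) / Fintype.card V) ^ k) := by
  classical
  have hV : (0 : ℝ) < Fintype.card V := by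
    exact_mod_cast Fintype.card_pos_iff.2 ⟨u⟩
  have hL : (0 : ℝ) < Fintype.card Λ := by
    exact_mod_cast Fintype.card_pos
  have h : ∀ (χ : ι → V × V × Λ), ind (Reach χ u w) ≤
      ∑ k ∈ Finset.range (Fintype.card V), ∑ v : Fin (k + 1) ↪ V, ∑ pos : Fin k ↪ ι,
        ind (v 0 = u ∧ v (Fin.last k) = w) * ind (IsPth v (fun a => χ (pos a))) := by
    intro χ
    have := ind_le_sum ((Finset.range (Fintype.card V)).sigma
      (fun k => (Finset.univ : Finset ((Fin (k + 1) ↪ V) × (Fin k ↪ ι)))))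
      (fun x => (x.2.1 0 = u ∧ x.2.1 (Fin.last x.1) = w) ∧ IsPth x.2.1 (fun a => χ (x.2.2 a)))
      (Reach χ u w) (by
        intro hr
        obtain ⟨k, v, pos, h0, hk, hb⟩ := exists_path hr
        refine ⟨⟨k, v, pos⟩, ?_, ⟨h0, hk⟩, hb⟩
        have := emb_le v
        simp
        omega)
    refine this.trans (le_of_eq ?_)
    rw [Finset.sum_sigma]
    apply Finset.sum_congr rfl
    intro k _
    rw [Fintype.sum_prod_type]
    simp only [ind_and]
  refine (Finset.sum_le_sum fun φ _ => h φ).trans ?_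
  rw [Finset.sum_comm, Finset.mul_sum, Finset.mul_sum]
  apply Finset.sum_le_sum
  intro k _
  have h3 : ∀ (v : Fin (k + 1) ↪ V) (pos : Fin k ↪ ι),
      ∑ χ : ι → V × V × Λ, ind (IsPth v (fun a => χ (pos a))) =
        2 ^ k * (Fintype.card Λ : ℝ) ^ k * (Fintype.card (V × V × Λ) : ℝ) ^ (Fintype.card ι - k) := by
    intro v pos
    have h1 := indep (E := V × V × Λ) pos (fun ψ => ind (IsPth v ψ)) (fun _ => 1)
    have h2 := sum_path (Λ := Λ) v (fun _ => 1)
    simp only [mul_one, Finset.sum_const, nsmul_eq_mul, Finset.card_univ, Fintype.card_fun,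
      Fintype.card_fin, card_rest, Nat.cast_pow] at h1 h2
    rw [h1, h2]
  calc _ = ∑ v : Fin (k + 1) ↪ V, ∑ pos : Fin k ↪ ι, ind (v 0 = u ∧ v (Fin.last k) = w) *
        ∑ χ : ι → V × V × Λ, ind (IsPth v (fun a => χ (pos a))) := by
        rw [Finset.sum_comm]
        apply Finset.sum_congr rfl
        intro v _
        rw [Finset.sum_comm]
        simp only [Finset.mul_sum]
    _ = (∑ v : Fin (k + 1) ↪ V, ind (v 0 = u ∧ v (Fin.last k) = w)) *
        (((Fintype.card ι).descFactorial k : ℝ) * (2 ^ k * (Fintype.card Λ : ℝ) ^ k *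
          (Fintype.card (V × V × Λ) : ℝ) ^ (Fintype.card ι - k))) := by
        simp only [h3, Finset.sum_const, nsmul_eq_mul, Finset.card_univ,
          Fintype.card_embedding_eq, Fintype.card_fin]
        rw [Finset.sum_mul]
        apply Finset.sum_congr rfl
        intro v _
        ring
    _ ≤ ((Fintype.card V : ℝ) ^ k / Fintype.card V) *
        (((Fintype.card ι : ℝ)^ k) * (2 ^ k * (Fintype.card Λ : ℝ) ^ k *
          ((Fintype.card (V × V × Λ) : ℝ) ^ (Fintype.card ι) / (Fintype.card (V × V × Λ) : ℝ) ^ k))) := by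
        apply mul_le_mul (count_endpoints huw) _ (by positivity) (by positivity)
        by_cases hk : k ≤ Fintype.card ι
        · have hE : (Fintype.card (V × V × Λ) : ℝ) ≠ 0 := by
            simp only [Fintype.card_prod]; push_cast; positivity
          rw [pow_sub₀ _ hE hk, ← div_eq_mul_inv]
          gcongr
          exact_mod_cast Nat.descFactorial_le_pow _ _
        · rw [Nat.descFactorial_of_lt (by omega)]
          simp only [Nat.cast_zero, zero_mul]
          positivity
    _ = _ := by
        simp only [Fintype.card_prod]
        push_cast
        simp only [div_pow, mul_pow]
        field_simp

theorem count_lower (h2 : ∀ g : G, g + g = 0) (l : Λ → G) (m K : ℕ) [Nonempty Λ] :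
      ∑ k ∈ Finset.range K,
        ((Fintype.card V).descFactorial (k + 1) : ℝ) * (m.descFactorial k : ℝ) *
          (2 ^ k * W l k * (SC V (Fin (m - k)) l -
            (k + 1) ^ 2 * ((Fintype.card (V × V × Λ) : ℝ) ^ (m - k) *
      ((1 / (Fintype.card V : ℝ)) * ∑ k ∈ Finset.range (Fintype.card V),
        (2 * (m : ℝ) / Fintype.card V) ^ k)))) ≤
    (Fintype.card (V × V × Λ) : ℝ) * SC V (Fin m) l - SC V (Fin (m + 1)) l := by
  classical
  rw [sum_step]
  have h : ∀ (φ : Fin m → V × V × Λ) (e : V × V × Λ), 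
      ∑ k ∈ Finset.range K, ∑ v : Fin (k + 1) ↪ V, ∑ pos : Fin k ↪ Fin m,
        ind (Base l v e (fun a => φ (pos a))) * ind (Sat l (rest pos φ) ∧ NoConn v (rest pos φ)) ≤
        ind (Sat l φ ∧ ¬ SatE l e φ) := by
    intro φ e
    have := sum_le_ind ((Finset.range K).sigma
      (fun k => (Finset.univ : Finset ((Fin (k + 1) ↪ V) × (Fin k ↪ Fin m)))))
      (fun x => Base l x.2.1 e (fun a => φ (x.2.2 a)) ∧ Sat l (rest x.2.2 φ) ∧
        NoConn x.2.1 (rest x.2.2 φ))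
      (Sat l φ ∧ ¬ SatE l e φ) (by
        rintro ⟨k, v, pos⟩ _ ⟨hb, hs, hc⟩
        exact det_lower h2 l e φ v pos hb.1 hb.2.1 hb.2.2.1 hb.2.2.2 hs hc) (by
        rintro ⟨k, v, pos⟩ _ ⟨k', v', pos'⟩ _ ⟨hb, hs, hc⟩ ⟨hb', hs', hc'⟩
        exact path_unique φ v pos hb.2.2.1 hc v' pos' hb'.2.2.1 hc' (hb'.1.symm.trans hb.1)
          (hb'.2.1.symm.trans hb.2.1))
    refine (le_of_eq ?_).trans this
    rw [Finset.sum_sigma]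
    apply Finset.sum_congr rfl
    intro k _
    rw [Fintype.sum_prod_type]
    simp only [ind_and (Base _ _ _ _)]
  refine le_trans ?_ (Finset.sum_le_sum fun φ _ => Finset.sum_le_sum fun e _ => h φ e)
  simp_rw [Finset.sum_comm (t := Finset.range K)]
  apply Finset.sum_le_sum
  intro k _
  rw [sum_swap]
  have hW : 0 ≤ W l k := Finset.sum_nonneg fun _ _ => Finset.sum_nonneg fun _ _ => ind_nonneg _
  set R := (SC V (Fin (m - k)) l -
            (k + 1) ^ 2 * ((Fintype.card (V × V × Λ) : ℝ) ^ (m - k) *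
      ((1 / (Fintype.card V : ℝ)) * ∑ k ∈ Finset.range (Fintype.card V),
        (2 * (m : ℝ) / Fintype.card V) ^ k))) with hR
  have : ∀ (v : Fin (k + 1) ↪ V) (pos : Fin k ↪ Fin m),
      2 ^ k * W l k * R ≤
      ∑ φ : Fin m → V × V × Λ, ∑ e, ind (Base l v e (fun a => φ (pos a))) *
        ind (Sat l (rest pos φ) ∧ NoConn v (rest pos φ)) := by
    intro v pos
    rw [sum_fixed l v pos (fun χ => ind (Sat l χ ∧ NoConn v χ))]
    apply mul_le_mul_of_nonneg_left _ (by positivity)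
    have h5 : SC V (Fin (m - k)) l = SC V (↥((Set.range pos)ᶜ)) l :=
      SC_congr l (by rw [card_rest]; simp)
    rw [hR, h5, SC, sub_le_iff_le_add]
    have h6 : ∀ χ : ↥((Set.range pos)ᶜ) → V × V × Λ, ind (Sat l χ) ≤
        ind (Sat l χ ∧ NoConn v χ) + ∑ a, ∑ b, ind (a ≠ b ∧ Reach χ (v a) (v b)) := by
      intro χ
      by_cases hc : NoConn v χ
      · have : ind (Sat l χ) = ind (Sat l χ ∧ NoConn v χ) := by simp [hc]
        rw [this]
        apply le_add_of_nonneg_right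
        exact Finset.sum_nonneg fun _ _ => Finset.sum_nonneg fun _ _ => ind_nonneg _
      · have h8 : ∃ a b, a ≠ b ∧ Reach χ (v a) (v b) := by
          unfold NoConn at hc
          push Not at hc
          exact hc
        obtain ⟨a, b, hab⟩ := h8
        have h9 : (1 : ℝ) ≤ ∑ a, ∑ b, ind (a ≠ b ∧ Reach χ (v a) (v b)) := by
          rw [← Fintype.sum_prod_type', ← ind_true hab]
          exact Finset.single_le_sum
            (f := fun x : Fin (k + 1) × Fin (k + 1) => ind (x.1 ≠ x.2 ∧ Reach χ (v x.1) (v x.2)))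
            (fun _ _ => ind_nonneg _) (Finset.mem_univ (a, b))
        have := ind_le_one (Sat l χ)
        have := ind_nonneg (Sat l χ ∧ NoConn v χ)
        linarith
    refine (Finset.sum_le_sum fun χ _ => h6 χ).trans ?_
    rw [Finset.sum_add_distrib]
    gcongr
    rw [Finset.sum_comm]
    set Z := ((Fintype.card (V × V × Λ) : ℝ) ^ (m - k) *
      ((1 / (Fintype.card V : ℝ)) * ∑ k ∈ Finset.range (Fintype.card V),
        (2 * (m : ℝ) / Fintype.card V) ^ k)) with hZ
    have h7 : ∀ a b : Fin (k + 1), ∑ χ : ↥((Set.range pos)ᶜ) → V × V × Λ,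
        ind (a ≠ b ∧ Reach χ (v a) (v b)) ≤ Z := by
      intro a b
      by_cases hab : a = b
      · rw [Finset.sum_eq_zero]
        · positivity
        · intro χ _
          exact ind_false fun h => h.1 hab
      · have := count_reach (ι := ↥((Set.range pos)ᶜ)) (Λ := Λ) (u := v a) (w := v b)
          (fun h => hab (v.injective h))
        rw [card_rest, Fintype.card_fin] at this
        refine (Finset.sum_le_sum fun χ _ => ind_mono (fun h => h.2)).trans (this.trans ?_)
        rw [hZ]
        gcongr
        exact Nat.sub_le _ _
    have h10 : ∀ a : Fin (k + 1), ∑ χ : ↥((Set.range pos)ᶜ) → V × V × Λ, ∑ b,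
        ind (a ≠ b ∧ Reach χ (v a) (v b)) ≤ (k + 1) * Z := by
      intro a
      rw [Finset.sum_comm]
      refine (Finset.sum_le_sum fun b _ => h7 a b).trans (le_of_eq ?_)
      simp
    refine (Finset.sum_le_sum fun a _ => h10 a).trans (le_of_eq ?_)
    simp
    ring
  refine le_trans (le_of_eq ?_) (Finset.sum_le_sum fun v _ => Finset.sum_le_sum fun pos _ => this v pos)
  simp only [Finset.sum_const, Finset.card_univ, Fintype.card_embedding_eq, nsmul_eq_mul,
    Fintype.card_fin]
  ring

end cnt

set_option linter.unusedSectionVars false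

def cc (n m k : ℕ) : ℝ :=
  (n.descFactorial (k + 1) : ℝ) * (m.descFactorial k : ℝ) * 2 ^ k / (n : ℝ) ^ (2 * k + 1)

section norm
variable {Λ G : Type} [Fintype Λ] [AddCommGroup G] [Nonempty Λ]

def ww (l : Λ → G) (k : ℕ) : ℝ := W l k / (Fintype.card Λ : ℝ) ^ (k + 1)

theorem cardE (n : ℕ) : (Fintype.card (Fin n × Fin n × Λ) : ℝ) = (n : ℝ) ^ 2 * Fintype.card Λ := by
  simp; ring

theorem ww_nonneg (l : Λ → G) (k : ℕ) : 0 ≤ ww l k :=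
  div_nonneg (Finset.sum_nonneg fun _ _ => Finset.sum_nonneg fun _ _ => ind_nonneg _) (by positivity)

theorem ww_le_one (l : Λ → G) (k : ℕ) : ww l k ≤ 1 := by
  classical
  have hL : (0 : ℝ) < Fintype.card Λ := by
    exact_mod_cast Fintype.card_pos
  unfold ww
  rw [div_le_one (by positivity)]
  unfold W
  refine (Finset.sum_le_sum fun _ _ => Finset.sum_le_sum fun _ _ => ind_le_one _).trans ?_
  simp [pow_succ]

theorem SC_nonneg {V ι : Type} [Fintype V] [DecidableEq V] [Fintype ι] [DecidableEq ι]
    (l : Λ → G) : 0 ≤ SC V ι l := Finset.sum_nonneg fun _ _ => ind_nonneg _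

theorem PS_nonneg (n : ℕ) (l : Λ → G) (m : ℕ) : 0 ≤ PS (Fin n) l m :=
  div_nonneg (SC_nonneg l) (by positivity)

theorem PS_le_one (n : ℕ) (hn : 1 ≤ n) (l : Λ → G) (m : ℕ) : PS (Fin n) l m ≤ 1 := by
  have hL : (0 : ℝ) < Fintype.card Λ := by
    exact_mod_cast Fintype.card_pos
  have hn' : (0 : ℝ) < n := by exact_mod_cast hn
  unfold PS
  rw [div_le_one (by rw [cardE]; positivity)]
  unfold SC
  refine (Finset.sum_le_sum fun _ _ => ind_le_one _).trans ?_
  simp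

theorem PS_zero (n : ℕ) (l : Λ → G) : PS (Fin n) l 0 = 1 := by
  unfold PS SC
  rw [pow_zero, div_one, Finset.sum_eq_card_nsmul (b := 1)]
  · simp
  · intro φ _
    exact ind_true ⟨fun _ => 0, fun i => i.elim0⟩

theorem term_eq (n : ℕ) (hn : 1 ≤ n) (l : Λ → G) (m k : ℕ) (x : ℝ) (q : ℝ)
    (hx : k ≤ m → x = q * (Fintype.card (Fin n × Fin n × Λ) : ℝ) ^ (m - k)) :
    (n : ℝ) * (((n.descFactorial (k + 1) : ℝ) * (m.descFactorial k : ℝ) *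
          (2 ^ k * W l k * x)) / (Fintype.card (Fin n × Fin n × Λ) : ℝ) ^ (m + 1)) =
      cc n m k * ww l k * q := by
  have hL : (0 : ℝ) < Fintype.card Λ := by
    exact_mod_cast Fintype.card_pos
  have hn' : (0 : ℝ) < n := by exact_mod_cast hn
  unfold cc ww
  by_cases hk : k ≤ m
  · rw [hx hk, cardE]
    have : m + 1 = (m - k) + (k + 1) := by omega
    rw [this, pow_add]
    rw [mul_pow _ _ (k + 1), ← pow_mul]
    have h2 : 2 * (k + 1) = (2 * k + 1) + 1 := by ring
    rw [h2, pow_succ (n : ℝ) (2 * k + 1)]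
    have : ((n : ℝ) ^ 2 * Fintype.card Λ) ^ (m - k) ≠ 0 := by positivity
    field_simp
  · rw [Nat.descFactorial_of_lt (by omega : m < k)]
    simp

theorem PS_step (n : ℕ) (hn : 1 ≤ n) (l : Λ → G) (m : ℕ) :
    (n : ℝ) * (PS (Fin n) l m - PS (Fin n) l (m + 1)) =
     (n : ℝ) * (((Fintype.card (Fin n × Fin n × Λ) : ℝ) * SC (Fin n) (Fin m) l -
      SC (Fin n) (Fin (m + 1)) l) / (Fintype.card (Fin n × Fin n × Λ) : ℝ) ^ (m + 1)) := by
  have hL : (0 : ℝ) < Fintype.card Λ := by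
    exact_mod_cast Fintype.card_pos
  have hn' : (0 : ℝ) < n := by exact_mod_cast hn
  unfold PS
  rw [cardE]
  field_simp
  ring

theorem PS_upper (h2 : ∀ g : G, g + g = 0) (n : ℕ) (hn : 1 ≤ n) (l : Λ → G) (m : ℕ) :
    (n : ℝ) * (PS (Fin n) l m - PS (Fin n) l (m + 1)) ≤
      ∑ k ∈ Finset.range n, cc n m k * ww l k * PS (Fin n) l (m - k) := by
  have hL : (0 : ℝ) < Fintype.card Λ := by
    exact_mod_cast Fintype.card_pos
  have hn' : (0 : ℝ) < n := by exact_mod_cast hn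
  have hE : (0 : ℝ) < (Fintype.card (Fin n × Fin n × Λ) : ℝ) := by rw [cardE]; positivity
  have h := count_upper (V := Fin n) h2 l m
  rw [PS_step n hn]
  have h' := mul_le_mul_of_nonneg_left
    (div_le_div_of_nonneg_right h (pow_nonneg hE.le (m + 1))) hn'.le
  refine h'.trans (le_of_eq ?_)
  rw [Finset.sum_div, Finset.mul_sum]
  simp only [Fintype.card_fin]
  apply Finset.sum_congr rfl
  intro k _
  apply term_eq n hn
  intro _
  unfold PS
  rw [div_mul_cancel₀ _ (pow_ne_zero _ hE.ne')]

theorem PS_lower (h2 : ∀ g : G, g + g = 0) (n : ℕ) (hn : 1 ≤ n) (l : Λ → G) (m K : ℕ) :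
    ∑ k ∈ Finset.range K, cc n m k * ww l k * (PS (Fin n) l (m - k) - (k + 1) ^ 2 * ((1 / n) *
      ∑ j ∈ Finset.range n, (2 * (m : ℝ) / n) ^ j)) ≤
    (n : ℝ) * (PS (Fin n) l m - PS (Fin n) l (m + 1)) := by
  have hL : (0 : ℝ) < Fintype.card Λ := by
    exact_mod_cast Fintype.card_pos
  have hn' : (0 : ℝ) < n := by exact_mod_cast hn
  have hE : (0 : ℝ) < (Fintype.card (Fin n × Fin n × Λ) : ℝ) := by rw [cardE]; positivity
  have h := count_lower (V := Fin n) h2 l m K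
  rw [PS_step n hn]
  have h' := mul_le_mul_of_nonneg_left
    (div_le_div_of_nonneg_right h (pow_nonneg hE.le (m + 1))) hn'.le
  refine (le_of_eq ?_).trans h'
  rw [Finset.sum_div]
  conv_rhs => rw [Finset.mul_sum]
  simp only [Fintype.card_fin]
  apply Finset.sum_congr rfl
  intro k _
  symm
  apply term_eq n hn
  intro _
  unfold PS
  have := pow_ne_zero (m - k) hE.ne'
  rw [sub_mul, div_mul_cancel₀ _ this]
  ring

end norm

theorem cc_nonneg (n m k : ℕ) : 0 ≤ cc n m k := by unfold cc; positivity

theorem cc_le (n m k : ℕ) (hn : 1 ≤ n) : cc n m k ≤ (2 * (m : ℝ) / n) ^ k := by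
  have hn' : (0 : ℝ) < n := by exact_mod_cast hn
  unfold cc
  have h1 : (n.descFactorial (k + 1) : ℝ) ≤ (n : ℝ) ^ (k + 1) := by
    exact_mod_cast Nat.descFactorial_le_pow _ _
  have h2 : (m.descFactorial k : ℝ) ≤ (m : ℝ) ^ k := by
    exact_mod_cast Nat.descFactorial_le_pow _ _
  rw [div_le_iff₀ (by positivity)]
  calc _ ≤ (n : ℝ) ^ (k + 1) * (m : ℝ) ^ k * 2 ^ k := by gcongr
    _ = _ := by
      rw [div_pow, mul_pow, show 2 * k + 1 = (k + 1) + k by ring, pow_add]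
      field_simp
      ring

theorem cc_succ (n m k : ℕ) (hn : 1 ≤ n) :
    cc n m (k + 1) = cc n m k * (((n - (k + 1) : ℕ) : ℝ) / n) * (2 * ((m - k : ℕ) : ℝ) / n) := by
  have hn' : (0 : ℝ) < n := by exact_mod_cast hn
  unfold cc
  rw [Nat.descFactorial_succ n (k + 1), Nat.descFactorial_succ m k]
  rw [show 2 * (k + 1) + 1 = (2 * k + 1) + 2 by ring, pow_add]
  push_cast
  field_simp
  ring

theorem cc_ge (n m : ℕ) (hn : 1 ≤ n) (τ : ℝ) (hτ0 : 0 < τ) (hτ1 : τ < 1)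
    (ht : 2 * (m : ℝ) / n ≤ τ) (k : ℕ) :
    (2 * (m : ℝ) / n) ^ k - 2 * (k : ℝ) ^ 2 * τ ^ k / (τ * n) ≤ cc n m k := by
  have hn' : (0 : ℝ) < n := by exact_mod_cast hn
  induction k with
  | zero =>
    unfold cc
    simp
    rw [div_self hn'.ne']
  | succ k ih =>
    rw [cc_succ _ _ _ hn]
    have ht0 : 0 ≤ 2 * (m : ℝ) / n := by positivity
    set t := 2 * (m : ℝ) / n with htdef
    have hc0 := cc_nonneg n m k
    have hc1 : cc n m k ≤ τ ^ k := (cc_le n m k hn).trans (pow_le_pow_left₀ ht0 ht k)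
    have h1 : (1 : ℝ) - (k + 1) / n ≤ ((n - (k + 1) : ℕ) : ℝ) / n := by
      rw [le_div_iff₀ hn', sub_mul, div_mul_cancel₀ _ hn'.ne']
      have : (n : ℝ) ≤ ((n - (k + 1) : ℕ) : ℝ) + (k + 1 : ℕ) := by
        exact_mod_cast (by omega : n ≤ (n - (k + 1)) + (k + 1))
      push_cast at this
      linarith
    have h1' : ((n - (k + 1) : ℕ) : ℝ) / n ≤ 1 := by
      rw [div_le_one hn']; exact_mod_cast Nat.sub_le _ _
    have h1'' : 0 ≤ ((n - (k + 1) : ℕ) : ℝ) / n := by positivity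
    have h2 : t - 2 * k / n ≤ 2 * ((m - k : ℕ) : ℝ) / n := by
      rw [htdef, ← sub_div]
      gcongr
      have : (m : ℝ) ≤ ((m - k : ℕ) : ℝ) + (k : ℕ) := by
        exact_mod_cast (by omega : m ≤ (m - k) + k)
      linarith
    have h2' : 2 * ((m - k : ℕ) : ℝ) / n ≤ t := by
      rw [htdef]; gcongr; exact Nat.sub_le _ _
    have h2'' : 0 ≤ 2 * ((m - k : ℕ) : ℝ) / n := by positivity
    set x := ((n - (k + 1) : ℕ) : ℝ) / n
    set y := 2 * ((m - k : ℕ) : ℝ) / n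
    have h3 : t - (3 * k + 1) / n ≤ x * y := by
      have e1 : (1 - x) * y ≤ (1 - x) * 1 := by
        apply mul_le_mul_of_nonneg_left _ (by linarith); linarith
      have e2 : (3 * (k : ℝ) + 1) / n = 2 * k / n + (k + 1) / n := by ring
      nlinarith
    have h4 : cc n m k * (t - (3 * k + 1) / n) ≤ cc n m k * x * y := by
      rw [mul_assoc]; exact mul_le_mul_of_nonneg_left h3 hc0
    refine le_trans ?_ h4
    have h5 : cc n m k * ((3 * k + 1) / n) ≤ τ ^ k * ((3 * k + 1) / n) :=
      mul_le_mul_of_nonneg_right hc1 (by positivity)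
    have h6 : (t ^ k - 2 * (k : ℝ) ^ 2 * τ ^ k / (τ * n)) * t ≤ cc n m k * t :=
      mul_le_mul_of_nonneg_right ih ht0
    have h7 : 2 * (k : ℝ) ^ 2 * τ ^ k / (τ * n) * t ≤ 2 * (k : ℝ) ^ 2 * τ ^ k / (τ * n) * τ :=
      mul_le_mul_of_nonneg_left ht (by positivity)
    have h8 : 2 * (k : ℝ) ^ 2 * τ ^ k / (τ * n) * τ + τ ^ k * ((3 * k + 1) / n) ≤
        2 * ((k + 1 : ℕ) : ℝ) ^ 2 * τ ^ (k + 1) / (τ * n) := by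
      have : 2 * (k : ℝ) ^ 2 * τ ^ k / (τ * n) * τ + τ ^ k * ((3 * k + 1) / n) =
        (2 * (k : ℝ) ^ 2 + (3 * k + 1)) * τ ^ k / n := by field_simp
      rw [this, pow_succ τ k, show 2 * ((k + 1 : ℕ) : ℝ) ^ 2 * (τ ^ k * τ) / (τ * n) =
        (2 * ((k + 1 : ℕ) : ℝ) ^ 2) * τ ^ k / n by field_simp]
      gcongr
      push_cast
      have : (0 : ℝ) ≤ k := by positivity
      nlinarith
    rw [pow_succ t k]
    rw [sub_mul] at h6
    rw [mul_sub]
    linarith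

theorem summable_sq (τ : ℝ) (hτ0 : 0 < τ) (hτ1 : τ < 1) :
    Summable (fun k : ℕ => ((k : ℝ) + 1) ^ 2 * τ ^ k) := by
  have hn : ‖τ‖ < 1 := by rw [Real.norm_of_nonneg hτ0.le]; exact hτ1
  have h0 := summable_pow_mul_geometric_of_norm_lt_one 0 hn
  have h1 := summable_pow_mul_geometric_of_norm_lt_one 1 hn
  have h2 := summable_pow_mul_geometric_of_norm_lt_one 2 hn
  refine ((h2.add (h1.mul_left 2)).add h0).congr ?_
  intro k
  ring

theorem step_est (τ : ℝ) (hτ0 : 0 < τ) (hτ1 : τ < 1) (w : ℕ → ℝ) (hw0 : ∀ k, 0 ≤ w k)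
    (hw1 : ∀ k, w k ≤ 1) : ∃ C : ℝ, 0 ≤ C ∧ ∀ (n : ℕ) (_ : 1 ≤ n) (p : ℕ → ℝ)
    (_ : ∀ m, 0 ≤ p m) (_ : ∀ m, p m ≤ 1)
    (_ : ∀ m, (n : ℝ) * (p m - p (m + 1)) ≤ ∑ k ∈ Finset.range n, cc n m k * w k * p (m - k))
    (_ : ∀ m K, ∑ k ∈ Finset.range K, cc n m k * w k * (p (m - k) - (k + 1) ^ 2 * ((1 / n) *
      ∑ j ∈ Finset.range n, (2 * (m : ℝ) / n) ^ j)) ≤ (n : ℝ) * (p m - p (m + 1))),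
    ∀ m : ℕ, 2 * (m : ℝ) / n ≤ τ →
      |(n : ℝ) * (p m - p (m + 1)) - (∑' k, w k * (2 * (m : ℝ) / n) ^ k) * p m| ≤ C / n := by
  have hS := summable_sq τ hτ0 hτ1
  set S := ∑' k : ℕ, ((k : ℝ) + 1) ^ 2 * τ ^ k with hSdef
  have hS0 : 0 ≤ S := tsum_nonneg fun k => by positivity
  set A := (1 - τ)⁻¹ with hA
  have hA0 : 0 ≤ A := inv_nonneg.2 (by linarith)
  refine ⟨(2 / τ + A) * S, by positivity, ?_⟩
  intro n hn p hp0 hp1 hup hlow m hm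
  have hn' : (0 : ℝ) < n := by exact_mod_cast hn
  have hgeo : ∀ (j N : ℕ), 2 * (j : ℝ) / n ≤ τ →
      ∑ k ∈ Finset.range N, (2 * (j : ℝ) / n) ^ k ≤ A := by
    intro j N hj
    have h0 : 0 ≤ 2 * (j : ℝ) / n := by positivity
    refine (Finset.sum_le_sum fun k _ => pow_le_pow_left₀ h0 hj k).trans ?_
    rw [hA, ← tsum_geometric_of_lt_one hτ0.le hτ1]
    exact (summable_geometric_of_lt_one hτ0.le hτ1).sum_le_tsum _ (fun _ _ => by positivity)
  have hanti : Antitone p := by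
    apply antitone_nat_of_succ_le
    intro j
    have := hlow j 0
    simp only [Finset.range_zero, Finset.sum_empty] at this
    have := nonneg_of_mul_nonneg_right this hn'
    linarith
  have hle : ∀ j : ℕ, 2 * (j : ℝ) / n ≤ τ → p j - p (j + 1) ≤ A / n := by
    intro j hj
    rw [le_div_iff₀ hn', mul_comm]
    refine (hup j).trans (le_trans ?_ (hgeo j n hj))
    apply Finset.sum_le_sum
    intro k _
    have h1 := cc_le n j k hn
    have h0 := cc_nonneg n j k
    calc cc n j k * w k * p (j - k) ≤ cc n j k * 1 * 1 := by
          gcongr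
          · exact hp0 _
          · exact hw1 k
          · exact hp1 _
      _ ≤ _ := by linarith
  have hlip : ∀ k : ℕ, p (m - k) ≤ p m + k * (A / n) := by
    intro k
    induction k with
    | zero => simp
    | succ k ih =>
      have hAn : 0 ≤ A / n := by positivity
      by_cases hk : k < m
      · have hj := hle (m - (k + 1)) (le_trans (by gcongr; exact Nat.sub_le _ _) hm)
        rw [show m - (k + 1) + 1 = m - k by omega] at hj
        push_cast
        linarith
      · rw [show m - (k + 1) = m - k by omega]
        push_cast
        linarith
  set t := 2 * (m : ℝ) / n with ht
  have ht0 : 0 ≤ t := by positivity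
  have htk : ∀ k, t ^ k ≤ τ ^ k := fun k => pow_le_pow_left₀ ht0 hm k
  have hsum : Summable fun k => w k * t ^ k := by
    apply Summable.of_nonneg_of_le (fun k => mul_nonneg (hw0 k) (pow_nonneg ht0 k)) _
      (summable_geometric_of_lt_one hτ0.le hτ1)
    intro k
    calc w k * t ^ k ≤ 1 * τ ^ k := by
          gcongr
          · exact hw1 k
      _ = _ := one_mul _
  have hSpart : ∀ K, ∑ k ∈ Finset.range K, ((k : ℝ) + 1) ^ 2 * τ ^ k ≤ S := fun K =>
    hS.sum_le_tsum _ (fun _ _ => by positivity)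
  rw [abs_le]
  constructor
  · -- lower
    have hK : ∀ K, (∑ k ∈ Finset.range K, w k * t ^ k) * p m - (2 / τ + A) * S / n ≤
        (n : ℝ) * (p m - p (m + 1)) := by
      intro K
      refine le_trans ?_ (hlow m K)
      have hterm : ∀ k ∈ Finset.range K, w k * t ^ k * p m -
          ((2 / τ + A) / n) * (((k : ℝ) + 1) ^ 2 * τ ^ k) ≤
          cc n m k * w k * (p (m - k) - (k + 1) ^ 2 * ((1 / n) *
            ∑ j ∈ Finset.range n, t ^ j)) := by
        intro k _
        have h0 := cc_nonneg n m k
        have h1 := cc_le n m k hn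
        have h2 := cc_ge n m hn τ hτ0 hτ1 hm k
        have h3 := hgeo m n hm
        rw [← ht] at h1 h2 h3
        have h4 : p m ≤ p (m - k) := hanti (Nat.sub_le _ _)
        have hcw : 0 ≤ cc n m k * w k := mul_nonneg h0 (hw0 k)
        have h5 : cc n m k * w k * (p m - (k + 1) ^ 2 * ((1 / n) * A)) ≤
          cc n m k * w k * (p (m - k) - (k + 1) ^ 2 * ((1 / n) * ∑ j ∈ Finset.range n, t ^ j)) := by
          gcongr
        refine le_trans ?_ h5
        have h6 : cc n m k * w k * ((k + 1) ^ 2 * ((1 / n) * A)) ≤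
            τ ^ k * 1 * ((k + 1) ^ 2 * ((1 / n) * A)) := by
          gcongr
          · exact hw0 k
          · exact h1.trans (htk k)
          · exact hw1 k
        have h7 : (t ^ k - cc n m k) * (w k * p m) ≤ 2 * (k : ℝ) ^ 2 * τ ^ k / (τ * n) * (1 * 1) := by
          apply mul_le_mul
          · linarith
          · exact mul_le_mul (hw1 k) (hp1 m) (hp0 m) zero_le_one
          · exact mul_nonneg (hw0 k) (hp0 m)
          · positivity
        have h8 : 2 * (k : ℝ) ^ 2 * τ ^ k / (τ * n) ≤ 2 * ((k : ℝ) + 1) ^ 2 * τ ^ k / (τ * n) := by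
          gcongr
          linarith
        have h9 : ((2 / τ + A) / n) * (((k : ℝ) + 1) ^ 2 * τ ^ k) =
          2 * ((k : ℝ) + 1) ^ 2 * τ ^ k / (τ * n) + τ ^ k * 1 * ((k + 1) ^ 2 * ((1 / n) * A)) := by
          field_simp
        rw [h9]
        nlinarith
      have := Finset.sum_le_sum hterm
      refine le_trans ?_ this
      rw [Finset.sum_sub_distrib, ← Finset.mul_sum, ← Finset.sum_mul]
      have h10 := mul_le_mul_of_nonneg_left (hSpart K)
        (show 0 ≤ (2 / τ + A) / n by positivity)
      have h11 : (2 / τ + A) * S / n = (2 / τ + A) / n * S := by ring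
      rw [h11]
      linarith
    have hlim := ((hsum.hasSum.tendsto_sum_nat.mul_const (p m)).sub_const
      ((2 / τ + A) * S / n))
    have := le_of_tendsto' hlim hK
    linarith
  · have h1 : (n : ℝ) * (p m - p (m + 1)) ≤ (∑' k, w k * t ^ k) * p m + A * S / n := by
      refine (hup m).trans ?_
      have hterm : ∀ k ∈ Finset.range n, cc n m k * w k * p (m - k) ≤
          w k * t ^ k * p m + (A / n) * (((k : ℝ) + 1) ^ 2 * τ ^ k) := by
        intro k _
        have h0 := cc_nonneg n m k
        have h1 := cc_le n m k hn
        rw [← ht] at h1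
        calc cc n m k * w k * p (m - k) ≤ t ^ k * w k * (p m + k * (A / n)) := by
              apply mul_le_mul _ (hlip k) (hp0 _) (mul_nonneg (pow_nonneg ht0 k) (hw0 k))
              exact mul_le_mul_of_nonneg_right h1 (hw0 k)
          _ = w k * t ^ k * p m + t ^ k * w k * (k * (A / n)) := by ring
          _ ≤ w k * t ^ k * p m + τ ^ k * 1 * (((k : ℝ) + 1) ^ 2 * (A / n)) := by
              gcongr
              · exact hw0 k
              · exact hw1 k
              · have : (0 : ℝ) ≤ k := by positivity
                nlinarith
          _ = _ := by ring
      refine (Finset.sum_le_sum hterm).trans ?_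
      rw [Finset.sum_add_distrib, ← Finset.mul_sum, ← Finset.sum_mul]
      have h10 := mul_le_mul_of_nonneg_left (hSpart n)
        (show 0 ≤ A / n by positivity)
      have h11 : A * S / n = A / n * S := by ring
      rw [h11]
      have h12 : ∑ k ∈ Finset.range n, w k * t ^ k ≤ ∑' k, w k * t ^ k :=
        hsum.sum_le_tsum _ (fun k _ => mul_nonneg (hw0 k) (pow_nonneg ht0 k))
      have := mul_le_mul_of_nonneg_right h12 (hp0 m)
      linarith
    have h2 : A * S / n ≤ (2 / τ + A) * S / n := by
      gcongr
      have : 0 ≤ 2 / τ := by positivity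
      linarith
    linarith

/-- comparison with the solution of the differential equation -/
theorem compare (τ : ℝ) (hτ0 : 0 < τ) (hτ1 : τ < 1) (w : ℕ → ℝ) (hw0 : ∀ k, 0 ≤ w k)
    (hw1 : ∀ k, w k ≤ 1) (F L : ℝ → ℝ) (hF : ∀ t ∈ Set.Icc 0 τ, HasSum (fun k => w k * t ^ k) (F t))
    (hL0 : L 0 = 1) (D : ℝ) (hD : 0 ≤ D)
    (hL : ∀ x ∈ Set.Icc 0 τ, ∀ y ∈ Set.Icc 0 τ, |L y - L x + (y - x) * (F x * L x / 2)| ≤ D * (y - x) ^ 2) :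
    ∃ C : ℝ, 0 ≤ C ∧ ∀ (n : ℕ) (_ : 1 ≤ n) (p : ℕ → ℝ)
    (_ : p 0 = 1) (_ : ∀ m, 0 ≤ p m) (_ : ∀ m, p m ≤ 1)
    (_ : ∀ m, (n : ℝ) * (p m - p (m + 1)) ≤ ∑ k ∈ Finset.range n, cc n m k * w k * p (m - k))
    (_ : ∀ m K, ∑ k ∈ Finset.range K, cc n m k * w k * (p (m - k) - (k + 1) ^ 2 * ((1 / n) *
      ∑ j ∈ Finset.range n, (2 * (m : ℝ) / n) ^ j)) ≤ (n : ℝ) * (p m - p (m + 1))),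
    ∀ m : ℕ, 2 * (m : ℝ) / n ≤ τ → |p m - L (2 * (m : ℝ) / n)| ≤ C / n := by
  obtain ⟨C₁, hC₁, hstep⟩ := step_est τ hτ0 hτ1 w hw0 hw1
  set B := (1 - τ)⁻¹ with hB
  have hB0 : 0 ≤ B := inv_nonneg.2 (by linarith)
  have hF0 : ∀ t ∈ Set.Icc 0 τ, 0 ≤ F t := by
    intro t ht
    exact (hF t ht).nonneg (fun k => mul_nonneg (hw0 k) (pow_nonneg ht.1 k))
  have hFB : ∀ t ∈ Set.Icc 0 τ, F t ≤ B := by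
    intro t ht
    refine hasSum_le (fun k => ?_) (hF t ht) (hasSum_geometric_of_lt_one hτ0.le hτ1)
    calc w k * t ^ k ≤ 1 * τ ^ k := by
          gcongr
          · exact pow_nonneg ht.1 k
          · exact hw1 k
          · exact ht.1
          · exact ht.2
      _ = _ := one_mul _
  have hLb : ∃ M, 0 ≤ M ∧ ∀ x ∈ Set.Icc 0 τ, |L x| ≤ M := by
    refine ⟨1 + τ * (B / 2) + D * τ ^ 2, by positivity, ?_⟩
    intro x hx
    have h := hL 0 ⟨le_rfl, hτ0.le⟩ x hx
    rw [hL0, sub_zero] at h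
    have h0 := hF0 0 ⟨le_rfl, hτ0.le⟩
    have h1 := hFB 0 ⟨le_rfl, hτ0.le⟩
    have e1 : x * (F 0 * 1 / 2) ≤ τ * (B / 2) := by
      apply mul_le_mul hx.2 (by linarith) (by linarith) hτ0.le
    have e0 : 0 ≤ x * (F 0 * 1 / 2) := mul_nonneg hx.1 (by linarith)
    have e2 : D * x ^ 2 ≤ D * τ ^ 2 := by
      have := hx.1; have := hx.2
      gcongr
    rw [abs_le] at h ⊢
    constructor <;> nlinarith [h.1, h.2]
  obtain ⟨M, hM0, hM⟩ := hLb
  -- error per step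
  refine ⟨(C₁ + 4 * D) + B * (1 + M), by positivity, ?_⟩
  intro n hn p hpz hp0 hp1 hup hlow
  have hn' : (0 : ℝ) < n := by exact_mod_cast hn
  have hmem : ∀ m : ℕ, 2 * (m : ℝ) / n ≤ τ → 2 * (m : ℝ) / n ∈ Set.Icc 0 τ :=
    fun m hm => ⟨by positivity, hm⟩
  by_cases hnB : (n : ℝ) ≤ B
  · intro m hm
    have h1 := hM _ (hmem m hm)
    have h2 : |p m| ≤ 1 := by rw [abs_of_nonneg (hp0 m)]; exact hp1 m
    have h3 : 1 + M ≤ ((C₁ + 4 * D) + B * (1 + M)) / n := by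
      rw [le_div_iff₀ hn']
      nlinarith
    exact (abs_sub _ _).trans (by linarith)
  · push Not at hnB
    have key : ∀ m : ℕ, 2 * (m : ℝ) / n ≤ τ →
        |p m - L (2 * (m : ℝ) / n)| ≤ m * ((C₁ + 4 * D) / n ^ 2) := by
      intro m
      induction m with
      | zero => intro _; simp [hpz, hL0]
      | succ m ih =>
        intro hm1
        have hm : 2 * (m : ℝ) / n ≤ τ := by
          refine le_trans ?_ hm1
          gcongr
          simp
        have h1 := ih hm
        have h2 := hstep n hn p hp0 hp1 hup hlow m hm
        rw [(hF _ (hmem m hm)).tsum_eq] at h2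
        have h3 := hL _ (hmem m hm) _ (hmem (m + 1) hm1)
        have hd : 2 * ((m + 1 : ℕ) : ℝ) / n - 2 * (m : ℝ) / n = 2 / n := by
          push_cast; ring
        rw [hd] at h3
        set t := 2 * (m : ℝ) / n
        set t' := 2 * ((m + 1 : ℕ) : ℝ) / n
        have f0 := hF0 _ (hmem m hm)
        have f1 := hFB _ (hmem m hm)
        -- scale h2
        have h4 : |p m - p (m + 1) - F t * p m / n| ≤ C₁ / n ^ 2 := by
          have : p m - p (m + 1) - F t * p m / n =
            ((n : ℝ) * (p m - p (m + 1)) - F t * p m) / n := by field_simp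
          rw [this, abs_div, abs_of_pos hn', div_le_iff₀ hn']
          refine h2.trans (le_of_eq ?_)
          field_simp
        have h5 : |L t' - L t + F t * L t / n| ≤ 4 * D / n ^ 2 := by
          have e : 2 / (n : ℝ) * (F t * L t / 2) = F t * L t / n := by ring
          rw [e] at h3
          refine h3.trans (le_of_eq ?_)
          ring
        have h6 : |(p m - L t) * (1 - F t / n)| ≤ |p m - L t| := by
          rw [abs_mul]
          apply mul_le_of_le_one_right (abs_nonneg _)
          rw [abs_le]
          have : F t / n ≤ 1 := by rw [div_le_one hn']; linarith
          have : 0 ≤ F t / n := by positivity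
          constructor <;> linarith
        have h7 : p (m + 1) - L t' = (p m - L t) * (1 - F t / n) -
          (p m - p (m + 1) - F t * p m / n) - (L t' - L t + F t * L t / n) := by ring
        rw [h7]
        refine (abs_sub _ _).trans ?_
        have h8 := abs_sub ((p m - L t) * (1 - F t / n)) (p m - p (m + 1) - F t * p m / n)
        have h9 : ((m + 1 : ℕ) : ℝ) * ((C₁ + 4 * D) / n ^ 2) =
          m * ((C₁ + 4 * D) / n ^ 2) + (C₁ / n ^ 2 + 4 * D / n ^ 2) := by push_cast; ring
        rw [h9]
        linarith
    intro m hm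
    refine (key m hm).trans ?_
    have hmn : (m : ℝ) ≤ n := by
      have h1 : 2 * (m : ℝ) ≤ τ * n := by rwa [div_le_iff₀ hn'] at hm
      have h0 : (0 : ℝ) ≤ m := by positivity
      nlinarith
    have : (m : ℝ) * ((C₁ + 4 * D) / n ^ 2) ≤ n * ((C₁ + 4 * D) / n ^ 2) := by gcongr
    refine this.trans ?_
    have e : (n : ℝ) * ((C₁ + 4 * D) / n ^ 2) = (C₁ + 4 * D) / n := by field_simp
    rw [e]
    apply div_le_div_of_nonneg_right _ hn'.le
    linarith [mul_nonneg hB0 (by linarith : 0 ≤ 1 + M)]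

/-- the sign character of `ZMod 2` -/
def sg (z : ZMod 2) : ℝ := if z = 0 then 1 else -1

theorem sg_add : ∀ a b : ZMod 2, sg (a + b) = sg a * sg b := by
  intro a b
  have h : ∀ z : ZMod 2, z = 0 ∨ z = 1 := by decide
  have h11 : (1 : ZMod 2) + 1 = 0 := by decide
  rcases h a with rfl | rfl <;> rcases h b with rfl | rfl <;> simp [sg, h11]

theorem sg_zero : sg 0 = 1 := by simp [sg]

theorem sg_ne {z : ZMod 2} (h : z ≠ 0) : sg z = -1 := by simp [sg, h]

theorem sg_sum {ι : Type} (s : Finset ι) (f : ι → ZMod 2) : sg (∑ i ∈ s, f i) = ∏ i ∈ s, sg (f i) := by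
  classical
  induction s using Finset.induction_on with
  | empty => simp [sg_zero]
  | insert a s ha ih => rw [Finset.sum_insert ha, Finset.prod_insert ha, sg_add, ih]

theorem z2_add_self (z : ZMod 2) : z + z = 0 := CharTwo.add_self_eq_zero z

/-- labels -/
def lb (α β : ℕ) (q : (Fin α → Fin β) × ZMod 2) : (Fin β → ZMod 2) → ZMod 2 :=
  fun x => (∑ k, x (q.1 k)) + q.2

def Aff {β : ℕ} (g : (Fin β → ZMod 2) → ZMod 2) : Prop :=
  ∀ x y, g (x + y) + g 0 = g x + g y

theorem aff_add {β : ℕ} {g h : (Fin β → ZMod 2) → ZMod 2} (hg : Aff g) (hh : Aff h) : Aff (g + h) := by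
  intro x y
  simp only [Pi.add_apply]
  linear_combination hg x y + hh x y

theorem aff_zero {β : ℕ} : Aff (0 : (Fin β → ZMod 2) → ZMod 2) := by intro x y; simp

theorem aff_sum {β : ℕ} {ι : Type} (s : Finset ι) (g : ι → (Fin β → ZMod 2) → ZMod 2)
    (hg : ∀ i, Aff (g i)) : Aff (∑ i ∈ s, g i) := by
  classical
  induction s using Finset.induction_on with
  | empty => simpa using aff_zero
  | insert a s ha ih => rw [Finset.sum_insert ha]; exact aff_add (hg a) ih

theorem aff_lb (α β : ℕ) (q) : Aff (lb α β q) := by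
  intro x y
  simp [lb, Finset.sum_add_distrib]
  ring

theorem sum_char {β : ℕ} (h : (Fin β → ZMod 2) → ZMod 2) (hh : ∀ x y, h (x + y) = h x + h y) :
    ∑ x, sg (h x) = 2 ^ β * ind (h = 0) := by
  by_cases h0 : h = 0
  · rw [ind_true h0, h0]
    simp [sg_zero]
  · rw [ind_false h0, mul_zero]
    have : ∃ y, h y ≠ 0 := by
      by_contra hc
      push Not at hc
      exact h0 (funext hc)
    obtain ⟨y, hy⟩ := this
    have h1 : ∑ x, sg (h x) = ∑ x, sg (h (x + y)) :=
      (Equiv.sum_comp (Equiv.addRight y) (fun x => sg (h x))).symm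
    simp only [hh, sg_add, sg_ne hy] at h1
    rw [← Finset.sum_mul] at h1
    linarith

theorem ind_aff {β : ℕ} (g : (Fin β → ZMod 2) → ZMod 2) (hg : Aff g) :
    2 ^ (β + 1) * ind (g = 0) = ∑ x, sg (g x) + ∑ x, sg (g x + g 0) := by
  have hadd : ∀ x y, (fun x => g x + g 0) (x + y) = (fun x => g x + g 0) x + (fun x => g x + g 0) y := by
    intro x y
    have := hg x y
    have h0 := z2_add_self (g 0)
    simp only
    linear_combination this - h0
  have h1 := sum_char (fun x => g x + g 0) hadd
  have h2 : ∑ x, sg (g x) = (∑ x, sg (g x + g 0)) * sg (g 0) := by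
    rw [Finset.sum_mul]
    apply Finset.sum_congr rfl
    intro x _
    rw [← sg_add, add_assoc, z2_add_self, add_zero]
  rw [h2, h1]
  by_cases h0 : g 0 = 0
  · rw [h0, sg_zero, pow_succ]
    have : (fun x => g x + 0) = g := by funext x; simp
    rw [this]
    ring
  · rw [sg_ne h0, ind_false (fun h => h0 (by rw [h]; rfl))]
    ring

theorem sum_sg : ∑ b : ZMod 2, sg b = 0 := by
  have : (Finset.univ : Finset (ZMod 2)) = {0, 1} := by decide
  rw [this]
  simp [sg]

theorem sum_lb1 (α β : ℕ) (x : Fin β → ZMod 2) : ∑ q, sg (lb α β q x) = 0 := by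
  rw [Fintype.sum_prod_type]
  apply Finset.sum_eq_zero
  intro e _
  simp only [lb, sg_add]
  rw [← Finset.mul_sum, sum_sg, mul_zero]

theorem sum_lb2 (α β : ℕ) (x : Fin β → ZMod 2) :
    ∑ q, sg (lb α β q x + lb α β q 0) = 2 * (∑ a, sg (x a)) ^ α := by
  rw [Fintype.sum_prod_type, Fintype.sum_pow, Finset.mul_sum]
  apply Finset.sum_congr rfl
  intro e _
  have : ∀ b : ZMod 2, sg (lb α β (e, b) x + lb α β (e, b) 0) = ∏ i, sg (x (e i)) := by
    intro b
    rw [← sg_sum]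
    simp [lb, add_assoc, z2_add_self]
  rw [Finset.sum_congr rfl (fun b _ => this b)]
  simp

theorem sum_lab {Λ : Type} [Fintype Λ] (k : ℕ) (f : Λ → ZMod 2) :
    ∑ lab : Fin k → Λ, ∑ y : Λ, sg (∑ a, f (lab a) + f y) = (∑ y, sg (f y)) ^ (k + 1) := by
  rw [pow_succ, Fintype.sum_pow, Finset.sum_mul]
  apply Finset.sum_congr rfl
  intro lab _
  rw [Finset.mul_sum]
  apply Finset.sum_congr rfl
  intro y _
  rw [sg_add, sg_sum]

theorem count_zero (α β k : ℕ) :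
    2 ^ (β + 1) * ∑ lab : Fin k → (Fin α → Fin β) × ZMod 2, ∑ y,
      ind (∑ a, lb α β (lab a) + lb α β y = 0) =
      ∑ x : Fin β → ZMod 2, (2 * (∑ a, sg (x a)) ^ α) ^ (k + 1) := by
  rw [Finset.mul_sum]
  have h : ∀ lab : Fin k → (Fin α → Fin β) × ZMod 2, 2 ^ (β + 1) * ∑ y,
      ind (∑ a, lb α β (lab a) + lb α β y = 0) =
      ∑ x, ∑ y, sg (∑ a, lb α β (lab a) x + lb α β y x) +
      ∑ x, ∑ y, sg (∑ a, (lb α β (lab a) x + lb α β (lab a) 0) +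
        (lb α β y x + lb α β y 0)) := by
    intro lab
    rw [Finset.mul_sum, Finset.sum_comm (γ := Fin β → ZMod 2),
      Finset.sum_comm (γ := Fin β → ZMod 2), ← Finset.sum_add_distrib]
    apply Finset.sum_congr rfl
    intro y _
    rw [ind_aff _ (aff_add (aff_sum _ _ fun a => aff_lb α β (lab a)) (aff_lb α β y))]
    congr 1
    · apply Finset.sum_congr rfl
      intro x _
      simp [Finset.sum_apply]
    · apply Finset.sum_congr rfl
      intro x _
      simp only [Pi.add_apply, Finset.sum_apply, Finset.sum_add_distrib]
      congr 1
      ring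
  rw [Finset.sum_congr rfl fun lab _ => h lab, Finset.sum_add_distrib]
  rw [Finset.sum_comm, Finset.sum_comm (s := (Finset.univ : Finset (Fin k → _)))]
  rw [Finset.sum_eq_zero, zero_add]
  · apply Finset.sum_congr rfl
    intro x _
    rw [sum_lab k (fun q => lb α β q x + lb α β q 0), sum_lb2]
  · intro x _
    rw [sum_lab k (fun q => lb α β q x), sum_lb1]
    simp

theorem sum_weight (β : ℕ) (f : ℝ → ℝ) :
    ∑ x : Fin β → ZMod 2, f (∑ a, sg (x a)) =
      ∑ i ∈ Finset.range (β + 1), (β.choose i : ℝ) * f (β - 2 * i) := by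
  classical
  have h := Finset.sum_powerset_apply_card (fun i : ℕ => f (β - 2 * i)) (x := (Finset.univ : Finset (Fin β)))
  rw [Finset.card_univ, Fintype.card_fin] at h
  simp only [nsmul_eq_mul] at h
  rw [← h]
  refine Finset.sum_bij' (fun x _ => Finset.univ.filter (fun a => x a ≠ 0))
    (fun s _ => fun a => if a ∈ s then 1 else 0) ?_ ?_ ?_ ?_ ?_
  · intro x _; simp
  · intro s _; simp
  · intro x _
    funext a
    have : ∀ z : ZMod 2, (if z ≠ 0 then (1 : ZMod 2) else 0) = z := by decide
    simpa using this (x a)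
  · intro s _
    ext a
    simp
  · intro x _
    congr 1
    have : ∀ a, sg (x a) = 1 - 2 * (if x a ≠ 0 then (1 : ℝ) else 0) := by
      intro a
      by_cases h : x a = 0 <;> simp [sg, h] <;> norm_num
    rw [Finset.sum_congr rfl fun a _ => this a, Finset.sum_sub_distrib, ← Finset.mul_sum,
      Finset.sum_boole]
    simp

theorem ww_formula (α β : ℕ) (hβ : 1 ≤ β) (k : ℕ) :
    ww (lb α β) k = 1 - (2 ^ (β + 1))⁻¹ * ∑ i ∈ Finset.range (β + 1),
      (β.choose i : ℝ) * ((1 - 2 * (i : ℝ) / β) ^ α) ^ (k + 1) := by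
  have hβ' : (0 : ℝ) < β := by exact_mod_cast hβ
  have hcard : (Fintype.card ((Fin α → Fin β) × ZMod 2) : ℝ) = (β : ℝ) ^ α * 2 := by
    simp
  have h1 := count_zero α β k
  rw [sum_weight β (fun s => (2 * s ^ α) ^ (k + 1))] at h1
  have hW : W (lb α β) k = ((β : ℝ) ^ α * 2) ^ (k + 1) -
      ∑ lab : Fin k → (Fin α → Fin β) × ZMod 2, ∑ y,
      ind (∑ a, lb α β (lab a) + lb α β y = 0) := by
    unfold W
    have : ∀ p : Prop, ind (¬ p) = 1 - ind p := by
      intro p; unfold ind; split_ifs <;> simp_all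
    simp only [ne_eq, this, Finset.sum_sub_distrib]
    congr 1
    rw [← hcard]
    simp [pow_succ]
  unfold ww
  rw [hW, hcard, sub_div, div_self (by positivity)]
  congr 1
  rw [div_eq_iff (by positivity), mul_assoc, eq_inv_mul_iff_mul_eq₀ (by positivity), h1, Finset.sum_mul]
  apply Finset.sum_congr rfl
  intro i _
  rw [mul_assoc, ← mul_pow]
  congr 2
  rw [← mul_assoc, ← mul_pow, sub_mul, div_mul_cancel₀ _ hβ'.ne']
  ring

/-- the exponents `r i` -/
def rr (α β i : ℕ) : ℝ := (1 - 2 * (i : ℝ) / β) ^ α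

def FF (α β : ℕ) (t : ℝ) : ℝ := (1 - t)⁻¹ - (2 ^ (β + 1))⁻¹ * ∑ i ∈ Finset.range (β + 1),
      (β.choose i : ℝ) * (rr α β i * (1 - t * rr α β i)⁻¹)

def HH (α β : ℕ) (t : ℝ) : ℝ := Real.log (1 - t) - (2 ^ (β + 1))⁻¹ * ∑ i ∈ Finset.range (β + 1),
      (β.choose i : ℝ) * Real.log (1 - t * rr α β i)

def LL (α β : ℕ) (t : ℝ) : ℝ := Real.exp (HH α β t / 2)

theorem rr_abs (α β i : ℕ) (hi : i ∈ Finset.range (β + 1)) : |rr α β i| ≤ 1 := by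
  unfold rr
  rw [abs_pow]
  apply pow_le_one₀ (abs_nonneg _)
  have hi' : (i : ℝ) ≤ β := by
    have := Finset.mem_range.1 hi
    exact_mod_cast (by omega : i ≤ β)
  have h1 : (i : ℝ) / β ≤ 1 := div_le_one_of_le₀ hi' (by positivity)
  have h0 : 0 ≤ (i : ℝ) / β := by positivity
  rw [mul_div_assoc, abs_le]
  constructor <;> linarith

theorem one_sub_pos (α β i : ℕ) (hi : i ∈ Finset.range (β + 1)) (t : ℝ) (h0 : 0 ≤ t) (h1 : t < 1) :
    0 < 1 - t * rr α β i := by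
  have := (abs_le.1 (rr_abs α β i hi)).2
  nlinarith

theorem hasSum_FF (α β : ℕ) (hβ : 1 ≤ β) (t : ℝ) (h0 : 0 ≤ t) (h1 : t < 1) :
    HasSum (fun k => ww (lb α β) k * t ^ k) (FF α β t) := by
  have e : (fun k => ww (lb α β) k * t ^ k) = fun k => t ^ k - (2 ^ (β + 1))⁻¹ *
      ∑ i ∈ Finset.range (β + 1), (β.choose i : ℝ) * (rr α β i * (t * rr α β i) ^ k) := by
    funext k
    rw [ww_formula α β hβ, sub_mul, one_mul, mul_assoc, Finset.sum_mul]
    congr 2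
    apply Finset.sum_congr rfl
    intro i _
    rw [← rr]
    ring
  rw [e]
  unfold FF
  refine (hasSum_geometric_of_lt_one h0 h1).sub (HasSum.mul_left _ (hasSum_sum fun i hi => ?_))
  apply HasSum.mul_left
  apply HasSum.mul_left
  apply hasSum_geometric_of_abs_lt_one
  rw [abs_mul, abs_of_nonneg h0]
  have := rr_abs α β i hi
  nlinarith [abs_nonneg (rr α β i)]

theorem HH_deriv (α β : ℕ) (t : ℝ) (h0 : 0 ≤ t) (h1 : t < 1) :
    HasDerivAt (HH α β) (- FF α β t) t := by
  have hlog : ∀ r : ℝ, 0 < 1 - t * r →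
      HasDerivAt (fun t => Real.log (1 - t * r)) (-(r * (1 - t * r)⁻¹)) t := by
    intro r hr
    have h : HasDerivAt (fun t : ℝ => 1 - t * r) (-r) t := by
      simpa using ((hasDerivAt_id t).mul_const r).const_sub 1
    have := h.log hr.ne'
    convert this using 1
    ring
  have hA := hlog 1 (by linarith)
  simp only [mul_one, one_mul] at hA
  have hB : HasDerivAt (fun t => ∑ i ∈ Finset.range (β + 1),
      (β.choose i : ℝ) * Real.log (1 - t * rr α β i))
      (∑ i ∈ Finset.range (β + 1), (β.choose i : ℝ) * (-(rr α β i * (1 - t * rr α β i)⁻¹))) t :=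
    HasDerivAt.fun_sum fun i hi => (hlog _ (one_sub_pos α β i hi t h0 h1)).const_mul _
  have h := hA.sub (hB.const_mul ((2 ^ (β + 1))⁻¹ : ℝ))
  have e : -FF α β t = -(1 - t)⁻¹ - (2 ^ (β + 1))⁻¹ *
      ∑ i ∈ Finset.range (β + 1), (β.choose i : ℝ) * (-(rr α β i * (1 - t * rr α β i)⁻¹)) := by
    unfold FF
    simp only [mul_neg, Finset.sum_neg_distrib]
    ring
  rw [e]
  exact h

theorem LL_deriv (α β : ℕ) (t : ℝ) (h0 : 0 ≤ t) (h1 : t < 1) :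
    HasDerivAt (LL α β) (- (FF α β t * LL α β t / 2)) t := by
  have h := ((HH_deriv α β t h0 h1).div_const 2).exp
  have e : -(FF α β t * LL α β t / 2) = Real.exp (HH α β t / 2) * (-FF α β t / 2) := by
    rw [LL]
    ring
  rw [e]
  exact h

theorem FF_contDiff (α β : ℕ) (t : ℝ) (h0 : 0 ≤ t) (h1 : t < 1) :
    ContDiffAt ℝ 1 (FF α β) t := by
  unfold FF
  refine ContDiffAt.sub (ContDiffAt.inv (by fun_prop) (by linarith)) ?_
  refine contDiffAt_const.mul (ContDiffAt.sum fun i hi => ?_)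
  refine contDiffAt_const.mul (contDiffAt_const.mul (ContDiffAt.inv (by fun_prop) ?_))
  exact (one_sub_pos α β i hi t h0 h1).ne'

theorem LL_contDiff (α β : ℕ) (t : ℝ) (h0 : 0 ≤ t) (h1 : t < 1) :
    ContDiffAt ℝ 1 (LL α β) t := by
  unfold LL HH
  refine ContDiffAt.exp (ContDiffAt.div_const ?_ 2)
  refine ContDiffAt.sub (ContDiffAt.log (by fun_prop) (by linarith)) ?_
  refine contDiffAt_const.mul (ContDiffAt.sum fun i hi => ?_)
  refine contDiffAt_const.mul (ContDiffAt.log (by fun_prop) ?_)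
  exact (one_sub_pos α β i hi t h0 h1).ne'

theorem LL_second (α β : ℕ) (τ : ℝ) (hτ1 : τ < 1) : ∃ D : ℝ, 0 ≤ D ∧
    ∀ x ∈ Set.Icc 0 τ, ∀ y ∈ Set.Icc 0 τ,
      |LL α β y - LL α β x + (y - x) * (FF α β x * LL α β x / 2)| ≤ D * (y - x) ^ 2 := by
  set g : ℝ → ℝ := fun t => - (FF α β t * LL α β t / 2) with hg
  have hloc : LocallyLipschitzOn (Set.Icc 0 τ) g := by
    intro x hx
    have hx1 : x < 1 := lt_of_le_of_lt hx.2 hτ1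
    have : ContDiffAt ℝ 1 g x :=
      (((FF_contDiff α β x hx.1 hx1).mul (LL_contDiff α β x hx.1 hx1)).div_const 2).neg
    obtain ⟨K, s, hs, hK⟩ := this.exists_lipschitzOnWith
    exact ⟨K, s, mem_nhdsWithin_of_mem_nhds hs, hK⟩
  obtain ⟨K, hK⟩ := hloc.exists_lipschitzOnWith_of_compact isCompact_Icc
  refine ⟨K, K.2, ?_⟩
  intro x hx y hy
  have hsub : Set.uIcc x y ⊆ Set.Icc 0 τ := Set.uIcc_subset_Icc hx hy
  have hder : ∀ z ∈ Set.uIcc x y, HasDerivWithinAt (fun z => LL α β z - z * g x) (g z - g x)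
      (Set.uIcc x y) z := by
    intro z hz
    have hz' := hsub hz
    have h := (LL_deriv α β z hz'.1 (lt_of_le_of_lt hz'.2 hτ1)).sub
      ((hasDerivAt_id z).mul_const (g x))
    rw [one_mul] at h
    exact h.hasDerivWithinAt
  have hbd : ∀ z ∈ Set.uIcc x y, ‖g z - g x‖ ≤ K * |y - x| := by
    intro z hz
    have h1 := hK.dist_le_mul z (hsub hz) x hx
    rw [Real.dist_eq, Real.dist_eq] at h1
    rw [Real.norm_eq_abs]
    refine h1.trans ?_
    apply mul_le_mul_of_nonneg_left _ K.2
    exact Set.abs_sub_left_of_mem_uIcc hz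
  have := Convex.norm_image_sub_le_of_norm_hasDerivWithin_le hder hbd (convex_uIcc x y)
    Set.left_mem_uIcc Set.right_mem_uIcc
  rw [Real.norm_eq_abs, Real.norm_eq_abs, mul_assoc, abs_mul_abs_self] at this
  have e : LL α β y - LL α β x + (y - x) * (FF α β x * LL α β x / 2) =
    LL α β y - y * g x - (LL α β x - x * g x) := by
    simp only [hg]; ring
  rw [e]
  refine this.trans (le_of_eq ?_)
  ring

theorem LL_zero (α β : ℕ) : LL α β 0 = 1 := by simp [LL, HH]

theorem LL_eq (α β : ℕ) (hβ : 1 ≤ β) (hα : 1 ≤ α) (c : ℕ) (hc : c = if Even α then 2 else 1)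
    (χ : ℝ → ℝ)
    (hχ : ∀ x : ℝ, χ x = ∏ i ∈ Finset.Icc 1 (β + 1 - c),
      (1 - x * (1 - 2 * (i : ℝ) / β) ^ α) ^ (β.choose i)) (t : ℝ) (h0 : 0 ≤ t) (h1 : t < 1) :
    χ t ^ (-((2 : ℝ) ^ (-(β : ℝ) - 2))) *
            (1 - t) ^ ((1 : ℝ) / 2 - (c : ℝ) * (2 : ℝ) ^ (-(β : ℝ) - 2)) = LL α β t := by
  have hβ' : (0 : ℝ) < β := by exact_mod_cast hβ
  have hc1 : 1 ≤ c := by rw [hc]; split_ifs <;> norm_num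
  have hmem : ∀ i ∈ Finset.Icc 1 (β + 1 - c), i ∈ Finset.range (β + 1) := by
    intro i hi
    rw [Finset.mem_Icc] at hi
    rw [Finset.mem_range]
    omega
  have hpos : ∀ i ∈ Finset.Icc 1 (β + 1 - c), 0 < 1 - t * rr α β i :=
    fun i hi => one_sub_pos α β i (hmem i hi) t h0 h1
  have hχpos : 0 < χ t := by
    rw [hχ]
    exact Finset.prod_pos fun i hi => pow_pos (hpos i hi) _
  have hlog : Real.log (χ t) = ∑ i ∈ Finset.Icc 1 (β + 1 - c),
      (β.choose i : ℝ) * Real.log (1 - t * rr α β i) := by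
    simp only [rr] at hpos ⊢
    rw [hχ, Real.log_prod (fun i hi => (pow_pos (hpos i hi) _).ne')]
    apply Finset.sum_congr rfl
    intro i _
    rw [Real.log_pow]
  have hr0 : rr α β 0 = 1 := by simp [rr]
  have hsum : ∑ i ∈ Finset.range (β + 1), (β.choose i : ℝ) * Real.log (1 - t * rr α β i) =
      Real.log (χ t) + c * Real.log (1 - t) := by
    rw [hlog]
    have s1 : Finset.range (β + 1) = insert 0 (Finset.Icc 1 β) := by
      ext i; simp only [Finset.mem_range, Finset.mem_insert, Finset.mem_Icc]; omega
    rw [s1, Finset.sum_insert (by simp), hr0]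
    by_cases he : Even α
    · rw [if_pos he] at hc
      subst hc
      have s2 : Finset.Icc 1 β = insert β (Finset.Icc 1 (β + 1 - 2)) := by
        ext i; simp only [Finset.mem_insert, Finset.mem_Icc]; omega
      have hrβ : rr α β β = 1 := by
        unfold rr
        rw [mul_div_assoc, div_self hβ'.ne']
        norm_num
        exact he.neg_one_pow
      rw [s2, Finset.sum_insert (by simp only [Finset.mem_Icc]; omega), hrβ]
      simp
      ring
    · rw [if_neg he] at hc
      subst hc
      simp
      ring
  have hε : (2 : ℝ) ^ (-(β : ℝ) - 2) = (2 ^ (β + 1))⁻¹ / 2 := by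
    rw [show -(β : ℝ) - 2 = -((β + 2 : ℕ) : ℝ) by push_cast; ring, Real.rpow_neg (by norm_num),
      Real.rpow_natCast, pow_succ (2 : ℝ) (β + 1), mul_inv]
    ring
  rw [hε, Real.rpow_def_of_pos hχpos, Real.rpow_def_of_pos (by linarith : 0 < 1 - t), ← Real.exp_add, LL, HH, hsum]
  congr 1
  ring

theorem sat_iff {α β n m : ℕ} (φ : Fin m → Fin n × Fin n × (Fin α → Fin β) × ZMod 2) :
    (∀ x : Fin β → ZMod 2, ∃ y : Fin n → ZMod 2,
    ∀ i : Fin m, y (φ i).1 + y (φ i).2.1 = (∑ k : Fin α, x ((φ i).2.2.1 k)) + (φ i).2.2.2) ↔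
    Sat (lb α β) φ := by
  constructor
  · intro h
    choose y hy using h
    refine ⟨fun v x => y x v, fun i => ?_⟩
    funext x
    exact hy x i
  · rintro ⟨Y, hY⟩ x
    exact ⟨fun v => Y v x, fun i => congrFun (hY i) x⟩

theorem psat_eq (α β n m : ℕ) : PSAT α β n m = PS (Fin n) (lb α β) m := by
  classical
  unfold PSAT PS SC
  congr 1
  · rw [Nat.card_eq_fintype_card, Fintype.card_subtype, ← Finset.sum_boole]
    apply Finset.sum_congr rfl
    intro φ _
    have h : Satisfiable φ ↔ Sat (lb α β) φ := sat_iff φ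
    unfold ind
    simp only [h]
  · congr 1
    simp
    ring

theorem main_bound (β α : ℕ) (hβ : 1 ≤ β) (τ : ℝ) (hτ0 : 0 < τ) (hτ1 : τ < 1) :
    ∃ C : ℝ, 0 ≤ C ∧ ∀ (n : ℕ) (_ : 1 ≤ n) (m : ℕ), 2 * (m : ℝ) / n ≤ τ →
      |PSAT α β n m - LL α β (2 * (m : ℝ) / n)| ≤ C / n := by
  haveI : Nonempty (Fin β) := ⟨⟨0, hβ⟩⟩
  obtain ⟨D, hD, hL⟩ := LL_second α β τ hτ1
  obtain ⟨C, hC, h⟩ := compare τ hτ0 hτ1 (ww (lb α β)) (ww_nonneg _) (ww_le_one _) (FF α β)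
    (LL α β) (fun t ht => hasSum_FF α β hβ t ht.1 (lt_of_le_of_lt ht.2 hτ1)) (LL_zero α β) D hD hL
  have h2 : ∀ g : (Fin β → ZMod 2) → ZMod 2, g + g = 0 := by
    intro g
    funext x
    exact z2_add_self (g x)
  refine ⟨C, hC, fun n hn m hm => ?_⟩
  rw [psat_eq]
  exact h n hn (PS (Fin n) (lb α β)) (PS_zero n _) (PS_nonneg n _) (PS_le_one n hn _)
    (PS_upper h2 n hn _) (PS_lower h2 n hn _) m hm

/-- phase transition of quantified 2-Xor-SAT, subcritical regime. -/
theorem qxorsat_subcritical (β α : ℕ) (hβ : 1 ≤ β) (hα : 1 ≤ α)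
    (c : ℕ) (hc : c = if Even α then 2 else 1)
    (χ : ℝ → ℝ)
    (hχ : ∀ x : ℝ, χ x = ∏ i ∈ Finset.Icc 1 (β + 1 - c),
      (1 - x * (1 - 2 * (i : ℝ) / β) ^ α) ^ (β.choose i))
    (m : ℕ → ℕ)
    (hm : ∃ a b : ℝ, 0 < a ∧ a ≤ b ∧ b < 1 / 2 ∧
      ∀ᶠ n : ℕ in Filter.atTop, a ≤ (m n : ℝ) / n ∧ (m n : ℝ) / n ≤ b) :
    Filter.Tendsto (fun n : ℕ =>
        PSAT α β n (m n) /
          (χ (2 * (m n : ℝ) / n) ^ (-((2 : ℝ) ^ (-(β : ℝ) - 2))) *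
            (1 - 2 * (m n : ℝ) / n) ^ ((1 : ℝ) / 2 - (c : ℝ) * (2 : ℝ) ^ (-(β : ℝ) - 2))))
      Filter.atTop (nhds 1) := by
  obtain ⟨a, b, ha, hab, hb, hev⟩ := hm
  have hτ0 : 0 < 2 * b := by linarith
  have hτ1 : 2 * b < 1 := by linarith
  obtain ⟨C, hC, hbound⟩ := main_bound β α hβ (2 * b) hτ0 hτ1
  have hcont : ContinuousOn (LL α β) (Set.Icc 0 (2 * b)) := fun x hx =>
    (LL_contDiff α β x hx.1 (lt_of_le_of_lt hx.2 hτ1)).continuousAt.continuousWithinAt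
  obtain ⟨x₀, hx₀, hmin⟩ := isCompact_Icc.exists_isMinOn ⟨0, ⟨le_rfl, hτ0.le⟩⟩ hcont
  have hδ : 0 < LL α β x₀ := Real.exp_pos _
  have hlim : Filter.Tendsto (fun n : ℕ => C / LL α β x₀ / (n : ℝ)) Filter.atTop (nhds 0) :=
    tendsto_const_div_atTop_nhds_zero_nat _
  rw [tendsto_iff_dist_tendsto_zero]
  refine squeeze_zero' (Filter.Eventually.of_forall fun _ => dist_nonneg) ?_ hlim
  filter_upwards [hev, Filter.eventually_ge_atTop 1] with n hn hn1
  have hn' : (0 : ℝ) < n := by exact_mod_cast hn1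
  have ht : 2 * (m n : ℝ) / n ≤ 2 * b := by
    rw [mul_div_assoc]; linarith [hn.2]
  have ht0 : 0 ≤ 2 * (m n : ℝ) / n := by positivity
  have h1 := hbound n hn1 (m n) ht
  rw [LL_eq α β hβ hα c hc χ hχ _ ht0 (lt_of_le_of_lt ht hτ1), Real.dist_eq]
  have h2 : LL α β x₀ ≤ LL α β (2 * (m n : ℝ) / n) := hmin ⟨ht0, ht⟩
  have h3 : 0 < LL α β (2 * (m n : ℝ) / n) := Real.exp_pos _
  rw [div_sub_one h3.ne', abs_div, abs_of_pos h3, div_right_comm C]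
  calc _ ≤ (C / n) / LL α β (2 * (m n : ℝ) / n) := by gcongr
    _ ≤ (C / n) / LL α β x₀ := by gcongr

end

end Inhomog
end
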